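/- arXiv:2507.14300 — 2 statements merged into one kernel-verified Lean document; each statement's English description precedes it below -/
import Mathlib

section
/- Under the same setting and hypotheses (i), (ii), (iii) as Theorem 2 of the paper, but where the system state has a bounded piecewise-continuous input u : ℝ → ℝ^K entering the last integrator, i.e., (x^{(M−1)})′(t) = u(t) instead of 0 (all other system, measurement, and observer equations unchanged), there exist constants c > 0, λ > 0, and ρ > 0 such that for all t ≥ t₀, the stacked estimation error e(t) ∈ ℝ^{KNM} with blocks x^{(m)}(t) − x̂_i^{(m)}(t) satisfies ‖e(t)‖ ≤ c·‖e(t₀)‖·exp(−λ(t − t₀)) + ρ·sup_{t₀ ≤ s ≤ t} ‖u(s)‖. -/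
/-!
The observer error splits into `N * K` scalar chains, coupled only through the first components.
Dividing the errors of order `m` by the gain `k (m + 1)` and passing to successive differences, one
obtains for each chain a scalar `w` (the rescaled first component) and a vector `ε` of `n = M - 1`
differences, with `ε' = drift c ε w` up to the input, where `c` is the sequence of gain ratios.

*Coercivity.* Splitting a vector over the agents in its mean and the disagreement shows that
`Ψ + α L ⊗ I` is bounded below by `μ` (`coercive`). Hence `∑ w w'` is at most
`-δ ∑ w² + c₁ ∑ w ε₁`, up to the input, with `ε₁` the first difference.

*Storage.* It remains to find `P ≻ 0` for which `½ εᵀ P ε` dissipates the supply rate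
`δ w² - c₁ w ε₁` strictly along the chain (`exists_isStorage`). The Kalman–Yakubovich–Popov lemma
(`FreqPos.exists_storage`) reduces this to a frequency inequality: a separation argument over the
compact convex set of positive semidefinite matrices of unit trace turns the absence of `P` into a
Gram matrix, whose vectors decompose into modes violating that inequality (`FreqPos.eq_zero`).

*Frequency inequality.* The gain condition is a linear matrix inequality for the chain in reversed
coupling (`chainLMI_of_posDef`). Inserting test sequences built from the harmonic response of the
chain confines the response of the integrators beyond the first two to a disc (`tail_disc`). Over
that disc the frequency inequality follows by the S-procedure (`freq_core`) from the positivity of a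
cubic polynomial whose coefficients depend on the two leading gain ratios (`cubic_pos`). This last
fact is verified on a bisection of the parameter square: on each box a few polynomials have
nonnegative coefficients after a projective substitution, and the coefficients are read off as
digits of a single integer (`Scheme.check_sound`).

*Conclusion.* For `V = ½ ∑ (w² + εᵀ P ε)` one gets `V' ≤ -2 λ V + C |u|²`
(`storage_deriv_le`), and the comparison principle gives the estimate.
-/

set_option linter.unusedSimpArgs false

open Matrix

/-- The Euclidean norm of a real vector. -/
noncomputable def euclNorm {ι : Type*} [Fintype ι] (v : ι → ℝ) : ℝ :=
  Real.sqrt (∑ i, v i ^ 2)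

/-- The spectral (ℓ²-operator) norm of a real square matrix. -/
noncomputable def specNorm {ι : Type*} [Fintype ι] [DecidableEq ι]
    (A : Matrix ι ι ℝ) : ℝ :=
  ‖Matrix.toEuclideanCLM (𝕜 := ℝ) A‖

namespace ObserverISS

/-! ### Certified positivity of bivariate polynomials on boxes -/

section Certificates

open Polynomial

/-- Expressions for polynomials in two variables, homogenized separately in each: `r₁` and `k₁` are
the homogenizing companions of the variables `r` and `k`. -/
inductive PExpr
  | r
  | r₁
  | k
  | k₁
  | nat (n : ℕ)
  | add (e f : PExpr)
  | sub (e f : PExpr)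
  | mul (e f : PExpr)

namespace PExpr

/-- Value of an expression in a commutative ring. -/
def eval {R : Type*} [CommRing R] (r r₁ k k₁ : R) : PExpr → R
  | .r => r
  | .r₁ => r₁
  | .k => k
  | .k₁ => k₁
  | nat n => n
  | add e f => e.eval r r₁ k k₁ + f.eval r r₁ k k₁
  | sub e f => e.eval r r₁ k k₁ - f.eval r r₁ k k₁
  | mul e f => e.eval r r₁ k k₁ * f.eval r r₁ k k₁

/-- Value modulo `W + 1`, computed with natural numbers only: `-1` is represented by `W`. -/
def evalMod (W r r₁ k k₁ : ℕ) : PExpr → ℕ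
  | .r => r
  | .r₁ => r₁
  | .k => k
  | .k₁ => k₁
  | nat n => n
  | add e f => Nat.add (e.evalMod W r r₁ k k₁) (f.evalMod W r r₁ k k₁)
  | sub e f => Nat.add (e.evalMod W r r₁ k k₁) (Nat.mul W (f.evalMod W r r₁ k k₁))
  | mul e f => Nat.mod (Nat.mul (e.evalMod W r r₁ k k₁) (f.evalMod W r r₁ k k₁)) (Nat.succ W)

/-- Upper bound for the sum of the absolute values of the coefficients. -/
def major (r r₁ k k₁ : ℕ) : PExpr → ℕ
  | .r => r
  | .r₁ => r₁
  | .k => k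
  | .k₁ => k₁
  | nat n => n
  | add e f => Nat.add (e.major r r₁ k k₁) (f.major r r₁ k k₁)
  | sub e f => Nat.add (e.major r r₁ k k₁) (f.major r r₁ k k₁)
  | mul e f => Nat.mul (e.major r r₁ k k₁) (f.major r r₁ k k₁)

/-- Upper bound for the degree in the variable `r`. -/
def degR : PExpr → ℕ
  | .r => 1
  | .r₁ => 1
  | .k => 0
  | .k₁ => 0
  | nat _ => 0
  | add e f => max e.degR f.degR
  | sub e f => max e.degR f.degR
  | mul e f => e.degR + f.degR

/-- Upper bound for the degree in the variable `k`. -/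
def degK : PExpr → ℕ
  | .r => 0
  | .r₁ => 0
  | .k => 1
  | .k₁ => 1
  | nat _ => 0
  | add e f => max e.degK f.degK
  | sub e f => max e.degK f.degK
  | mul e f => e.degK + f.degK

lemma map_eval {R S : Type*} [CommRing R] [CommRing S] (φ : R →+* S) (r r₁ k k₁ : R) (e : PExpr) :
    φ (e.eval r r₁ k k₁) = e.eval (φ r) (φ r₁) (φ k) (φ k₁) := by
  induction e <;> simp_all [eval]

lemma evalMod_cast (W r r₁ k k₁ : ℕ) (e : PExpr) :
    ((e.evalMod W r r₁ k k₁ : ℕ) : ZMod (W + 1))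
      = e.eval (r : ZMod (W + 1)) (r₁ : ZMod (W + 1)) (k : ZMod (W + 1)) (k₁ : ZMod (W + 1)) := by
  have hW : (W : ZMod (W + 1)) = -1 := by
    have := ZMod.natCast_self (W + 1)
    push_cast at this
    linear_combination this
  induction e with
  | add e f he hf => simp [evalMod, eval, ← he, ← hf]
  | sub e f he hf => simp [evalMod, eval, ← he, ← hf, hW]; ring
  | mul e f he hf =>
    rw [evalMod, eval, ← he, ← hf]
    show ((_ % (W + 1) : ℕ) : ZMod (W + 1)) = _
    rw [ZMod.natCast_mod]; simp
  | _ => simp [evalMod, eval]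

end PExpr

/-- The coefficient of `X ^ i * Y ^ j`. -/
noncomputable def coef (P : ℤ[X][X]) (i j : ℕ) : ℤ := (P.coeff j).coeff i

lemma coef_mul (P Q : ℤ[X][X]) (i j : ℕ) : coef (P * Q) i j
    = ∑ q ∈ Finset.HasAntidiagonal.antidiagonal j, ∑ p ∈ Finset.HasAntidiagonal.antidiagonal i,
        coef P p.1 q.1 * coef Q p.2 q.2 := by
  simp [coef, coeff_mul, finsetSum_coeff]

/-- The degrees of `P` are at most `n` and `m`, and its coefficients have a sum of absolute values
of at most `S`. -/
def Bdd (P : ℤ[X][X]) (n m S : ℕ) : Prop :=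
  (∀ i j, n < i ∨ m < j → coef P i j = 0) ∧
    ∀ I J : ℕ, ∑ j ∈ Finset.range J, ∑ i ∈ Finset.range I, |coef P i j| ≤ S

lemma Bdd.add {P Q : ℤ[X][X]} {n m S n' m' S' : ℕ} (hP : Bdd P n m S) (hQ : Bdd Q n' m' S') :
    Bdd (P + Q) (max n n') (max m m') (S + S') := by
  refine ⟨fun i j h => ?_, fun I J => ?_⟩
  · have h1 := hP.1 i j (by omega)
    have h2 := hQ.1 i j (by omega)
    simp only [coef] at *
    simp [h1, h2]
  · have h1 := hP.2 I J
    have h2 := hQ.2 I J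
    push_cast
    refine le_trans ?_ (add_le_add h1 h2)
    rw [← Finset.sum_add_distrib]
    refine Finset.sum_le_sum fun j _ => ?_
    rw [← Finset.sum_add_distrib]
    refine Finset.sum_le_sum fun i _ => ?_
    simpa [coef] using abs_add_le (coef P i j) (coef Q i j)

lemma Bdd.neg {P : ℤ[X][X]} {n m S : ℕ} (hP : Bdd P n m S) : Bdd (-P) n m S := by
  refine ⟨fun i j h => ?_, fun I J => ?_⟩
  · have := hP.1 i j h
    simp only [coef] at *
    simp [this]
  · simpa [coef] using hP.2 I J

lemma sum_antidiagonal_le (I : ℕ) (f : ℕ → ℕ → ℤ) (hf : ∀ a b, 0 ≤ f a b) :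
    ∑ i ∈ Finset.range I, ∑ p ∈ Finset.HasAntidiagonal.antidiagonal i, f p.1 p.2
      ≤ ∑ a ∈ Finset.range I, ∑ b ∈ Finset.range I, f a b := by
  have h : ∀ i ∈ Finset.range I, ∑ p ∈ Finset.HasAntidiagonal.antidiagonal i, f p.1 p.2
      = ∑ p ∈ (Finset.range I ×ˢ Finset.range I).filter (fun p => p.1 + p.2 = i), f p.1 p.2 := by
    intro i hi
    refine Finset.sum_congr ?_ fun _ _ => rfl
    ext p
    simp only [Finset.HasAntidiagonal.mem_antidiagonal, Finset.mem_filter, Finset.mem_product, Finset.mem_range]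
      at hi ⊢
    omega
  rw [Finset.sum_congr rfl h, Finset.sum_fiberwise_eq_sum_filter, ← Finset.sum_product']
  exact Finset.sum_le_sum_of_subset_of_nonneg (Finset.filter_subset _ _) fun _ _ _ => hf _ _

lemma Bdd.mul {P Q : ℤ[X][X]} {n m S n' m' S' : ℕ} (hP : Bdd P n m S) (hQ : Bdd Q n' m' S') :
    Bdd (P * Q) (n + n') (m + m') (S * S') := by
  refine ⟨fun i j h => ?_, fun I J => ?_⟩
  · rw [coef_mul]
    refine Finset.sum_eq_zero fun q hq => Finset.sum_eq_zero fun p hp => ?_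
    rw [Finset.HasAntidiagonal.mem_antidiagonal] at hp hq
    by_cases h' : n < p.1 ∨ m < q.1
    · rw [hP.1 _ _ h', zero_mul]
    · rw [hQ.1 _ _ (by omega), mul_zero]
  · calc _ ≤ ∑ j ∈ Finset.range J, ∑ i ∈ Finset.range I, ∑ q ∈ Finset.HasAntidiagonal.antidiagonal j,
          ∑ p ∈ Finset.HasAntidiagonal.antidiagonal i, |coef P p.1 q.1| * |coef Q p.2 q.2| := by
          refine Finset.sum_le_sum fun j _ => Finset.sum_le_sum fun i _ => ?_
          rw [coef_mul]
          refine (Finset.abs_sum_le_sum_abs _ _).trans (Finset.sum_le_sum fun q _ => ?_)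
          refine (Finset.abs_sum_le_sum_abs _ _).trans (Finset.sum_le_sum fun p _ => ?_)
          rw [abs_mul]
      _ = ∑ j ∈ Finset.range J, ∑ q ∈ Finset.HasAntidiagonal.antidiagonal j, ∑ i ∈ Finset.range I,
          ∑ p ∈ Finset.HasAntidiagonal.antidiagonal i, |coef P p.1 q.1| * |coef Q p.2 q.2| :=
          Finset.sum_congr rfl fun j _ => Finset.sum_comm
      _ ≤ ∑ j ∈ Finset.range J, ∑ q ∈ Finset.HasAntidiagonal.antidiagonal j, ∑ a ∈ Finset.range I,
          ∑ b ∈ Finset.range I, |coef P a q.1| * |coef Q b q.2| :=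
          Finset.sum_le_sum fun j _ => Finset.sum_le_sum fun q _ =>
            sum_antidiagonal_le I (fun a b => |coef P a q.1| * |coef Q b q.2|)
              fun a b => by positivity
      _ ≤ ∑ c ∈ Finset.range J, ∑ d ∈ Finset.range J, ∑ a ∈ Finset.range I,
          ∑ b ∈ Finset.range I, |coef P a c| * |coef Q b d| :=
          sum_antidiagonal_le J (fun c d => ∑ a ∈ Finset.range I, ∑ b ∈ Finset.range I,
            |coef P a c| * |coef Q b d|) fun c d => by positivity
      _ = (∑ c ∈ Finset.range J, ∑ a ∈ Finset.range I, |coef P a c|)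
          * ∑ d ∈ Finset.range J, ∑ b ∈ Finset.range I, |coef Q b d| := by
          simp only [Finset.sum_mul_sum]
      _ ≤ _ := by
          push_cast
          exact mul_le_mul (hP.2 I J) (hQ.2 I J) (by positivity) (by positivity)

/-- Substitution of `x` and `y` for the two polynomial variables. -/
noncomputable def subst {R : Type*} [CommRing R] (x y : R) : ℤ[X][X] →+* R :=
  eval₂RingHom (eval₂RingHom (Int.castRingHom R) x) y

lemma subst_eq_sum {R : Type*} [CommRing R] (x y : R) {P : ℤ[X][X]} {n m S : ℕ}
    (hP : Bdd P n m S) : subst x y P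
      = ∑ j ∈ Finset.range (m + 1), (∑ i ∈ Finset.range (n + 1), (coef P i j : R) * x ^ i) * y ^ j := by
  have h1 : P.natDegree < m + 1 := by
    refine Nat.lt_succ_of_le (natDegree_le_iff_coeff_eq_zero.mpr fun j hj => ?_)
    ext i
    exact hP.1 i j (Or.inr hj)
  have h2 : ∀ j, (P.coeff j).natDegree < n + 1 := fun j =>
    Nat.lt_succ_of_le (natDegree_le_iff_coeff_eq_zero.mpr fun i hi => hP.1 i j (Or.inl hi))
  simp only [subst, coe_eval₂RingHom]
  rw [eval₂_eq_sum_range' _ h1]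
  refine Finset.sum_congr rfl fun j _ => ?_
  rw [coe_eval₂RingHom, eval₂_eq_sum_range' _ (h2 j)]
  rfl

namespace PExpr

/-- The polynomial obtained from `e` by substituting `a + b X`, `D + D X`, `a' + b' Y`, `D + D Y` for
`r`, `r₁`, `k`, `k₁`. -/
noncomputable def boxPoly (e : PExpr) (D a b a' b' : ℕ) : ℤ[X][X] :=
  e.eval (C ((a : ℤ[X]) + (b : ℤ[X]) * X)) (C ((D : ℤ[X]) + (D : ℤ[X]) * X))
    ((a' : ℤ[X][X]) + (b' : ℤ[X][X]) * X) ((D : ℤ[X][X]) + (D : ℤ[X][X]) * X)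

lemma subst_boxPoly {R : Type*} [CommRing R] (e : PExpr) (D a b a' b' : ℕ) (x y : R) :
    subst x y (e.boxPoly D a b a' b') = e.eval (a + b * x) (D + D * x) (a' + b' * y) (D + D * y) := by
  rw [boxPoly, map_eval]
  simp [subst]

lemma bdd_const (a : ℕ) : Bdd (a : ℤ[X][X]) 0 0 a := by
  have h : ∀ i j, coef (a : ℤ[X][X]) i j = if j = 0 then (if i = 0 then (a : ℤ) else 0) else 0 := by
    intro i j
    rw [coef, coeff_natCast_ite]
    split_ifs with h1 h2 <;> simp_all [coeff_natCast_ite]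
  refine ⟨fun i j hij => ?_, fun I J => ?_⟩
  · rw [h]; split_ifs <;> omega
  · simp only [h, apply_ite abs, abs_zero, Finset.sum_ite_irrel, Finset.sum_const_zero,
      Finset.sum_ite_eq', Nat.abs_cast]
    split_ifs <;> simp

lemma bdd_X : Bdd (X : ℤ[X][X]) 0 1 1 := by
  have h : ∀ i j, coef (X : ℤ[X][X]) i j = if j = 1 then (if i = 0 then (1 : ℤ) else 0) else 0 := by
    intro i j
    rw [coef, coeff_X]
    split_ifs with h1 h2 <;> simp_all [coeff_one]
  refine ⟨fun i j hij => ?_, fun I J => ?_⟩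
  · rw [h]; split_ifs <;> omega
  · simp only [h, apply_ite abs, abs_zero, Finset.sum_ite_irrel, Finset.sum_const_zero,
      Finset.sum_ite_eq', abs_one]
    split_ifs <;> simp

lemma bdd_CX : Bdd (C X : ℤ[X][X]) 1 0 1 := by
  have h : ∀ i j, coef (C X : ℤ[X][X]) i j
      = if j = 0 then (if i = 1 then (1 : ℤ) else 0) else 0 := by
    intro i j
    rw [coef, coeff_C]
    split_ifs with h1 h2 <;> simp_all [coeff_X, eq_comm]
  refine ⟨fun i j hij => ?_, fun I J => ?_⟩
  · rw [h]; split_ifs <;> omega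
  · simp only [h, apply_ite abs, abs_zero, Finset.sum_ite_irrel, Finset.sum_const_zero,
      Finset.sum_ite_eq', abs_one]
    split_ifs <;> simp

lemma bdd_boxPoly (e : PExpr) (D a b a' b' : ℕ) :
    Bdd (e.boxPoly D a b a' b') e.degR e.degK (e.major (a + b) (D + D) (a' + b') (D + D)) := by
  have hr : ∀ a b : ℕ, Bdd (C ((a : ℤ[X]) + (b : ℤ[X]) * X)) 1 0 (a + b) := fun a b => by
    have := (bdd_const a).add ((bdd_const b).mul bdd_CX)
    simpa using this
  have hk : ∀ a b : ℕ, Bdd ((a : ℤ[X][X]) + (b : ℤ[X][X]) * X) 0 1 (a + b) := fun a b => by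
    have := (bdd_const a).add ((bdd_const b).mul bdd_X)
    simpa using this
  induction e with
  | r => exact hr a b
  | r₁ => exact hr D D
  | k => exact hk a' b'
  | k₁ => exact hk D D
  | nat n => exact bdd_const n
  | add e f he hf => exact he.add hf
  | sub e f he hf =>
    have := he.add hf.neg
    rw [← sub_eq_add_neg] at this
    exact this
  | mul e f he hf => exact he.mul hf

end PExpr

/-- Call by value for natural numbers: the case distinction makes kernel reduction evaluate `n`
before it is substituted into `f`. -/
def forceNat {γ : Type} (n : ℕ) (f : ℕ → γ) : γ := Nat.rec (f 0) (fun m _ => f (Nat.succ m)) n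

lemma forceNat_eq {γ : Type} (n : ℕ) (f : ℕ → γ) : forceNat n f = f n := by
  rcases n with _ | m <;> rfl

/-- The lowest `l` digits of `N` in base `β` are smaller than `h`. -/
def digitsLt (β h : ℕ) : ℕ → ℕ → Bool
  | 0, _ => true
  | l + 1, N => Nat.blt (Nat.mod N β) h && forceNat (Nat.div N β) (digitsLt β h l)

/-- An integer combination of powers of `β` with small coefficients has nonnegative coefficients
when the digits of a representative modulo `β ^ l` are small. -/
lemma nonneg_of_digitsLt {β h : ℕ} (hh : 2 * h ≤ β) (l : ℕ) (N : ℕ) (g : ℕ → ℤ)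
    (hg : ∀ i, 2 * |g i| < β) (hN : (N : ℤ) ≡ ∑ i ∈ Finset.range l, g i * (β : ℤ) ^ i [ZMOD β ^ l])
    (hd : digitsLt β h l N = true) : ∀ i < l, 0 ≤ g i ∧ (i = 0 → g 0 = (N % β : ℕ)) := by
  induction l generalizing N g with
  | zero => intro i hi; omega
  | succ l ih =>
    simp only [digitsLt, forceNat_eq, Bool.and_eq_true, Nat.blt_eq] at hd
    obtain ⟨hd1, hd2⟩ := hd
    change N % β < h at hd1
    change digitsLt β h l (N / β) = true at hd2
    rw [Finset.sum_range_succ', pow_zero, mul_one] at hN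
    have hsum : ∑ i ∈ Finset.range l, g (i + 1) * (β : ℤ) ^ (i + 1)
        = β * ∑ i ∈ Finset.range l, g (i + 1) * (β : ℤ) ^ i := by
      rw [Finset.mul_sum]; exact Finset.sum_congr rfl fun _ _ => by ring
    rw [hsum] at hN
    have hβ : (0 : ℤ) < β := lt_of_le_of_lt (by positivity) (hg 0)
    have hdiv : (N : ℤ) = β * (N / β : ℕ) + (N % β : ℕ) := by
      exact_mod_cast (Nat.div_add_mod N β).symm
    have h0 : g 0 = (N % β : ℕ) := by
      obtain ⟨q, hq⟩ := hN.dvd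
      have hq' : g 0 - (N % β : ℕ) = β * (q * β ^ l + (N / β : ℕ)
          - ∑ i ∈ Finset.range l, g (i + 1) * (β : ℤ) ^ i) := by
        rw [hdiv] at hq; linear_combination hq
      have habs := abs_lt.mp (show |g 0| < (β : ℤ) - |g 0| by linarith [hg 0])
      have hg0 := hg 0
      have hb : |g 0 - (N % β : ℕ)| < β := by
        have : ((N % β : ℕ) : ℤ) < h := by exact_mod_cast hd1
        have h2 : 2 * (h : ℤ) ≤ β := by exact_mod_cast hh
        have h3 : (0 : ℤ) ≤ (N % β : ℕ) := by positivity
        have h4 := abs_le.mp (le_refl |g 0|)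
        rw [abs_lt]
        constructor <;> linarith [h4.1, h4.2]
      have := Int.eq_zero_of_abs_lt_dvd ⟨_, hq'⟩ hb
      linarith
    have hrest := ih (N / β) (fun i => g (i + 1)) (fun i => hg _) (by
      obtain ⟨q, hq⟩ := hN.dvd
      refine (Int.modEq_iff_dvd.mpr ⟨q, ?_⟩)
      rw [hdiv, h0, pow_succ] at hq
      have := mul_left_cancel₀ hβ.ne' (show (β : ℤ) * (∑ i ∈ Finset.range l, g (i + 1) * (β : ℤ) ^ i
        - (N / β : ℕ)) = β * (β ^ l * q) by linear_combination hq)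
      exact this) hd2
    intro i hi
    refine ⟨?_, fun _ => h0⟩
    rcases i with _ | i
    · rw [h0]; positivity
    · exact (hrest i (by omega)).1

namespace PExpr

/-- The expression is homogeneous in each of the pairs `(r, r₁)` and `(k, k₁)`. -/
def isHom : PExpr → Bool
  | add e f => e.isHom && f.isHom && e.degR == f.degR && e.degK == f.degK
  | sub e f => e.isHom && f.isHom && e.degR == f.degR && e.degK == f.degK
  | mul e f => e.isHom && f.isHom
  | _ => true

lemma eval_of_isHom {e : PExpr} (he : e.isHom = true) (s t r k : ℝ) :
    e.eval (s * r) s (t * k) t = s ^ e.degR * t ^ e.degK * e.eval r 1 k 1 := by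
  induction e with
  | add e f ihe ihf =>
    simp only [isHom, Bool.and_eq_true, beq_iff_eq] at he
    obtain ⟨⟨⟨h1, h2⟩, h3⟩, h4⟩ := he
    simp only [eval, degR, degK, ihe h1, ihf h2, h3, h4, max_self]; ring
  | sub e f ihe ihf =>
    simp only [isHom, Bool.and_eq_true, beq_iff_eq] at he
    obtain ⟨⟨⟨h1, h2⟩, h3⟩, h4⟩ := he
    simp only [eval, degR, degK, ihe h1, ihf h2, h3, h4, max_self]; ring
  | mul e f ihe ihf =>
    simp only [isHom, Bool.and_eq_true] at he
    simp only [eval, degR, degK, ihe he.1, ihf he.2]; ring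
  | _ => simp [eval, degR, degK]

/-- Sufficient test for positivity of `e` on the box `[a, b) / D × [a', b') / D`: the polynomial
`boxPoly` has nonnegative coefficients and a positive constant term. All its coefficients are read
off, as digits in base `2 ^ B`, from a single value. -/
def posTest (B D : ℕ) (e : PExpr) (a b a' b' : ℕ) : Bool :=
  e.isHom && forceNat (e.degR + 1) fun n => forceNat (e.degK + 1) fun m =>
    forceNat (2 ^ B) fun β => forceNat (β ^ n) fun γ => forceNat (β ^ (n * m) - 1) fun W =>
    forceNat (a + b * β) fun r => forceNat (D + D * β) fun r₁ =>
    forceNat (a' + b' * γ) fun k => forceNat (D + D * γ) fun k₁ =>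
    forceNat (e.evalMod W r r₁ k k₁) fun N =>
      Nat.blt (2 * e.major (a + b) (D + D) (a' + b') (D + D)) β && Nat.blt 0 (N % β)
        && digitsLt β (β / 2) (n * m) N

lemma pos_of_posTest {B D : ℕ} {e : PExpr} {a b a' b' : ℕ} (h : e.posTest B D a b a' b' = true)
    {x y : ℝ} (hx : 0 ≤ x) (hy : 0 ≤ y) :
    0 < e.eval (a + b * x) (D + D * x) (a' + b' * y) (D + D * y) := by
  simp only [posTest, forceNat_eq, Bool.and_eq_true, Nat.blt_eq] at h
  obtain ⟨-, ⟨h1, h2⟩, h3⟩ := h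
  set n := e.degR with hn
  set m := e.degK with hm
  set β := 2 ^ B with hβ
  set P := e.boxPoly D a b a' b' with hP
  have hb := bdd_boxPoly e D a b a' b'
  rw [← hP, ← hn, ← hm] at hb
  set S := e.major (a + b) (D + D) (a' + b') (D + D) with hS
  have hcoef : ∀ i j, |coef P i j| ≤ S := by
    intro i j
    refine le_trans ?_ (hb.2 (i + 1) (j + 1))
    refine le_trans ?_ (Finset.single_le_sum (f := fun j => ∑ i ∈ Finset.range (i + 1), |coef P i j|)
      (fun j _ => by positivity) (Finset.mem_range.mpr (Nat.lt_succ_self j)))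
    exact Finset.single_le_sum (f := fun i => |coef P i j|) (fun i _ => abs_nonneg _)
      (Finset.mem_range.mpr (Nat.lt_succ_self i))
  have hW : β ^ ((n + 1) * (m + 1)) - 1 + 1 = β ^ ((n + 1) * (m + 1)) :=
    Nat.sub_add_cancel (Nat.one_le_pow _ _ (by positivity))
  set N := e.evalMod (β ^ ((n + 1) * (m + 1)) - 1) (a + b * β) (D + D * β)
    (a' + b' * β ^ (n + 1)) (D + D * β ^ (n + 1)) with hN
  -- the packed value, as a sum over all digits
  set g : ℕ → ℤ := fun l => coef P (l % (n + 1)) (l / (n + 1)) with hg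
  have hpack : subst (β : ℤ) ((β : ℤ) ^ (n + 1)) P
      = ∑ l ∈ Finset.range ((n + 1) * (m + 1)), g l * (β : ℤ) ^ l := by
    rw [subst_eq_sum _ _ hb]
    generalize m + 1 = M
    induction M with
    | zero => simp
    | succ M ih =>
      rw [Finset.sum_range_succ, ih, Nat.mul_succ,
        Finset.sum_range_add _ ((n + 1) * M) (n + 1), Finset.sum_mul]
      congr 1
      refine Finset.sum_congr rfl fun i hi => ?_
      have hi' : i < n + 1 := Finset.mem_range.mp hi
      simp only [hg, Nat.mul_add_mod, Nat.mod_eq_of_lt hi', Nat.mul_add_div (Nat.succ_pos n),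
        Nat.div_eq_of_lt hi', add_zero, pow_add, Int.cast_id]
      ring
  have hmod : (N : ℤ) ≡ ∑ l ∈ Finset.range ((n + 1) * (m + 1)), g l * (β : ℤ) ^ l
      [ZMOD β ^ ((n + 1) * (m + 1))] := by
    rw [← hpack, hP, subst_boxPoly]
    have hcast := evalMod_cast (β ^ ((n + 1) * (m + 1)) - 1) (a + b * β) (D + D * β)
      (a' + b' * β ^ (n + 1)) (D + D * β ^ (n + 1)) e
    rw [← hN] at hcast
    have h4 : ((N : ℤ) : ZMod (β ^ ((n + 1) * (m + 1)) - 1 + 1))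
        = ((e.eval (a + b * β) (D + D * β) (a' + b' * β ^ (n + 1)) (D + D * β ^ (n + 1)) : ℤ) :
          ZMod (β ^ ((n + 1) * (m + 1)) - 1 + 1)) := by
      have := map_eval (Int.castRingHom (ZMod (β ^ ((n + 1) * (m + 1)) - 1 + 1)))
        (a + b * β) (D + D * β) (a' + b' * β ^ (n + 1)) (D + D * β ^ (n + 1)) e
      simp only [eq_intCast] at this
      rw [this]
      push_cast
      simpa using hcast
    have h5 := (ZMod.intCast_eq_intCast_iff _ _ _).mp h4
    rw [hW] at h5
    exact_mod_cast h5
  have hdig := nonneg_of_digitsLt (β := β) (h := β / 2) (by omega) _ N g (fun l => by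
    have := hcoef (l % (n + 1)) (l / (n + 1))
    have : (2 * S : ℤ) < β := by exact_mod_cast h1
    simp only [hg]; linarith) hmod h3
  have hnn : ∀ i ≤ n, ∀ j ≤ m, 0 ≤ coef P i j := by
    intro i hi j hj
    have := (hdig ((n + 1) * j + i) (by nlinarith)).1
    simpa [hg, Nat.mul_add_mod, Nat.mod_eq_of_lt (Nat.lt_succ_of_le hi),
      Nat.mul_add_div (Nat.succ_pos n), Nat.div_eq_of_lt (Nat.lt_succ_of_le hi)] using this
  have h00 : 0 < coef P 0 0 := by
    have := (hdig 0 (by positivity)).2 rfl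
    simp only [hg, Nat.zero_mod, Nat.zero_div] at this
    rw [this]; exact_mod_cast h2
  rw [← subst_boxPoly, ← hP, subst_eq_sum _ _ hb]
  have hterm : ∀ j ∈ Finset.range (m + 1), ∀ i ∈ Finset.range (n + 1),
      0 ≤ (coef P i j : ℝ) * x ^ i := fun j hj i hi => by
    have := hnn i (Nat.lt_succ_iff.mp (Finset.mem_range.mp hi)) j
      (Nat.lt_succ_iff.mp (Finset.mem_range.mp hj))
    have : (0 : ℝ) ≤ coef P i j := by exact_mod_cast this
    positivity
  refine Finset.sum_pos' (fun j hj => mul_nonneg (Finset.sum_nonneg (hterm j hj)) (by positivity))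
    ⟨0, by simp, ?_⟩
  rw [pow_zero, mul_one]
  refine Finset.sum_pos' (hterm 0 (by simp)) ⟨0, by simp, ?_⟩
  simpa using h00

lemma exists_param {D a b : ℕ} {r : ℝ} (h1 : (a : ℝ) ≤ D * r) (h2 : D * r < b) :
    ∃ x : ℝ, 0 ≤ x ∧ (a + b * x : ℝ) = (D + D * x) * r := by
  have h : (0 : ℝ) < b - D * r := by linarith
  refine ⟨(D * r - a) / (b - D * r), div_nonneg (by linarith) h.le, ?_⟩
  field_simp
  ring

lemma posTest_sound {B D : ℕ} (hD : 0 < D) {e : PExpr} {a b a' b' : ℕ}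
    (h : e.posTest B D a b a' b' = true) {r k : ℝ} (hr1 : (a : ℝ) ≤ D * r) (hr2 : D * r < b)
    (hk1 : (a' : ℝ) ≤ D * k) (hk2 : D * k < b') : 0 < e.eval r 1 k 1 := by
  obtain ⟨x, hx, hx'⟩ := exists_param hr1 hr2
  obtain ⟨y, hy, hy'⟩ := exists_param hk1 hk2
  have hD' : (0 : ℝ) < D := by exact_mod_cast hD
  have hpos := pos_of_posTest h hx hy
  have hhom : e.isHom = true := by
    simp only [posTest, Bool.and_eq_true] at h
    exact h.1
  rw [hx', hy', eval_of_isHom hhom] at hpos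
  exact pos_of_mul_pos_right hpos (by positivity)

end PExpr

/-- A bisection scheme for a box: `r` and `k` halve it in the respective direction, and the leaf
`leaf i` claims positivity of all expressions in the `i`-th group of a given list on it. -/
inductive Scheme
  | leaf (i : ℕ)
  | r (s t : Scheme)
  | k (s t : Scheme)

/-- Checks a bisection scheme against the list `ps` of groups of expressions. -/
def Scheme.check (ps : List (List PExpr)) (B D : ℕ) : Scheme → ℕ → ℕ → ℕ → ℕ → Bool
  | .leaf i, a, b, a', b' =>
      (!(ps.getD i []).isEmpty) && (ps.getD i []).all fun e => e.posTest B D a b a' b'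
  | .r s t, a, b, a', b' =>
      forceNat ((a + b) / 2) fun m => s.check ps B D a m a' b' && t.check ps B D m b a' b'
  | .k s t, a, b, a', b' =>
      forceNat ((a' + b') / 2) fun m => s.check ps B D a b a' m && t.check ps B D a b m b'

lemma Scheme.check_sound {ps : List (List PExpr)} {B D : ℕ} (hD : 0 < D) {r k : ℝ}
    (s : Scheme) {a b a' b' : ℕ} (h : s.check ps B D a b a' b' = true)
    (hr1 : (a : ℝ) ≤ D * r) (hr2 : D * r < b) (hk1 : (a' : ℝ) ≤ D * k) (hk2 : D * k < b') :
    ∃ g ∈ ps, ∀ e ∈ g, 0 < e.eval r 1 k 1 := by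
  induction s generalizing a b a' b' with
  | leaf i =>
    simp only [Scheme.check, Bool.and_eq_true, Bool.not_eq_true', List.all_eq_true,
      List.isEmpty_eq_false_iff] at h
    refine ⟨ps.getD i [], ?_, fun e he => PExpr.posTest_sound hD (h.2 e he) hr1 hr2 hk1 hk2⟩
    rw [List.getD_eq_getElem?_getD] at h ⊢
    rcases hi : ps[i]? with _ | g
    · simp [hi] at h
    · simpa [hi] using List.mem_of_getElem? hi
  | r s t ihs iht =>
    simp only [Scheme.check, forceNat_eq, Bool.and_eq_true] at h
    rcases lt_or_ge (D * r) (((a + b) / 2 : ℕ) : ℝ) with hm | hm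
    · exact ihs h.1 hr1 hm hk1 hk2
    · exact iht h.2 hm hr2 hk1 hk2
  | k s t ihs iht =>
    simp only [Scheme.check, forceNat_eq, Bool.and_eq_true] at h
    rcases lt_or_ge (D * k) (((a' + b') / 2 : ℕ) : ℝ) with hm | hm
    · exact ihs h.1 hr1 hr2 hk1 hm
    · exact iht h.2 hr1 hr2 hm hk2

end Certificates

end ObserverISS

namespace ObserverISS

/-! ### The cubic inequality behind the frequency condition -/

namespace PExpr

instance : Add PExpr := ⟨add⟩

instance : Sub PExpr := ⟨sub⟩

instance : Mul PExpr := ⟨mul⟩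

instance (n : ℕ) : OfNat PExpr n := ⟨nat n⟩

lemma eval_add {R : Type*} [CommRing R] (r r₁ k k₁ : R) (e f : PExpr) :
    (e + f).eval r r₁ k k₁ = e.eval r r₁ k k₁ + f.eval r r₁ k k₁ := rfl

lemma eval_sub {R : Type*} [CommRing R] (r r₁ k k₁ : R) (e f : PExpr) :
    (e - f).eval r r₁ k k₁ = e.eval r r₁ k k₁ - f.eval r r₁ k k₁ := rfl

lemma eval_mul {R : Type*} [CommRing R] (r r₁ k k₁ : R) (e f : PExpr) :
    (e * f).eval r r₁ k k₁ = e.eval r r₁ k k₁ * f.eval r r₁ k k₁ := rfl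

lemma eval_ofNat {R : Type*} [CommRing R] (r r₁ k k₁ : R) (n : ℕ) [n.AtLeastTwo] :
    PExpr.eval r r₁ k k₁ (OfNat.ofNat n) = OfNat.ofNat n := rfl

/-- `1 - r`, homogenized as all expressions below. -/
def ey : PExpr :=
  r₁ - r

/-- `k² r - 4 (1 - r) (1 - k)`. -/
def eC : PExpr :=
  k * k * r - 4 * ey * (k₁ - k) * k₁

/-- `4 (1 - r) (1 - k) - k² r`. -/
def eC1 : PExpr :=
  4 * ey * (k₁ - k) * k₁ - k * k * r

/-- `1 - 6 k + 4 k² + r (8 k - 7 k²) - 4 r² k (1 - k)`, the factor of `1 + Θ` in `α₁`. -/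
def eT : PExpr :=
  r₁ * r₁ * (k₁ * k₁ - 6 * k * k₁ + 4 * k * k) + r * r₁ * k * (8 * k₁ - 7 * k) - 4 * r * r * k
    * (k₁ - k)

/-- `4 k - 7 k² - 4 r k (1 - k)`. -/
def eT' : PExpr :=
  r₁ * k * (4 * k₁ - 7 * k) - 4 * r * k * (k₁ - k)

/-- `1 + Θ` for `Θ = 4 (1 - r)`. -/
def ebba : PExpr :=
  5 * r₁ - 4 * r

/-- `10 m`, where `m = 17/10 - r`. -/
def ema : PExpr :=
  17 * r₁ - 10 * r

/-- The factor `Z` in `α₂ = (1 + Θ) (1 - 2 r) + r² Z`, for `Θ = 4 (1 - r)`. -/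
def eZa : PExpr :=
  2 * k * k₁ * ey * (r₁ + r) + k * k * r₁ * (4 * r₁ - 3 * r) - 4 * k * k₁ * ey * r₁

/-- `5 A₂`, where `A₂ = α₂ + 2 m r²`. -/
def eA2a : PExpr :=
  5 * ebba * (r₁ - 2 * r) * r₁ * r₁ * k₁ * k₁ + 5 * r * r * eZa + ema * r * r * r₁ * k₁ * k₁

/-- `100 A₁`, where `A₁ = α₁ - m² r²`. -/
def eA1a : PExpr :=
  100 * ebba * eT * r₁ * k₁ - 200 * r * r * k * ey * eC1 - ema * ema * r * r * k₁ * k₁ * k₁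

/-- `10000 (4 A₂ α₀ - A₁²)`. -/
def eGa : PExpr :=
  8000 * eA2a * ebba * ey * k * k * r₁ * r₁ * k₁ * k₁ - eA1a * eA1a

/-- `5 (α₀ - k² A₂) / (k² r)`. -/
def eB0a : PExpr :=
  5 * ebba * r₁ * r₁ * k₁ * k₁ - 5 * r * eZa - ema * r * r₁ * k₁ * k₁

/-- `100 (A₁ + 2 k A₂ - (1 + Θ) (1 - 2 k)²) / r`. -/
def eH1a : PExpr :=
  100 * ebba * eT' * r₁ * k₁ + r * (200 * k * eZa + 40 * k * k₁ * k₁ * ema * r₁ - 200 * k * ey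
    * eC1 - ema * ema * k₁ * k₁ * k₁)

/-- `100 (A₁ + 2 k A₂)`. -/
def eB1a : PExpr :=
  100 * ebba * (k₁ - 2 * k) * (k₁ - 2 * k) * k₁ * r₁ * r₁ * r₁ + r * eH1a

/-- `1 + Θ` for `Θ = 4 - 8 k r`. -/
def ebbb : PExpr :=
  5 * r₁ * k₁ - 8 * k * r

/-- `5 m`, where `m = 8/5 - r`. -/
def emb : PExpr :=
  8 * r₁ - 5 * r

/-- `Θ / 2`. -/
def ehb : PExpr :=
  2 * r₁ * k₁ - 4 * k * r

/-- The factor `Z` in `α₂ = (1 + Θ) (1 - 2 r) + r² Z`, for `Θ = 4 - 8 k r`. -/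
def eZb : PExpr :=
  k * ehb * (r₁ + r) + k * k * r₁ * (4 * r₁ - 3 * r) - 4 * k * k₁ * ey * r₁

/-- `5 A₂`, where `A₂ = α₂ + 2 m r²`. -/
def eA2b : PExpr :=
  5 * ebbb * (r₁ - 2 * r) * r₁ * r₁ * k₁ + 5 * r * r * eZb + 2 * emb * r * r * r₁ * k₁ * k₁

/-- `25 A₁`, where `A₁ = α₁ - m² r²`. -/
def eA1b : PExpr :=
  25 * ebbb * eT * r₁ * k₁ - 25 * r * r * k * ehb * eC1 - emb * emb * r * r * k₁ * k₁ * k₁ * k₁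

/-- `625 (4 A₂ α₀ - A₁²)`. -/
def eGb : PExpr :=
  500 * eA2b * ebbb * ey * k * k * r₁ * r₁ * k₁ * k₁ * k₁ - eA1b * eA1b

/-- `5 (α₀ - k² A₂) / (k² r)`. -/
def eB0b : PExpr :=
  5 * ebbb * r₁ * r₁ * k₁ - 5 * r * eZb - 2 * emb * r * r₁ * k₁ * k₁

/-- `25 (A₁ + 2 k A₂ - (1 + Θ) (1 - 2 k)²) / r`. -/
def eH1b : PExpr :=
  25 * ebbb * eT' * r₁ * k₁ + r * (50 * k * k₁ * eZb + 20 * k * k₁ * k₁ * k₁ * emb * r₁ - 25 *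
    k * ehb * eC1 - emb * emb * k₁ * k₁ * k₁ * k₁)

/-- `25 (A₁ + 2 k A₂)`. -/
def eB1b : PExpr :=
  25 * ebbb * (k₁ - 2 * k) * (k₁ - 2 * k) * k₁ * r₁ * r₁ * r₁ + r * eH1b

end PExpr

open PExpr in
/-- Groups of expressions whose positivity implies that of the cubic, or contradicts the
constraint on `(r, k)`, in the case `k < 1/2`. -/
def groupsa : List (List PExpr) :=
  [[eA2a, eGa], [eA2a, eB0a, eB1a], [eA2a, eB0a, eH1a], [eC], [eA2a, eA1a]]

open PExpr in
/-- Groups of expressions whose positivity implies that of the cubic, or contradicts the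
constraint on `(r, k)`, in the case `k ≥ 1/2`. -/
def groupsb : List (List PExpr) :=
  [[eA2b, eGb], [eA2b, eB0b, eB1b], [eA2b, eB0b, eH1b], [eC]]

/-- Bisection of the part `r < 1/8`, `k < 1/2` of the domain. -/
def schemeLowa : Scheme :=
  (.leaf 1)

lemma checkLowa : schemeLowa.check groupsa 256 2048 0 256 0 1024 = true := by
  decide +kernel

/-- Bisection of the part `r ≥ 1/8`, `k < 1/2` of the domain. -/
def schemeHigha : Scheme :=
  (.r (.k (.leaf 1) (.k (.leaf 1) (.leaf 0))) (.r (.k (.leaf 1) (.k (.leaf 1) (.leaf 0))) (.k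
    (.leaf 4) (.r (.k (.k (.leaf 4) (.k (.leaf 4) (.leaf 0))) (.leaf 0)) (.r (.k (.k (.leaf 4)
    (.leaf 0)) (.r (.leaf 0) (.k (.leaf 0) (.r (.r (.leaf 0) (.leaf 3)) (.leaf 3))))) (.r (.k
    (.k (.leaf 4) (.leaf 0)) (.r (.r (.k (.leaf 0) (.leaf 3)) (.leaf 3)) (.leaf 3))) (.r (.k
    (.k (.leaf 4) (.leaf 3)) (.leaf 3)) (.leaf 3))))))))

lemma checkHigha : schemeHigha.check groupsa 256 2048 256 2048 0 1024 = true := by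
  decide +kernel

/-- Bisection of the part `r < 1/8`, `k ≥ 1/2` of the domain. -/
def schemeLowb : Scheme :=
  (.k (.k (.k (.k (.leaf 2) (.leaf 1)) (.leaf 1)) (.leaf 1)) (.leaf 1))

lemma checkLowb : schemeLowb.check groupsb 256 2048 0 256 1024 2048 = true := by
  decide +kernel

/-- Bisection of the part `r ≥ 1/8`, `k ≥ 1/2` of the domain. -/
def schemeHighb : Scheme :=
  (.r (.k (.leaf 0) (.leaf 0)) (.r (.r (.k (.leaf 0) (.k (.k (.leaf 0) (.leaf 3)) (.leaf 3)))
    (.k (.k (.leaf 0) (.r (.r (.leaf 0) (.k (.leaf 0) (.k (.leaf 0) (.leaf 3)))) (.k (.r (.leaf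
    0) (.k (.leaf 0) (.r (.k (.leaf 0) (.leaf 3)) (.leaf 3)))) (.leaf 3)))) (.leaf 3))) (.r (.k
    (.k (.k (.leaf 0) (.r (.r (.leaf 0) (.k (.leaf 0) (.r (.k (.leaf 0) (.leaf 3)) (.leaf 3))))
    (.r (.r (.k (.leaf 0) (.leaf 3)) (.leaf 3)) (.leaf 3)))) (.r (.r (.r (.k (.k (.k (.leaf 0)
    (.leaf 3)) (.leaf 3)) (.leaf 3)) (.leaf 3)) (.leaf 3)) (.leaf 3))) (.leaf 3)) (.leaf 3))))

lemma checkHighb : schemeHighb.check groupsb 256 2048 256 2048 1024 2048 = true := by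
  decide +kernel

/-- A quadratic polynomial is positive on the positive half-line under any one of these
conditions on its coefficients; the point `k` is where it is compared with its Taylor
expansion. -/
lemma quadratic_pos {r k σ b A₂ A₁ α₀ : ℝ} (hr1 : r < 1) (hσ : 0 < σ)
    (hα₀ : α₀ = b * ((1 - r) * k ^ 2))
    (h : (0 < A₂ ∧ 0 < 4 * A₂ * α₀ - A₁ ^ 2) ∨
      (0 < A₂ ∧ 0 < α₀ - k ^ 2 * A₂ ∧ 0 < A₁ + 2 * k * A₂) ∨
      (0 < A₂ ∧ 0 < α₀ - k ^ 2 * A₂ ∧ 0 < A₁ + 2 * k * A₂ - b * (1 - 2 * k) ^ 2) ∨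
      (0 < A₂ ∧ 0 < A₁ ∧ 0 < α₀)) :
    0 < A₂ * σ ^ 2 + A₁ * σ + α₀ := by
  have key : 0 < A₂ → 0 < α₀ - k ^ 2 * A₂ → 0 < A₁ + 2 * k * A₂ →
      0 < A₂ * σ ^ 2 + A₁ * σ + α₀ := fun h1 h2 h3 => by
    have e : A₂ * σ ^ 2 + A₁ * σ + α₀
        = A₂ * (σ - k) ^ 2 + (A₁ + 2 * k * A₂) * σ + (α₀ - k ^ 2 * A₂) := by ring
    rw [e]; positivity
  rcases h with ⟨h1, h2⟩ | ⟨h1, h2, h3⟩ | ⟨h1, h2, h3⟩ | ⟨h1, h2, h3⟩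
  · have : 0 < 4 * A₂ * (A₂ * σ ^ 2 + A₁ * σ + α₀) := by
      have e : 4 * A₂ * (A₂ * σ ^ 2 + A₁ * σ + α₀)
          = (2 * A₂ * σ + A₁) ^ 2 + (4 * A₂ * α₀ - A₁ ^ 2) := by ring
      rw [e]; positivity
    exact pos_of_mul_pos_right this (by positivity)
  · exact key h1 h2 h3
  · have h4 : 0 < b * ((1 - r) * k ^ 2) := by
      rw [← hα₀]
      have : 0 ≤ k ^ 2 * A₂ := by positivity
      linarith
    have h5 : 0 ≤ 1 - r := by linarith
    have h6 : 0 < b := pos_of_mul_pos_left h4 (by positivity)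
    have h7 : 0 ≤ b * (1 - 2 * k) ^ 2 := by positivity
    exact key h1 h2 (by linarith)
  · positivity

/-- Positivity of the cubic for `Θ = 4 * (1 - r)`. -/
lemma cubic_pos_a {r k σ Θ : ℝ} (hr : 0 < r) (hr1 : r < 1) (hk : 0 < k)
    (hk2 : k < 1 / 2) (hC : 0 < 4 * (1 - r) * (1 - k) - k ^ 2 * r) (hσ : 0 < σ)
    (hΘ : Θ = 4 * (1 - r)) :
    0 < r ^ 2 * σ ^ 3
      + ((1 + Θ) * (1 - 2 * r) + r ^ 2 * (1 / 2 * k * Θ * (1 + r) + k ^ 2 * (4 - 3 * r)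
        - 4 * k * (1 - r))) * σ ^ 2
      + ((1 + Θ) * (1 - 6 * k + 4 * k ^ 2 + r * (8 * k - 7 * k ^ 2) - 4 * r ^ 2 * k * (1 - k))
        - 1 / 2 * r ^ 2 * k * Θ * (4 * (1 - r) * (1 - k) - k ^ 2 * r)) * σ
      + (1 + Θ) * ((1 - r) * k ^ 2) := by
  obtain ⟨g, hg, hpos⟩ : ∃ g ∈ groupsa, ∀ e ∈ g, 0 < e.eval r 1 k 1 := by
    rcases lt_or_ge r (1 / 8) with h8 | h8
    · exact schemeLowa.check_sound (by norm_num) checkLowa (by norm_num; linarith)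
        (by norm_num; linarith) (by norm_num; linarith) (by norm_num; linarith)
    · exact schemeHigha.check_sound (by norm_num) checkHigha (by norm_num; linarith)
        (by norm_num; linarith) (by norm_num; linarith) (by norm_num; linarith)
  obtain ⟨A₂, hA₂⟩ : ∃ A₂, A₂ =
      ((1 + Θ) * (1 - 2 * r) + r ^ 2 * (1 / 2 * k * Θ * (1 + r) + k ^ 2 * (4 - 3 * r)
    - 4 * k * (1 - r)) + 2 * (17 / 10 - r) * r ^ 2) := ⟨_, rfl⟩
  obtain ⟨A₁, hA₁⟩ : ∃ A₁, A₁ =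
      ((1 + Θ) * (1 - 6 * k + 4 * k ^ 2 + r * (8 * k - 7 * k ^ 2) - 4 * r ^ 2 * k * (1 - k))
    - 1 / 2 * r ^ 2 * k * Θ * (4 * (1 - r) * (1 - k) - k ^ 2 * r) - (17 / 10 - r) ^ 2 * r ^ 2) := ⟨_, rfl⟩
  obtain ⟨α₀, hα₀⟩ : ∃ α₀, α₀ = (1 + Θ) * ((1 - r) * k ^ 2) := ⟨_, rfl⟩
  have e2 : PExpr.eval r 1 k 1 .eA2a = 5 * A₂ := by
    rw [hA₂, hΘ]
    simp only [PExpr.eval_add, PExpr.eval_sub, PExpr.eval_mul, PExpr.eval_ofNat, PExpr.eval,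
      PExpr.ey, PExpr.eC, PExpr.eC1, PExpr.eT, PExpr.eT', PExpr.ebba, PExpr.ema, PExpr.eZa,
      PExpr.eA2a, PExpr.eA1a, PExpr.eGa, PExpr.eB0a, PExpr.eH1a, PExpr.eB1a]
    ring
  have e1 : PExpr.eval r 1 k 1 .eA1a = 100 * A₁ := by
    rw [hA₁, hΘ]
    simp only [PExpr.eval_add, PExpr.eval_sub, PExpr.eval_mul, PExpr.eval_ofNat, PExpr.eval,
      PExpr.ey, PExpr.eC, PExpr.eC1, PExpr.eT, PExpr.eT', PExpr.ebba, PExpr.ema, PExpr.eZa,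
      PExpr.eA2a, PExpr.eA1a, PExpr.eGa, PExpr.eB0a, PExpr.eH1a, PExpr.eB1a]
    ring
  have eG : PExpr.eval r 1 k 1 .eGa = 10000 * (4 * A₂ * α₀ - A₁ ^ 2) := by
    simp only [PExpr.eGa, PExpr.eval_mul, PExpr.eval_sub, e1, e2]
    rw [hα₀, hΘ]
    simp only [PExpr.eval_mul, PExpr.eval_sub, PExpr.eval_ofNat, PExpr.eval, PExpr.ebba, PExpr.ey]
    ring
  have e0 : PExpr.eval r 1 k 1 .eB0a * (k ^ 2 * r) = 5 * (α₀ - k ^ 2 * A₂) := by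
    rw [hA₂, hα₀, hΘ]
    simp only [PExpr.eval_add, PExpr.eval_sub, PExpr.eval_mul, PExpr.eval_ofNat, PExpr.eval,
      PExpr.ey, PExpr.eC, PExpr.eC1, PExpr.eT, PExpr.eT', PExpr.ebba, PExpr.ema, PExpr.eZa,
      PExpr.eA2a, PExpr.eA1a, PExpr.eGa, PExpr.eB0a, PExpr.eH1a, PExpr.eB1a]
    ring
  have eH : PExpr.eval r 1 k 1 .eH1a * r
      = 100 * (A₁ + 2 * k * A₂ - (1 + Θ) * (1 - 2 * k) ^ 2) := by
    rw [hA₁, hA₂, hΘ]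
    simp only [PExpr.eval_add, PExpr.eval_sub, PExpr.eval_mul, PExpr.eval_ofNat, PExpr.eval,
      PExpr.ey, PExpr.eC, PExpr.eC1, PExpr.eT, PExpr.eT', PExpr.ebba, PExpr.ema, PExpr.eZa,
      PExpr.eA2a, PExpr.eA1a, PExpr.eGa, PExpr.eB0a, PExpr.eH1a, PExpr.eB1a]
    ring
  have eB : PExpr.eval r 1 k 1 .eB1a = 100 * (A₁ + 2 * k * A₂) := by
    rw [hA₁, hA₂, hΘ]
    simp only [PExpr.eval_add, PExpr.eval_sub, PExpr.eval_mul, PExpr.eval_ofNat, PExpr.eval,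
      PExpr.ey, PExpr.eC, PExpr.eC1, PExpr.eT, PExpr.eT', PExpr.ebba, PExpr.ema, PExpr.eZa,
      PExpr.eA2a, PExpr.eA1a, PExpr.eGa, PExpr.eB0a, PExpr.eH1a, PExpr.eB1a]
    ring
  have eC : PExpr.eval r 1 k 1 .eC = -(4 * (1 - r) * (1 - k) - k ^ 2 * r) := by
    simp only [PExpr.eval_sub, PExpr.eval_mul, PExpr.eval_ofNat, PExpr.eval, PExpr.ey, PExpr.eC]
    ring
  -- completing the square in the cubic part leaves a quadratic polynomial
  suffices h : 0 < A₂ * σ ^ 2 + A₁ * σ + α₀ by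
    have h1 : 0 ≤ r ^ 2 * σ * (σ - (17 / 10 - r)) ^ 2 := by positivity
    have h2 := add_pos_of_nonneg_of_pos h1 h
    rw [hA₂, hA₁, hα₀] at h2
    refine lt_of_lt_of_eq h2 ?_
    ring
  clear hA₂ hA₁
  have hkr : 0 < k ^ 2 * r := by positivity
  simp only [groupsa, List.mem_cons, List.not_mem_nil, or_false] at hg
  rcases hg with rfl | rfl | rfl | rfl | rfl <;>
    simp only [List.mem_cons, List.not_mem_nil, or_false, forall_eq_or_imp, forall_eq] at hpos
  · rw [e2, eG] at hpos
    exact quadratic_pos hr1 hσ hα₀ (.inl ⟨by linarith only [hpos.1], by linarith only [hpos.2]⟩)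
  · rw [e2, eB] at hpos
    have h0 := mul_pos hpos.2.1 hkr
    rw [e0] at h0
    exact quadratic_pos hr1 hσ hα₀ (.inr (.inl ⟨by linarith only [hpos.1],
      by linarith only [h0], by linarith only [hpos.2.2]⟩))
  · rw [e2] at hpos
    have h0 := mul_pos hpos.2.1 hkr
    have h1 := mul_pos hpos.2.2 hr
    rw [e0] at h0
    rw [eH] at h1
    exact quadratic_pos hr1 hσ hα₀ (.inr (.inr (.inl ⟨by linarith only [hpos.1],
      by linarith only [h0], by linarith only [h1]⟩)))
  · rw [eC] at hpos
    linarith only [hpos, hC]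
  · rw [e2, e1] at hpos
    have h0 : 0 < α₀ := by
      have h1 : 0 < 1 - r := by linarith only [hr1]
      have h2 : 0 < 1 + Θ := by linarith only [hr1, hΘ]
      rw [hα₀]; positivity
    exact quadratic_pos hr1 hσ hα₀ (.inr (.inr (.inr ⟨by linarith only [hpos.1],
      by linarith only [hpos.2], h0⟩)))

/-- Positivity of the cubic for `Θ = 4 - 8 * k * r`. -/
lemma cubic_pos_b {r k σ Θ : ℝ} (hr : 0 < r) (hr1 : r < 1) (hk : 0 < k) (hk1 : k < 1)
    (hk2 : 1 / 2 ≤ k) (hC : 0 < 4 * (1 - r) * (1 - k) - k ^ 2 * r) (hσ : 0 < σ)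
    (hΘ : Θ = 4 - 8 * k * r) :
    0 < r ^ 2 * σ ^ 3
      + ((1 + Θ) * (1 - 2 * r) + r ^ 2 * (1 / 2 * k * Θ * (1 + r) + k ^ 2 * (4 - 3 * r)
        - 4 * k * (1 - r))) * σ ^ 2
      + ((1 + Θ) * (1 - 6 * k + 4 * k ^ 2 + r * (8 * k - 7 * k ^ 2) - 4 * r ^ 2 * k * (1 - k))
        - 1 / 2 * r ^ 2 * k * Θ * (4 * (1 - r) * (1 - k) - k ^ 2 * r)) * σ
      + (1 + Θ) * ((1 - r) * k ^ 2) := by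
  obtain ⟨g, hg, hpos⟩ : ∃ g ∈ groupsb, ∀ e ∈ g, 0 < e.eval r 1 k 1 := by
    rcases lt_or_ge r (1 / 8) with h8 | h8
    · exact schemeLowb.check_sound (by norm_num) checkLowb (by norm_num; linarith)
        (by norm_num; linarith) (by norm_num; linarith) (by norm_num; linarith)
    · exact schemeHighb.check_sound (by norm_num) checkHighb (by norm_num; linarith)
        (by norm_num; linarith) (by norm_num; linarith) (by norm_num; linarith)
  obtain ⟨A₂, hA₂⟩ : ∃ A₂, A₂ =
      ((1 + Θ) * (1 - 2 * r) + r ^ 2 * (1 / 2 * k * Θ * (1 + r) + k ^ 2 * (4 - 3 * r)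
    - 4 * k * (1 - r)) + 2 * (8 / 5 - r) * r ^ 2) := ⟨_, rfl⟩
  obtain ⟨A₁, hA₁⟩ : ∃ A₁, A₁ =
      ((1 + Θ) * (1 - 6 * k + 4 * k ^ 2 + r * (8 * k - 7 * k ^ 2) - 4 * r ^ 2 * k * (1 - k))
    - 1 / 2 * r ^ 2 * k * Θ * (4 * (1 - r) * (1 - k) - k ^ 2 * r) - (8 / 5 - r) ^ 2 * r ^ 2) := ⟨_, rfl⟩
  obtain ⟨α₀, hα₀⟩ : ∃ α₀, α₀ = (1 + Θ) * ((1 - r) * k ^ 2) := ⟨_, rfl⟩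
  have e2 : PExpr.eval r 1 k 1 .eA2b = 5 * A₂ := by
    rw [hA₂, hΘ]
    simp only [PExpr.eval_add, PExpr.eval_sub, PExpr.eval_mul, PExpr.eval_ofNat, PExpr.eval,
      PExpr.ey, PExpr.eC, PExpr.eC1, PExpr.eT, PExpr.eT', PExpr.ebbb, PExpr.emb, PExpr.eZb,
      PExpr.eA2b, PExpr.eA1b, PExpr.eGb, PExpr.eB0b, PExpr.eH1b, PExpr.eB1b, PExpr.ehb]
    ring
  have e1 : PExpr.eval r 1 k 1 .eA1b = 25 * A₁ := by
    rw [hA₁, hΘ]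
    simp only [PExpr.eval_add, PExpr.eval_sub, PExpr.eval_mul, PExpr.eval_ofNat, PExpr.eval,
      PExpr.ey, PExpr.eC, PExpr.eC1, PExpr.eT, PExpr.eT', PExpr.ebbb, PExpr.emb, PExpr.eZb,
      PExpr.eA2b, PExpr.eA1b, PExpr.eGb, PExpr.eB0b, PExpr.eH1b, PExpr.eB1b, PExpr.ehb]
    ring
  have eG : PExpr.eval r 1 k 1 .eGb = 625 * (4 * A₂ * α₀ - A₁ ^ 2) := by
    simp only [PExpr.eGb, PExpr.eval_mul, PExpr.eval_sub, e1, e2]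
    rw [hα₀, hΘ]
    simp only [PExpr.eval_mul, PExpr.eval_sub, PExpr.eval_ofNat, PExpr.eval, PExpr.ebbb, PExpr.ey]
    ring
  have e0 : PExpr.eval r 1 k 1 .eB0b * (k ^ 2 * r) = 5 * (α₀ - k ^ 2 * A₂) := by
    rw [hA₂, hα₀, hΘ]
    simp only [PExpr.eval_add, PExpr.eval_sub, PExpr.eval_mul, PExpr.eval_ofNat, PExpr.eval,
      PExpr.ey, PExpr.eC, PExpr.eC1, PExpr.eT, PExpr.eT', PExpr.ebbb, PExpr.emb, PExpr.eZb,
      PExpr.eA2b, PExpr.eA1b, PExpr.eGb, PExpr.eB0b, PExpr.eH1b, PExpr.eB1b, PExpr.ehb]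
    ring
  have eH : PExpr.eval r 1 k 1 .eH1b * r
      = 25 * (A₁ + 2 * k * A₂ - (1 + Θ) * (1 - 2 * k) ^ 2) := by
    rw [hA₁, hA₂, hΘ]
    simp only [PExpr.eval_add, PExpr.eval_sub, PExpr.eval_mul, PExpr.eval_ofNat, PExpr.eval,
      PExpr.ey, PExpr.eC, PExpr.eC1, PExpr.eT, PExpr.eT', PExpr.ebbb, PExpr.emb, PExpr.eZb,
      PExpr.eA2b, PExpr.eA1b, PExpr.eGb, PExpr.eB0b, PExpr.eH1b, PExpr.eB1b, PExpr.ehb]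
    ring
  have eB : PExpr.eval r 1 k 1 .eB1b = 25 * (A₁ + 2 * k * A₂) := by
    rw [hA₁, hA₂, hΘ]
    simp only [PExpr.eval_add, PExpr.eval_sub, PExpr.eval_mul, PExpr.eval_ofNat, PExpr.eval,
      PExpr.ey, PExpr.eC, PExpr.eC1, PExpr.eT, PExpr.eT', PExpr.ebbb, PExpr.emb, PExpr.eZb,
      PExpr.eA2b, PExpr.eA1b, PExpr.eGb, PExpr.eB0b, PExpr.eH1b, PExpr.eB1b, PExpr.ehb]
    ring
  have eC : PExpr.eval r 1 k 1 .eC = -(4 * (1 - r) * (1 - k) - k ^ 2 * r) := by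
    simp only [PExpr.eval_sub, PExpr.eval_mul, PExpr.eval_ofNat, PExpr.eval, PExpr.ey, PExpr.eC]
    ring
  -- completing the square in the cubic part leaves a quadratic polynomial
  suffices h : 0 < A₂ * σ ^ 2 + A₁ * σ + α₀ by
    have h1 : 0 ≤ r ^ 2 * σ * (σ - (8 / 5 - r)) ^ 2 := by positivity
    have h2 := add_pos_of_nonneg_of_pos h1 h
    rw [hA₂, hA₁, hα₀] at h2
    refine lt_of_lt_of_eq h2 ?_
    ring
  clear hA₂ hA₁
  have hkr : 0 < k ^ 2 * r := by positivity
  simp only [groupsb, List.mem_cons, List.not_mem_nil, or_false] at hg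
  rcases hg with rfl | rfl | rfl | rfl <;>
    simp only [List.mem_cons, List.not_mem_nil, or_false, forall_eq_or_imp, forall_eq] at hpos
  · rw [e2, eG] at hpos
    exact quadratic_pos hr1 hσ hα₀ (.inl ⟨by linarith only [hpos.1], by linarith only [hpos.2]⟩)
  · rw [e2, eB] at hpos
    have h0 := mul_pos hpos.2.1 hkr
    rw [e0] at h0
    exact quadratic_pos hr1 hσ hα₀ (.inr (.inl ⟨by linarith only [hpos.1],
      by linarith only [h0], by linarith only [hpos.2.2]⟩))
  · rw [e2] at hpos
    have h0 := mul_pos hpos.2.1 hkr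
    have h1 := mul_pos hpos.2.2 hr
    rw [e0] at h0
    rw [eH] at h1
    exact quadratic_pos hr1 hσ hα₀ (.inr (.inr (.inl ⟨by linarith only [hpos.1],
      by linarith only [h0], by linarith only [h1]⟩)))
  · rw [eC] at hpos
    linarith only [hpos, hC]

end ObserverISS

namespace ObserverISS

/-- The cubic in `S` produced by the S-procedure below is positive for both admissible choices
of `Θ`; scaling `c = k r`, `S = σ r²` reduces it to the two-parameter cubics. -/
lemma cubic_pos {r c S Θ : ℝ} (hr : 0 < r) (hr1 : r < 1) (hc : 0 < c) (hcr : c < r)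
    (hC : c ^ 2 < 4 * (1 - r) * (r - c)) (hS : 0 < S)
    (hΘ : Θ = if 2 * c < r then 4 * (1 - r) else 4 - 8 * c) :
    0 < S ^ 3 + S ^ 2 * ((1 + Θ) * (1 - 2 * r) + c * r * Θ * (1 - (1 - r) / 2)
        + c ^ 2 * (1 + 3 * (1 - r)) - 4 * c * (1 - r) * r)
      + S * ((1 + Θ) * ((r - c) ^ 2 + c ^ 2 * (1 - r) * (4 * (1 - r) - 1)
          - 4 * c * r * (1 - r) ^ 2)
        - 1 / 2 * c * r ^ 2 * Θ * (4 * (1 - r) * (r - c) - c ^ 2))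
      + (1 + Θ) * r ^ 2 * (1 - r) * c ^ 2 := by
  obtain ⟨k, rfl⟩ : ∃ k, c = k * r := ⟨c / r, by field_simp⟩
  obtain ⟨σ, rfl⟩ : ∃ σ, S = σ * r ^ 2 := ⟨S / r ^ 2, by field_simp⟩
  have hk : 0 < k := pos_of_mul_pos_left hc hr.le
  have hk1 : k < 1 := by
    by_contra h
    nlinarith
  have hσ : 0 < σ := pos_of_mul_pos_left hS (by positivity)
  have hC' : 0 < 4 * (1 - r) * (1 - k) - k ^ 2 * r := by
    have : 0 < r * (4 * (1 - r) * (1 - k) - k ^ 2 * r) := by nlinarith only [hC]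
    exact pos_of_mul_pos_right this hr.le
  by_cases h : 2 * (k * r) < r
  · rw [if_pos h] at hΘ
    have hk2 : k < 1 / 2 := by
      by_contra h'
      nlinarith
    refine lt_of_lt_of_eq (mul_pos (pow_pos hr 4) (cubic_pos_a hr hr1 hk hk2 hC' hσ hΘ)) ?_
    ring
  · rw [if_neg h] at hΘ
    have hk2 : 1 / 2 ≤ k := by
      by_contra h'
      nlinarith
    refine lt_of_lt_of_eq (mul_pos (pow_pos hr 4)
      (cubic_pos_b (Θ := Θ) hr hr1 hk hk1 hk2 hC' hσ (by rw [hΘ]; ring))) ?_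
    ring

/-- The leading coefficient in the S-procedure is positive. -/
lemma lead_pos {r S Θ : ℝ} (hr : 0 < r) (hS : 0 < S) (hΘ0 : 0 < Θ)
    (hΘr : Θ ≤ 4 * (1 - r)) : 0 < S ^ 2 + (1 + Θ) * ((1 - 2 * r) * S + r ^ 2) := by
  rcases le_total r (1 / 2) with h | h
  · have : 0 ≤ 1 - 2 * r := by linarith
    positivity
  · -- the discriminant in `S` is negative
    have h1 : (1 + Θ) * (2 * r - 1) ^ 2 < 4 * r ^ 2 := by
      have h2 : (1 + Θ) * (2 * r - 1) ^ 2 ≤ (5 - 4 * r) * (2 * r - 1) ^ 2 :=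
        mul_le_mul_of_nonneg_right (by linarith) (sq_nonneg _)
      nlinarith [mul_nonneg (sub_nonneg.2 h) (sq_nonneg (4 * r - 3)),
        mul_nonneg (sub_nonneg.2 h) (sq_nonneg (r - 1))]
    have h3 : 0 < (1 + Θ) * (4 * r ^ 2 - (1 + Θ) * (2 * r - 1) ^ 2) :=
      mul_pos (by linarith) (by linarith)
    have h4 : 4 * (S ^ 2 + (1 + Θ) * ((1 - 2 * r) * S + r ^ 2))
      = (2 * S - (1 + Θ) * (2 * r - 1)) ^ 2
        + (1 + Θ) * (4 * r ^ 2 - (1 + Θ) * (2 * r - 1) ^ 2) := by ring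
    have h5 := sq_nonneg (2 * S - (1 + Θ) * (2 * r - 1))
    linarith only [h3, h4, h5]

/-- The frequency inequality for the two leading integrators, in real coordinates: `A` and `b`
describe the response of the tail of the chain, and `hJ` is what the matrix inequality says
about it. -/
lemma freq_core {r c S A b e : ℝ} (hr : 0 < r) (hr1 : r < 1) (hc : 0 < c) (hcr : c < r)
    (hC : c ^ 2 < 4 * (1 - r) * (r - c)) (hS : 0 < S)
    (hJ : A ^ 2 + S * (1 - b) ^ 2 + (1 - r) * c ^ 2 - 2 * (1 - r) * (2 * r - c) * A ≤ 0)
    (he1 : 1 < 4 * (1 - r) * e) (he2 : 1 < 4 * (1 - 2 * c) * e) :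
    0 < (1 + e) * (((r - S) * A - S * b + c * S) ^ 2 + S * (A + (r - S) * b - c) ^ 2)
      - (S * (r * A - S * b) * (A + (r - S) * b - c)
        - S * (A + r * b - c) * ((r - S) * A - S * b + c * S)) := by
  obtain ⟨Θ, hΘ⟩ : ∃ Θ, Θ = if 2 * c < r then 4 * (1 - r) else 4 - 8 * c := ⟨_, rfl⟩
  have hL := cubic_pos hr hr1 hc hcr hC hS hΘ
  have hc2 : c < 1 / 2 := by nlinarith only [hC, sq_nonneg (2 * r - 1 - c)]
  have hΘe : 1 < Θ * e := by
    split_ifs at hΘ <;> rw [hΘ] <;> linarith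
  have hΘ0 : 0 < Θ := by split_ifs at hΘ <;> linarith
  have hΘr : Θ ≤ 4 * (1 - r) := by split_ifs at hΘ <;> linarith
  clear hΘ
  have ha := lead_pos hr hS hΘ0 hΘr
  -- the S-procedure: a multiple of `hJ` added to the target is a positive quadratic
  obtain ⟨y, hy⟩ : ∃ y, y = 1 - r := ⟨_, rfl⟩
  have hy0 : 0 < y := by linarith
  obtain ⟨q, hq⟩ : ∃ q, q = Θ * c * r * S / 2 := ⟨_, rfl⟩
  have hq0 : 0 < q := by rw [hq]; positivity
  obtain ⟨l, hl⟩ : ∃ l, l = q + y * (S ^ 2 + (1 + Θ) * ((1 - 2 * r) * S + r ^ 2)) := ⟨_, rfl⟩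
  have hl0 : 0 < l := by rw [hl]; positivity
  have hH : 0 < (1 + Θ) * (((r - S) * A - S * b + c * S) ^ 2 + S * (A + (r - S) * b - c) ^ 2)
      - Θ * (S * (r * A - S * b) * (A + (r - S) * b - c)
        - S * (A + r * b - c) * ((r - S) * A - S * b + c * S)) := by
    obtain ⟨H, hHdef⟩ : ∃ H, H = (1 + Θ) * (((r - S) * A - S * b + c * S) ^ 2
        + S * (A + (r - S) * b - c) ^ 2)
      - Θ * (S * (r * A - S * b) * (A + (r - S) * b - c)
        - S * (A + r * b - c) * ((r - S) * A - S * b + c * S)) := ⟨_, rfl⟩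
    rw [← hHdef]
    have key : l * (q * (A ^ 2 + S * (1 - b) ^ 2 + (1 - r) * c ^ 2
          - 2 * (1 - r) * (2 * r - c) * A) + y * H)
        = (l * A - (y * c * S * (y + S + Θ * y) + q * y * (2 * r - c))) ^ 2
          + S * (l * b - (q + y * c * r * (2 * Θ + 2 - Θ * S) / 2)) ^ 2
          + q * y * (S ^ 3 + S ^ 2 * ((1 + Θ) * (1 - 2 * r) + c * r * Θ * (1 - (1 - r) / 2)
        + c ^ 2 * (1 + 3 * (1 - r)) - 4 * c * (1 - r) * r)
      + S * ((1 + Θ) * ((r - c) ^ 2 + c ^ 2 * (1 - r) * (4 * (1 - r) - 1)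
          - 4 * c * r * (1 - r) ^ 2)
        - 1 / 2 * c * r ^ 2 * Θ * (4 * (1 - r) * (r - c) - c ^ 2))
      + (1 + Θ) * r ^ 2 * (1 - r) * c ^ 2) := by
      rw [hHdef, hl, hq, hy]
      ring
    have h1 := mul_pos (mul_pos hq0 hy0) hL
    have h2 := sq_nonneg (l * A - (y * c * S * (y + S + Θ * y) + q * y * (2 * r - c)))
    have h3 := mul_nonneg hS.le
      (sq_nonneg (l * b - (q + y * c * r * (2 * Θ + 2 - Θ * S) / 2)))
    have h4 := pos_of_mul_pos_right (lt_of_lt_of_eq (by linarith only [h1, h2, h3]) key.symm) hl0.le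
    have h5 := mul_nonpos_of_nonneg_of_nonpos hq0.le hJ
    exact pos_of_mul_pos_right (lt_of_lt_of_le h4 (by linarith only [h5])) hy0.le
  obtain ⟨Q, hQ⟩ : ∃ Q, Q = ((r - S) * A - S * b + c * S) ^ 2 + S * (A + (r - S) * b - c) ^ 2 :=
    ⟨_, rfl⟩
  have hQ0 : 0 ≤ Q := by rw [hQ]; positivity
  rw [← hQ] at hH ⊢
  have h6 : 0 ≤ (Θ * e - 1) * Q := mul_nonneg (by linarith) hQ0
  refine pos_of_mul_pos_right (a := Θ) ?_ hΘ0.le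
  rw [mul_sub]
  linarith only [hH, h6]

end ObserverISS

namespace ObserverISS

open Finset Complex
open scoped ComplexConjugate

/-! ### The matrix inequality and its consequences for the chain -/

/-- The quadratic form of the reversed chain of integrators, in the partial sums `W j` of the
chain differences; `W 0 = 0` is understood. -/
def chainForm (n : ℕ) (c W : ℕ → ℝ) : ℝ :=
  ∑ j ∈ range n, (W (j + 1) - W j) * (c (j + 1) * W (j + 1) - c (j + 2) * W (j + 2))

/-- The linear matrix inequality of the gain condition, written for the partial sums. -/
def ChainLMI (n : ℕ) (c : ℕ → ℝ) (δ : ℝ) : Prop :=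
  ∀ (w : ℝ) (W : ℕ → ℝ), W 0 = 0 → (w ≠ 0 ∨ ∃ j, 1 ≤ j ∧ j ≤ n ∧ W j ≠ 0) →
    0 < chainForm n c W + c n * w * (W n - W (n - 1)) + δ * w ^ 2 - c 1 * w * W 1

/-- Complex version of the matrix inequality with `w = 0`. -/
lemma ChainLMI.re_pos {n : ℕ} {c : ℕ → ℝ} {δ : ℝ} (h : ChainLMI n c δ) {W : ℕ → ℂ}
    (h0 : W 0 = 0) (hW : ∃ j, 1 ≤ j ∧ j ≤ n ∧ W j ≠ 0) :
    0 < (∑ j ∈ range n, conj (W (j + 1) - W j) *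
      (c (j + 1) * W (j + 1) - c (j + 2) * W (j + 2))).re := by
  have key : (∑ j ∈ range n, conj (W (j + 1) - W j) *
      (c (j + 1) * W (j + 1) - c (j + 2) * W (j + 2))).re
      = chainForm n c (fun j => (W j).re) + chainForm n c (fun j => (W j).im) := by
    rw [chainForm, chainForm, re_sum, ← sum_add_distrib]
    refine sum_congr rfl fun j _ => ?_
    simp
    ring
  have pos : ∀ V : ℕ → ℝ, V 0 = 0 → (∃ j, 1 ≤ j ∧ j ≤ n ∧ V j ≠ 0) → 0 < chainForm n c V :=
    fun V hV hV' => by simpa using h 0 V hV (.inr hV')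
  have nonneg : ∀ V : ℕ → ℝ, V 0 = 0 → 0 ≤ chainForm n c V := by
    intro V hV
    by_cases hne : ∃ j, 1 ≤ j ∧ j ≤ n ∧ V j ≠ 0
    · exact (pos V hV hne).le
    · push Not at hne
      refine (sum_eq_zero fun j hj => ?_).ge
      rw [mem_range] at hj
      have h1 := hne (j + 1) (by omega) (by omega)
      have h2 : V j = 0 := by
        rcases Nat.eq_zero_or_pos j with rfl | hj0
        · exact hV
        · exact hne j hj0 (by omega)
      simp [h1, h2]
  rw [key]
  obtain ⟨j, hj1, hj2, hj⟩ := hW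
  have hre := nonneg (fun j => (W j).re) (by simp [h0])
  have him := nonneg (fun j => (W j).im) (by simp [h0])
  by_cases hj0 : (W j).re = 0
  · have hj' : (W j).im ≠ 0 := fun h' => hj (Complex.ext hj0 h')
    exact add_pos_of_nonneg_of_pos hre
      (pos (fun j => (W j).im) (by simp [h0]) ⟨j, hj1, hj2, hj'⟩)
  · exact add_pos_of_pos_of_nonneg
      (pos (fun j => (W j).re) (by simp [h0]) ⟨j, hj1, hj2, hj0⟩) him

/-- The chain form of the sequence `0, 1, 1 + t, 1 + t, …`. -/
lemma chainForm_step {n : ℕ} (hn : 2 ≤ n) (c : ℕ → ℝ) (hc1 : c 1 = 1) (t : ℝ) :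
    chainForm n c (fun j => if j = 0 then 0 else if j = 1 then 1 else 1 + t)
      = 1 - c 2 + c 2 * t ^ 2 - c 3 * t * (1 + t) := by
  obtain ⟨m, rfl⟩ : ∃ m, n = m + 2 := ⟨n - 2, by omega⟩
  rw [chainForm, sum_range_succ', sum_range_succ', sum_eq_zero]
  · simp [hc1]
    ring
  · intro j _
    simp

/-- Scalar consequences of the matrix inequality. -/
lemma ChainLMI.scalars {n : ℕ} {c : ℕ → ℝ} {δ : ℝ} (h : ChainLMI n c δ) (hn : 2 ≤ n)
    (hc1 : c 1 = 1) (hδ : 0 < δ) :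
    (∀ t, 0 < 1 - c 2 + c 2 * t ^ 2 - c 3 * t * (1 + t)) ∧ 1 < 4 * (1 - c 2) * δ ∧
      (3 ≤ n → 1 < 4 * (1 - 2 * c 3) * δ) := by
  have hw : ∀ a : ℝ, (∀ w : ℝ, w ≠ 0 → 0 < a + δ * w ^ 2 - w) → 1 < 4 * a * δ := by
    intro a ha
    have h1 := ha (1 / (2 * δ)) (by positivity)
    have h2 : a + δ * (1 / (2 * δ)) ^ 2 - 1 / (2 * δ) = (4 * a * δ - 1) / (4 * δ) := by
      field_simp
      ring
    rw [h2] at h1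
    have := (div_pos_iff_of_pos_right (by positivity)).1 h1
    linarith
  refine ⟨fun t => ?_, hw _ fun w hw0 => ?_, fun hn3 => hw _ fun w hw0 => ?_⟩
  · have h1 := h 0 (fun j => if j = 0 then 0 else if j = 1 then 1 else 1 + t) (by simp)
      (.inr ⟨1, le_rfl, by omega, by simp⟩)
    rw [chainForm_step hn c hc1] at h1
    simpa using h1
  · have h1 := h w (fun j => if j = 0 then 0 else if j = 1 then 1 else 1 + 0) (by simp) (.inl hw0)
    rw [chainForm_step hn c hc1] at h1
    have hn0 : n ≠ 0 := by omega
    have hn1 : n - 1 ≠ 0 := by omega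
    simpa [hc1, hn0, hn1] using h1
  · have h1 := h w (fun j => if j = 0 then 0 else if j = 1 then 1 else 1 + 1) (by simp) (.inl hw0)
    rw [chainForm_step hn c hc1] at h1
    have hn0 : n ≠ 0 := by omega
    have hn1 : n - 1 ≠ 0 := by omega
    have hn2 : n ≠ 1 := by omega
    have hn3 : n - 1 ≠ 1 := by omega
    simp only [hc1, hn0, hn1, hn2, hn3, if_false, sub_self, mul_zero, if_true, one_ne_zero] at h1
    linarith

end ObserverISS

namespace ObserverISS

open Finset Complex
open scoped ComplexConjugate

/-! ### The frequency inequality -/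

/-- The head terms that survive in the complex chain form at the test sequence
`a, b, z * U 3, z * U 4, …`, where `U` solves the chain equations at frequency `ω`: the
contribution of the other indices is purely imaginary. -/
lemma chain_test {n : ℕ} {c : ℕ → ℝ} {ω : ℝ} {U : ℕ → ℂ} (hn : 3 ≤ n) (hc1 : c 1 = 1)
    (hU : ∀ j < n, I * ω * (U (j + 1) - U j) = c (j + 2) * U (j + 2) - c (j + 1) * U (j + 1))
    (a b z : ℂ) (W : ℕ → ℂ)
    (hW : W = fun j => if j = 0 then 0 else if j = 1 then a else if j = 2 then b else z * U j) :
    (∑ j ∈ range n, conj (W (j + 1) - W j) *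
      (c (j + 1) * W (j + 1) - c (j + 2) * W (j + 2))).re
      = (conj a * (a - c 2 * b) + conj (b - a) * (c 2 * b - c 3 * (z * U 3))
        + conj (z * U 3 - b) * (z * (I * ω * (U 2 - U 3)))).re := by
  obtain ⟨m, rfl⟩ : ∃ m, n = m + 3 := ⟨n - 3, by omega⟩
  have tail : (∑ j ∈ range m, conj (W (j + 3 + 1) - W (j + 3)) *
      (c (j + 3 + 1) * W (j + 3 + 1) - c (j + 3 + 2) * W (j + 3 + 2))).re = 0 := by
    rw [re_sum]
    refine sum_eq_zero fun j hj => ?_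
    rw [mem_range] at hj
    have h1 := hU (j + 3) (by omega)
    have h2 : conj (W (j + 3 + 1) - W (j + 3)) *
        (c (j + 3 + 1) * W (j + 3 + 1) - c (j + 3 + 2) * W (j + 3 + 2))
        = -(I * ω) * (conj (z * (U (j + 3 + 1) - U (j + 3))) * (z * (U (j + 3 + 1) - U (j + 3)))) := by
      simp only [hW, Nat.add_eq_zero_iff, Nat.add_eq_right, Nat.reduceEqDiff]
      have e1 : j + 3 + 1 = j + 4 := rfl
      have e2 : j + 3 + 2 = j + 5 := rfl
      rw [e1, e2] at *
      simp
      linear_combination (z * (conj z * (conj (U (j + 4)) - conj (U (j + 3))))) * h1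
    rw [h2, ← normSq_eq_conj_mul_self]
    simp
  rw [sum_range_succ', sum_range_succ', sum_range_succ', add_re, add_re, add_re]
  simp only [add_assoc, Nat.reduceAdd] at tail ⊢
  rw [tail]
  have h2 := hU 2 (by omega)
  simp only [hW]
  simp only [Nat.reduceAdd, if_true, if_false, Nat.reduceEqDiff, OfNat.ofNat_ne_zero, one_ne_zero,
    hc1] at h2 ⊢
  rw [← add_re, ← add_re, zero_add]
  congr 1
  simp
  linear_combination (z * (conj z * conj (U 3) - conj b)) * h2

/-- The tail of the chain, seen through `K = (U 2 - U 3) / p` with `U 3 = I ω p`, lies in the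
disc cut out by the matrix inequality. -/
lemma tail_disc {n : ℕ} {c : ℕ → ℝ} {δ ω : ℝ} {U : ℕ → ℂ} (h : ChainLMI n c δ) (hn : 3 ≤ n)
    (hc1 : c 1 = 1) (hr : 0 < c 2) (hr1 : c 2 < 1)
    (hU : ∀ j < n, I * ω * (U (j + 1) - U j) = c (j + 2) * U (j + 2) - c (j + 1) * U (j + 1))
    (hω : ω ≠ 0) {p K : ℂ} (hp : p ≠ 0) (hU3 : U 3 = I * ω * p) (hU2 : U 2 - U 3 = K * p) :
    K.re ^ 2 + K.im ^ 2 + (1 - c 2) * c 3 ^ 2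
      - 2 * (1 - c 2) * (2 * c 2 - c 3) * K.re ≤ 0 := by
  have hω' : (ω : ℂ) ≠ 0 := by exact_mod_cast hω
  have hs : I * (ω : ℂ) ≠ 0 := mul_ne_zero I_ne_zero hω'
  have hy : 0 < 1 - c 2 := by linarith
  -- the minimizer of the head terms
  obtain ⟨a, ha⟩ : ∃ a : ℂ, a = ⟨K.re / (2 * (1 - c 2)), K.im / (2 * (1 - c 2))⟩ := ⟨_, rfl⟩
  obtain ⟨t, ht⟩ : ∃ t : ℂ, t = ⟨(c 3 + K.re) / (2 * c 2), K.im / (2 * c 2)⟩ := ⟨_, rfl⟩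
  obtain ⟨W, hW⟩ : ∃ W : ℕ → ℂ, W = fun j => if j = 0 then 0 else if j = 1 then a else
    if j = 2 then a + t else (I * ω * p)⁻¹ * U j := ⟨_, rfl⟩
  have hz : (I * (ω : ℂ) * p)⁻¹ * U 3 = 1 := by
    rw [hU3]
    exact inv_mul_cancel₀ (mul_ne_zero hs hp)
  have h1 := h.re_pos (W := W) (by simp [hW]) ⟨3, by omega, hn, by
    rw [hW]
    simpa using (hz ▸ one_ne_zero : (I * (ω : ℂ) * p)⁻¹ * U 3 ≠ 0)⟩
  rw [chain_test hn hc1 hU _ _ _ W hW, hz, hU2] at h1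
  have e : (I * (ω : ℂ) * p)⁻¹ * (I * ω * (K * p)) = K := by
    field_simp
  rw [e] at h1
  have e2 : (conj a * (a - c 2 * (a + t)) + conj (a + t - a) * (c 2 * (a + t) - c 3 * 1)
      + conj (1 - (a + t)) * K).re
      = -(K.re ^ 2 + K.im ^ 2 + (1 - c 2) * c 3 ^ 2
      - 2 * (1 - c 2) * (2 * c 2 - c 3) * K.re) / (4 * (1 - c 2) * c 2) := by
    have hne : c 2 ≠ 0 := hr.ne'
    have hne' : 1 - c 2 ≠ 0 := hy.ne'
    simp [ha, ht]
    field_simp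
    ring
  rw [e2] at h1
  have := (div_pos_iff_of_pos_right (by positivity)).1 h1
  linarith

/-- The frequency inequality for a chain of length two. -/
lemma freq_two {c : ℕ → ℝ} {δ ω : ℝ} {U : ℕ → ℂ} (hc1 : c 1 = 1) (hr : 0 < c 2)
    (hc3 : c 3 = 0) (hr1 : c 2 < 1) (he : 1 < 4 * (1 - c 2) * δ)
    (hU : ∀ j < 2, I * ω * (U (j + 1) - U j) = c (j + 2) * U (j + 2) - c (j + 1) * U (j + 1))
    (hω : ω ≠ 0) (hne : ∃ j ≤ 2, U j ≠ 0) :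
    0 < (1 + δ) * normSq (U 0) - (conj (U 0) * U 1).re := by
  have hω' : (ω : ℂ) ≠ 0 := by exact_mod_cast hω
  have hs : I * (ω : ℂ) ≠ 0 := mul_ne_zero I_ne_zero hω'
  have h0 := hU 0 (by omega)
  have h1 := hU 1 (by omega)
  simp only [zero_add, Nat.reduceAdd, hc1, hc3, ofReal_one, ofReal_zero, one_mul, zero_mul,
    zero_sub] at h0 h1
  obtain ⟨p, hp⟩ : ∃ p, U 2 = I * ω * (I * ω * p) :=
    ⟨U 2 / (I * ω * (I * ω)), by field_simp⟩
  have hU1 : U 1 = (I * ω) * (I * ω + c 2) * p := by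
    apply mul_left_cancel₀ hs
    rw [hp] at h1
    linear_combination -h1
  have hU0 : U 0 = ((I * ω) ^ 2 + I * ω + c 2) * p := by
    apply mul_left_cancel₀ hs
    rw [hp, hU1] at h0
    linear_combination -h0
  have hp0 : p ≠ 0 := by
    rintro rfl
    obtain ⟨j, hj, hj'⟩ := hne
    interval_cases j <;> simp [hU0, hU1, hp] at hj'
  have e : (1 + δ) * normSq (U 0) - (conj (U 0) * U 1).re
      = normSq p * ((1 + δ) * ((c 2 - ω ^ 2) ^ 2 + ω ^ 2) - (ω ^ 2) ^ 2) := by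
    rw [hU0, hU1]
    simp [normSq_apply, pow_two]
    ring
  rw [e]
  refine mul_pos (normSq_pos.2 hp0) ?_
  have hS : 0 < ω ^ 2 := by positivity
  have h2 := lead_pos hr hS (Θ := 4 * (1 - c 2)) (by linarith) le_rfl
  obtain ⟨S, hS'⟩ : ∃ S, S = ω ^ 2 := ⟨_, rfl⟩
  rw [← hS'] at hS h2 ⊢
  have h3 : 0 ≤ (4 * (1 - c 2) * δ - 1) * ((c 2 - S) ^ 2 + S) :=
    mul_nonneg (by linarith) (by positivity)
  refine pos_of_mul_pos_right (a := 4 * (1 - c 2)) ?_ (by linarith)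
  linarith only [h2, h3]

/-- The frequency inequality for a chain with unit leading gain ratio. -/
lemma freq_unit {n : ℕ} {c : ℕ → ℝ} {δ ω : ℝ} {U : ℕ → ℂ} (h : ChainLMI n c δ) (hn : 2 ≤ n)
    (hc1 : c 1 = 1) (hδ : 0 < δ) (hc : ∀ j, 1 ≤ j → j ≤ n → 0 < c j) (hcn : c (n + 1) = 0)
    (hU : ∀ j < n, I * ω * (U (j + 1) - U j) = c (j + 2) * U (j + 2) - c (j + 1) * U (j + 1))
    (hne : ∃ j ≤ n, U j ≠ 0) :
    0 < (1 + δ) * normSq (U 0) - (conj (U 0) * U 1).re := by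
  obtain ⟨hq, he1, he2⟩ := h.scalars hn hc1 hδ
  have hr : 0 < c 2 := hc 2 (by omega) hn
  have hr1 : c 2 < 1 := by
    have := hq 0
    simp at this
    linarith
  by_cases hω : ω = 0
  · -- at frequency zero the chain is at rest
    subst hω
    have hz : ∀ j ≤ n, (c (j + 1) : ℂ) * U (j + 1) = c 1 * U 1 := by
      intro j
      induction j with
      | zero => intro _; rfl
      | succ j ih =>
        intro hj
        have h1 := hU j (by omega)
        simp only [ofReal_zero, mul_zero, zero_mul] at h1
        rw [← ih (by omega)]
        exact (sub_eq_zero.1 h1.symm)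
    have h1 : (c 1 : ℂ) * U 1 = 0 := by rw [← hz n le_rfl, hcn]; simp
    have hzero : ∀ j, 1 ≤ j → j ≤ n → U j = 0 := by
      intro j hj hjn
      obtain ⟨i, rfl⟩ : ∃ i, j = i + 1 := ⟨j - 1, by omega⟩
      have h2 := hz i (by omega)
      rw [h1] at h2
      exact (mul_eq_zero.1 h2).resolve_left (by exact_mod_cast (hc _ hj hjn).ne')
    have hU0 : U 0 ≠ 0 := by
      obtain ⟨j, hj, hj'⟩ := hne
      rcases Nat.eq_zero_or_pos j with rfl | hj0
      · exact hj'
      · exact absurd (hzero j hj0 hj) hj'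
    rw [hzero 1 le_rfl (by omega)]
    simp only [mul_zero, zero_re, sub_zero]
    have := normSq_pos.2 hU0
    positivity
  rcases Nat.lt_or_ge 2 n with hn3 | hn2
  swap
  · obtain rfl : n = 2 := by omega
    exact freq_two hc1 hr hcn hr1 he1 hU hω hne
  have hω' : (ω : ℂ) ≠ 0 := by exact_mod_cast hω
  have hs : I * (ω : ℂ) ≠ 0 := mul_ne_zero I_ne_zero hω'
  have h0 := hU 0 (by omega)
  have h1 := hU 1 (by omega)
  have h2 := hU 2 (by omega)
  simp only [zero_add, Nat.reduceAdd, hc1, ofReal_one, one_mul] at h0 h1 h2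
  obtain ⟨p, hp⟩ : ∃ p, U 3 = I * ω * p := ⟨U 3 / (I * ω), by field_simp⟩
  have hp0 : p ≠ 0 := by
    rintro rfl
    rw [mul_zero] at hp
    -- otherwise the tail of the chain alone would violate the matrix inequality
    have htail : ∀ j, 3 ≤ j → j ≤ n → U j = 0 := by
      intro j hj hjn
      by_contra hj0
      obtain ⟨W, hW⟩ : ∃ W : ℕ → ℂ, W = fun j => if j = 0 then 0 else if j = 1 then 0 else
        if j = 2 then 0 else 1 * U j := ⟨_, rfl⟩
      have h3 := h.re_pos (W := W) (by simp [hW])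
        ⟨j, by omega, hjn, by
          have e0 : j ≠ 0 := by omega
          have e1 : j ≠ 1 := by omega
          have e2 : j ≠ 2 := by omega
          simpa [hW, e0, e1, e2] using hj0⟩
      rw [chain_test hn3 hc1 hU _ _ _ W hW, hp] at h3
      simp at h3
    have hU4 : (c 4 : ℂ) * U 4 = 0 := by
      rcases Nat.lt_or_ge n 4 with h4 | h4
      · obtain rfl : n = 3 := by omega
        simp [hcn]
      · rw [htail 4 (by omega) h4, mul_zero]
    have hU2 : U 2 = 0 := by
      rw [hp, hU4] at h2
      simpa [hω] using h2
    have hU1 : U 1 = 0 := by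
      rw [hp, hU2] at h1
      simpa [hω] using h1
    have hU0 : U 0 = 0 := by
      rw [hU1, hU2] at h0
      simpa [hω] using h0
    obtain ⟨j, hj, hj'⟩ := hne
    apply hj'
    rcases Nat.lt_or_ge j 3 with h3 | h3
    · interval_cases j <;> assumption
    · exact htail j h3 hj
  obtain ⟨K, hK⟩ : ∃ K, U 2 - U 3 = K * p := ⟨(U 2 - U 3) / p, by field_simp⟩
  have hJ := tail_disc h hn3 hc1 hr hr1 hU hω hp0 hp hK
  obtain ⟨b, hb⟩ : ∃ b : ℝ, K.im = ω * (b - 1) := ⟨K.im / ω + 1, by field_simp; ring⟩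
  obtain ⟨A, hA⟩ : ∃ A : ℝ, K.re = A := ⟨_, rfl⟩
  have hKe : K = A + I * ω * (b - 1) := by
    apply Complex.ext <;> simp [hA, hb]
  obtain ⟨g, rfl⟩ : ∃ g, p = (I * ω) ^ 2 * g := ⟨p / (I * ω) ^ 2, by field_simp⟩
  have hg : g ≠ 0 := right_ne_zero_of_mul hp0
  have hU2 : U 2 = (I * ω) ^ 2 * (A + I * ω * b) * g := by
    rw [hp, hKe] at hK
    linear_combination hK
  have hU1 : U 1 = I * ω * ((I * ω + c 2) * (A + I * ω * b) - c 3 * (I * ω)) * g := by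
    apply mul_left_cancel₀ hs
    rw [hp, hU2] at h1
    linear_combination -h1
  have hU0 : U 0 = (((I * ω) ^ 2 + I * ω + c 2) * (A + I * ω * b)
      - c 3 * (I * ω) * (I * ω + 1)) * g := by
    apply mul_left_cancel₀ hs
    rw [hU1, hU2] at h0
    linear_combination -h0
  have hc3 : 0 < c 3 := hc 3 (by omega) hn3
  have hcr : c 3 < c 2 := by
    by_contra hle
    have h3 := hq ((1 - c 2) / c 3)
    have h4 : 1 - c 2 + c 2 * ((1 - c 2) / c 3) ^ 2 - c 3 * ((1 - c 2) / c 3)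
        * (1 + (1 - c 2) / c 3) = (c 2 - c 3) * ((1 - c 2) / c 3) ^ 2 := by
      field_simp
      ring
    rw [h4] at h3
    have h5 : 0 ≤ ((1 - c 2) / c 3) ^ 2 := by positivity
    nlinarith
  have hC : c 3 ^ 2 < 4 * (1 - c 2) * (c 2 - c 3) := by
    have h3 := hq (c 3 / (2 * (c 2 - c 3)))
    have hd : 0 < c 2 - c 3 := by linarith
    have h4 : 1 - c 2 + c 2 * (c 3 / (2 * (c 2 - c 3))) ^ 2 - c 3 * (c 3 / (2 * (c 2 - c 3)))
        * (1 + c 3 / (2 * (c 2 - c 3)))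
        = (4 * (1 - c 2) * (c 2 - c 3) - c 3 ^ 2) / (4 * (c 2 - c 3)) := by
      field_simp
      ring
    rw [h4] at h3
    have := (div_pos_iff_of_pos_right (by positivity)).1 h3
    linarith
  have hS : 0 < ω ^ 2 := by positivity
  rw [hA, hb] at hJ
  have hcore := freq_core (A := A) (b := b) hr hr1 hc3 hcr hC hS (by linarith only [hJ]) he1 (he2 hn3)
  have e : (1 + δ) * normSq (U 0) - (conj (U 0) * U 1).re
      = normSq g * ((1 + δ) * (((c 2 - ω ^ 2) * A - ω ^ 2 * b + c 3 * ω ^ 2) ^ 2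
          + ω ^ 2 * (A + (c 2 - ω ^ 2) * b - c 3) ^ 2)
      - (ω ^ 2 * (c 2 * A - ω ^ 2 * b) * (A + (c 2 - ω ^ 2) * b - c 3)
        - ω ^ 2 * (A + c 2 * b - c 3) * ((c 2 - ω ^ 2) * A - ω ^ 2 * b + c 3 * ω ^ 2))) := by
    rw [hU0, hU1]
    simp [normSq_apply, pow_two]
    ring
  rw [e]
  exact mul_pos (normSq_pos.2 hg) hcore

/-- The frequency inequality for general gain ratios, by scaling out `c 1`. -/
lemma freq_ineq {n : ℕ} {c : ℕ → ℝ} {δ ω : ℝ} {U : ℕ → ℂ} (h : ChainLMI n c δ) (hn : 2 ≤ n)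
    (hδ : 0 < δ) (hc : ∀ j, 1 ≤ j → j ≤ n → 0 < c j) (hcn : c (n + 1) = 0)
    (hU : ∀ j < n, I * ω * (U (j + 1) - U j) = c (j + 2) * U (j + 2) - c (j + 1) * U (j + 1))
    (hne : ∃ j ≤ n, U j ≠ 0) :
    0 < (c 1 + δ) * normSq (U 0) - c 1 * (conj (U 0) * U 1).re := by
  have h1 : 0 < c 1 := hc 1 le_rfl (by omega)
  have hform : ∀ W, chainForm n (fun j => c j / c 1) W = chainForm n c W / c 1 := by
    intro W
    rw [chainForm, chainForm, sum_div]
    refine sum_congr rfl fun j _ => ?_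
    field_simp
  have hlmi : ChainLMI n (fun j => c j / c 1) (δ / c 1) := by
    intro w W hW hne
    have h2 := div_pos (h w W hW hne) h1
    rw [hform]
    refine lt_of_lt_of_eq h2 ?_
    field_simp
  have h2 := freq_unit (ω := ω / c 1) (U := U) hlmi hn (by field_simp) (by positivity)
    (fun j hj hj' => div_pos (hc j hj hj') h1) (by simp [hcn]) (fun j hj => by
      have h3 := hU j hj
      have h4 : (c 1 : ℂ) ≠ 0 := by exact_mod_cast h1.ne'
      push_cast
      field_simp
      linear_combination h3) hne
  refine lt_of_lt_of_eq (mul_pos h1 h2) ?_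
  field_simp

end ObserverISS

namespace ObserverISS

open Finset Complex
open scoped ComplexConjugate

/-! ### From the frequency inequality to a storage function -/

/-- The frequency inequality for the control system `ε' = A ε + b w` with supply rate
`δ w² - w (ℓ · ε)`. -/
def FreqPos {n : ℕ} (A : Matrix (Fin n) (Fin n) ℝ) (b ℓ : Fin n → ℝ) (δ : ℝ) : Prop :=
  ∀ (ω : ℝ) (ε : Fin n → ℂ) (w : ℂ),
    (∀ i, I * ω * ε i = (∑ j, (A i j : ℂ) * ε j) + b i * w) → (ε ≠ 0 ∨ w ≠ 0) →
    0 < δ * normSq w - (conj w * ∑ j, (ℓ j : ℂ) * ε j).re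

open scoped InnerProductSpace in
/-- A family of vectors whose Gram matrix satisfies the Lyapunov constraint decomposes, along an
eigenbasis of a skew-adjoint operator, into vectors to which the frequency inequality
applies. -/
lemma FreqPos.eq_zero {n : ℕ} {A : Matrix (Fin n) (Fin n) ℝ} {b ℓ : Fin n → ℝ} {δ : ℝ}
    (h : FreqPos A b ℓ δ) (hδ : 0 < δ) {E : Type*} [NormedAddCommGroup E]
    [InnerProductSpace ℂ E] [FiniteDimensional ℂ E] (g f : Fin n → E) (β : E)
    (hf : ∀ a, f a = (∑ j, (A a j : ℂ) • g j) + (b a : ℂ) • β)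
    (hskew : ∀ i j, ⟪g i, f j⟫_ℂ + ⟪f i, g j⟫_ℂ = 0)
    (hθ : δ * ‖β‖ ^ 2 - (⟪β, ∑ j, (ℓ j : ℂ) • g j⟫_ℂ).re ≤ 0) : g = 0 ∧ β = 0 := by
  let U : Submodule ℂ E := Submodule.span ℂ (Set.range g)
  have hgU : ∀ a, g a ∈ U := fun a => Submodule.subset_span ⟨a, rfl⟩
  -- the given vectors, and the projection of `β`, as elements of `U`
  let g' : Fin n → U := fun a => ⟨g a, hgU a⟩
  let β' : U := U.orthogonalProjectionOnto β
  have hβ' : ∀ u : U, ⟪u, β'⟫_ℂ = ⟪(u : E), β⟫_ℂ := fun u =>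
    U.inner_orthogonalProjectionOnto_eq_of_mem_left u β
  let f' : Fin n → U := fun a => (∑ j, (A a j : ℂ) • g' j) + (b a : ℂ) • β'
  have hf' : ∀ (u : U) a, ⟪u, f' a⟫_ℂ = ⟪(u : E), f a⟫_ℂ := by
    intro u a
    rw [hf]
    simp only [f', inner_add_right, inner_sum, inner_smul_right, hβ', Submodule.coe_inner, g']
  have hskew' : ∀ i j, ⟪g' i, f' j⟫_ℂ + ⟪f' i, g' j⟫_ℂ = 0 := by
    intro i j
    rw [hf' (g' i) j, ← inner_conj_symm (f' i), hf' (g' j) i, inner_conj_symm]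
    exact hskew i j
  let G : (Fin n → ℂ) →ₗ[ℂ] U := Fintype.linearCombination ℂ g'
  let F : (Fin n → ℂ) →ₗ[ℂ] U := Fintype.linearCombination ℂ f'
  have hGF : ∀ x y, ⟪G x, F y⟫_ℂ = -⟪F x, G y⟫_ℂ := by
    intro x y
    simp only [G, F, Fintype.linearCombination_apply, sum_inner, inner_sum, inner_smul_left,
      inner_smul_right]
    rw [← sum_neg_distrib]
    refine sum_congr rfl fun i _ => ?_
    rw [← mul_neg, ← sum_neg_distrib]
    congr 1
    refine sum_congr rfl fun j _ => ?_
    linear_combination (conj (x j)) * hskew' j i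
  have hGsurj : LinearMap.range G = ⊤ := by
    rw [eq_top_iff]
    rintro ⟨u, hu⟩ -
    have h1 : u ∈ LinearMap.range (Fintype.linearCombination ℂ g) := by
      rwa [Fintype.range_linearCombination]
    obtain ⟨x, hx⟩ := h1
    refine ⟨x, Subtype.ext (Eq.trans ?_ hx)⟩
    simp [G, g', Fintype.linearCombination_apply]
  obtain ⟨R, hR⟩ := LinearMap.exists_rightInverse_of_surjective G hGsurj
  have hGR : ∀ u, G (R u) = u := fun u => LinearMap.congr_fun hR u
  let Ω : U →ₗ[ℂ] U := F ∘ₗ R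
  have hΩ : ∀ u v, ⟪u, Ω v⟫_ℂ = -⟪Ω u, v⟫_ℂ := by
    intro u v
    have h1 := hGF (R u) (R v)
    rwa [hGR, hGR] at h1
  have hGe : ∀ a, G (Pi.single a 1) = g' a := fun a => by simp [G]
  have hFe : ∀ a, F (Pi.single a 1) = f' a := fun a => by simp [F]
  have hΩg : ∀ u a, ⟪Ω u, g' a⟫_ℂ = -⟪u, f' a⟫_ℂ := by
    intro u a
    have h1 := hGF (R u) (Pi.single a 1)
    rw [hGR, hGe, hFe] at h1
    rw [h1]
    exact (neg_neg _).symm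
  have hsym : (I • Ω).IsSymmetric := by
    intro u v
    simp only [LinearMap.smul_apply, inner_smul_left, inner_smul_right, conj_I, hΩ]
    ring
  let e := hsym.eigenvectorBasis rfl
  have hmode : ∀ k, (∀ a, ⟪e k, g' a⟫_ℂ = 0) ∧ ⟪e k, β'⟫_ℂ = 0 ∨
      0 < δ * normSq ⟪e k, β'⟫_ℂ
        - (conj ⟪e k, β'⟫_ℂ * ∑ j, (ℓ j : ℂ) * ⟪e k, g' j⟫_ℂ).re := by
    intro k
    by_cases h0 : (∀ a, ⟪e k, g' a⟫_ℂ = 0) ∧ ⟪e k, β'⟫_ℂ = 0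
    · exact .inl h0
    · refine .inr (h (-(hsym.eigenvalues rfl k)) (fun a => ⟪e k, g' a⟫_ℂ) ⟪e k, β'⟫_ℂ ?_ ?_)
      · intro a
        have h1 : ⟪e k, f' a⟫_ℂ = (∑ j, (A a j : ℂ) * ⟪e k, g' j⟫_ℂ) + b a * ⟪e k, β'⟫_ℂ := by
          simp only [f', inner_add_right, inner_sum, inner_smul_right]
        rw [← h1]
        have h2 : I • Ω (e k) = ((hsym.eigenvalues rfl k : ℝ) : ℂ) • e k :=
          hsym.apply_eigenvectorBasis rfl k
        have h3 := hΩg (e k) a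
        have h4 : ⟪I • Ω (e k), g' a⟫_ℂ = ⟪((hsym.eigenvalues rfl k : ℝ) : ℂ) • e k, g' a⟫_ℂ := by
          rw [h2]
        rw [inner_smul_left, inner_smul_left, conj_I, conj_ofReal, h3] at h4
        push_cast
        linear_combination I * h4 - ⟪e k, f' a⟫_ℂ * I_mul_I
      · by_contra hcon
        push Not at hcon
        exact h0 ⟨fun a => congrFun hcon.1 a, hcon.2⟩
  -- the supply rates of the modes add up to the supply rate of the projected family
  have hsum : ∑ k, (δ * normSq ⟪e k, β'⟫_ℂ
        - (conj ⟪e k, β'⟫_ℂ * ∑ j, (ℓ j : ℂ) * ⟪e k, g' j⟫_ℂ).re)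
      = δ * ‖β'‖ ^ 2 - (⟪β, ∑ j, (ℓ j : ℂ) • g j⟫_ℂ).re := by
    rw [sum_sub_distrib, ← mul_sum]
    congr 1
    · congr 1
      rw [← e.sum_sq_norm_inner_right β']
      exact sum_congr rfl fun k _ => normSq_eq_norm_sq _
    · rw [← re_sum]
      congr 1
      have h1 : ⟪β, ∑ j, (ℓ j : ℂ) • g j⟫_ℂ = ⟪β', ∑ j, (ℓ j : ℂ) • g' j⟫_ℂ := by
        have h2 : ((∑ j, (ℓ j : ℂ) • g' j : U) : E) = ∑ j, (ℓ j : ℂ) • g j := by simp [g']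
        rw [← inner_conj_symm, ← inner_conj_symm β', hβ', h2]
      rw [h1, ← e.sum_inner_mul_inner]
      refine sum_congr rfl fun k _ => ?_
      rw [inner_conj_symm]
      simp only [inner_sum, inner_smul_right]
  have hnonneg : ∀ k ∈ univ, 0 ≤ δ * normSq ⟪e k, β'⟫_ℂ
        - (conj ⟪e k, β'⟫_ℂ * ∑ j, (ℓ j : ℂ) * ⟪e k, g' j⟫_ℂ).re := by
    intro k _
    rcases hmode k with ⟨h1, h2⟩ | h1
    · simp [h2]
    · exact h1.le
  have hproj : ‖β'‖ ^ 2 ≤ ‖β‖ ^ 2 := by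
    rw [U.norm_sq_eq_add_norm_sq_projection β]
    exact le_add_of_nonneg_right (sq_nonneg _)
  have hle : ∑ k, (δ * normSq ⟪e k, β'⟫_ℂ
        - (conj ⟪e k, β'⟫_ℂ * ∑ j, (ℓ j : ℂ) * ⟪e k, g' j⟫_ℂ).re) = 0 := by
    refine le_antisymm ?_ (sum_nonneg hnonneg)
    rw [hsum]
    nlinarith
  rw [sum_eq_zero_iff_of_nonneg hnonneg] at hle
  have hg : g = 0 := by
    funext a
    have h1 : g' a = 0 := by
      refine InnerProductSpace.ext_inner_left_basis e.toBasis fun k => ?_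
      rw [inner_zero_right, e.coe_toBasis]
      rcases hmode k with ⟨h1, -⟩ | h1
      · exact h1 a
      · exact absurd (hle k (mem_univ k)) h1.ne'
    exact congrArg Subtype.val h1
  refine ⟨hg, ?_⟩
  simp only [hg, Pi.zero_apply, smul_zero, sum_const_zero, inner_zero_right, zero_re,
    sub_zero] at hθ
  have : ‖β‖ ^ 2 ≤ 0 := by
    by_contra hcon
    push Not at hcon
    nlinarith
  simpa using this

end ObserverISS

namespace ObserverISS

open Finset Complex
open scoped ComplexConjugate

/-- Positive semidefinite matrices of unit trace. -/
def unitPSD (J : Type*) [Fintype J] : Set (Matrix J J ℝ) := {X | X.PosSemidef ∧ X.trace = 1}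

open scoped MatrixOrder Matrix.Norms.L2Operator in
lemma exists_eq_conjTranspose_mul_self {J : Type*} [Fintype J] [DecidableEq J]
    {X : Matrix J J ℝ} (hX : X.PosSemidef) : ∃ B : Matrix J J ℝ, X = Bᴴ * B :=
  CStarAlgebra.nonneg_iff_eq_star_mul_self.mp hX.nonneg

lemma convex_unitPSD (J : Type*) [Fintype J] : Convex ℝ (unitPSD J) := by
  rintro X ⟨hX, hX1⟩ Y ⟨hY, hY1⟩ s t hs ht hst
  refine ⟨(hX.smul hs).add (hY.smul ht), ?_⟩
  simp [hX1, hY1, hst]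

lemma isCompact_unitPSD (J : Type*) [Fintype J] [DecidableEq J] : IsCompact (unitPSD J) := by
  -- the image of a sphere under `B ↦ Bᴴ * B`
  have h1 : IsCompact (Metric.sphere (0 : EuclideanSpace ℝ (J × J)) 1) := isCompact_sphere _ _
  have h2 : Continuous fun B : EuclideanSpace ℝ (J × J) =>
      ((Matrix.of fun i j => B (i, j))ᴴ * (Matrix.of fun i j => B (i, j)) : Matrix J J ℝ) := by
    refine continuous_matrix fun i j => ?_
    simp only [Matrix.mul_apply, Matrix.conjTranspose_apply, Matrix.of_apply, star_trivial]
    fun_prop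
  have h3 : ∀ B : Matrix J J ℝ, (Bᴴ * B).trace = ∑ p : J × J, B p.1 p.2 ^ 2 := by
    intro B
    simp only [Matrix.trace, Matrix.diag, Matrix.mul_apply, Matrix.conjTranspose_apply,
      star_trivial, Fintype.sum_prod_type]
    rw [sum_comm]
    simp only [sq]
  convert h1.image h2
  ext X
  constructor
  · rintro ⟨hX, hX1⟩
    obtain ⟨B, rfl⟩ := exists_eq_conjTranspose_mul_self hX
    refine ⟨WithLp.toLp 2 fun p => B p.1 p.2, ?_, rfl⟩
    rw [mem_sphere_zero_iff_norm, EuclideanSpace.norm_eq]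
    rw [h3] at hX1
    simp [hX1]
  · rintro ⟨B, hB, rfl⟩
    refine ⟨Matrix.posSemidef_conjTranspose_mul_self _, ?_⟩
    rw [mem_sphere_zero_iff_norm, EuclideanSpace.norm_eq, Real.sqrt_eq_one] at hB
    rw [h3]
    simpa using hB

open scoped InnerProductSpace in
/-- The dual program is infeasible. -/
lemma FreqPos.infeasible {n : ℕ} {A : Matrix (Fin n) (Fin n) ℝ} {b ℓ : Fin n → ℝ} {δ : ℝ}
    (h : FreqPos A b ℓ δ) (hδ : 0 < δ) {X : Matrix (Option (Fin n)) (Option (Fin n)) ℝ}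
    (hX : X ∈ unitPSD (Option (Fin n)))
    (hθ : δ * X none none - ∑ j, ℓ j * X none (some j) ≤ 0)
    (hlyap : ∀ i j, ((∑ m, A j m * X (some i) (some m)) + b j * X (some i) none)
      + ((∑ m, A i m * X (some m) (some j)) + b i * X none (some j)) = 0) : False := by
  obtain ⟨hX, hX1⟩ := hX
  obtain ⟨B, rfl⟩ := exists_eq_conjTranspose_mul_self hX
  let H : Option (Fin n) → EuclideanSpace ℂ (Option (Fin n)) := fun j =>
    WithLp.toLp 2 fun i => (B i j : ℂ)
  have hH : ∀ i j, ⟪H i, H j⟫_ℂ = (((Bᴴ * B) i j : ℝ) : ℂ) := by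
    intro i j
    rw [Matrix.mul_apply]
    simp only [H, PiLp.inner_apply, RCLike.inner_apply, conj_ofReal, Matrix.conjTranspose_apply,
      star_trivial]
    push_cast
    exact sum_congr rfl fun m _ => mul_comm _ _
  have hn : ∀ j, ‖H j‖ ^ 2 = (Bᴴ * B) j j := by
    intro j
    have h1 := inner_self_eq_norm_sq (𝕜 := ℂ) (H j)
    rw [hH] at h1
    exact h1.symm.trans (ofReal_re _)
  obtain ⟨h1, h2⟩ := h.eq_zero hδ (fun a => H (some a))
    (fun a => (∑ j, (A a j : ℂ) • H (some j)) + (b a : ℂ) • H none) (H none) (fun _ => rfl)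
    (by
      intro i j
      have h3 := congrArg (fun r : ℝ => (r : ℂ)) (hlyap i j)
      simp only [inner_add_right, inner_add_left, inner_sum, sum_inner, inner_smul_right,
        inner_smul_left, conj_ofReal, hH]
      push_cast at h3
      exact h3)
    (by
      rw [hn, inner_sum, re_sum]
      simpa only [inner_smul_right, hH, re_ofReal_mul, ofReal_re] using hθ)
  have h3 : ∀ j, H j = 0 := by
    rintro (_ | j)
    · exact h2
    · exact congrFun h1 j
  have h4 : (Bᴴ * B).trace = 0 := sum_eq_zero fun j _ => by
    rw [Matrix.diag_apply, ← hn, h3]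
    simp
  rw [h4] at hX1
  exact zero_ne_one hX1

/-- The Kalman–Yakubovich–Popov lemma, in its strict form: the frequency inequality yields a
quadratic storage function. The matrices satisfying the dual constraints are separated from the
cone they would have to reach. -/
lemma FreqPos.exists_storage {n : ℕ} {A : Matrix (Fin n) (Fin n) ℝ} {b ℓ : Fin n → ℝ} {δ : ℝ}
    (h : FreqPos A b ℓ δ) (hδ : 0 < δ) :
    ∃ P : Matrix (Fin n) (Fin n) ℝ, (∀ i j, P i j = P j i) ∧
      ∀ (ε : Fin n → ℝ) (w : ℝ), (ε ≠ 0 ∨ w ≠ 0) →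
        0 < δ * w ^ 2 - w * ∑ j, ℓ j * ε j
          - ∑ i, ∑ j, P i j * ε i * ((∑ m, A j m * ε m) + b j * w) := by
  let Λ : Matrix (Option (Fin n)) (Option (Fin n)) ℝ →ₗ[ℝ] ℝ × (Fin n → Fin n → ℝ) :=
    { toFun := fun X => (δ * X none none - ∑ j, ℓ j * X none (some j), fun i j =>
        ((∑ m, A j m * X (some i) (some m)) + b j * X (some i) none)
          + ((∑ m, A i m * X (some m) (some j)) + b i * X none (some j)))
      map_add' := by
        intro X Y
        refine Prod.ext ?_ (funext fun i => funext fun j => ?_)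
        · simp only [Matrix.add_apply, mul_add, sum_add_distrib, Prod.fst_add]
          ring
        · simp only [Matrix.add_apply, mul_add, sum_add_distrib, Prod.snd_add, Pi.add_apply]
          ring
      map_smul' := by
        intro r X
        refine Prod.ext ?_ (funext fun i => funext fun j => ?_)
        · simp only [Matrix.smul_apply, smul_eq_mul, RingHom.id_apply, Prod.smul_fst,
            mul_left_comm _ r, ← mul_sum]
          ring
        · simp only [Matrix.smul_apply, smul_eq_mul, RingHom.id_apply, Prod.smul_snd,
            Pi.smul_apply, mul_left_comm _ r, ← mul_sum]
          ring }
  have hΛc : Continuous Λ := LinearMap.continuous_of_finiteDimensional Λ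
  have hdisj : Disjoint (Λ '' unitPSD (Option (Fin n)))
      (Set.Iic (0 : ℝ) ×ˢ {(0 : Fin n → Fin n → ℝ)}) := by
    rw [Set.disjoint_left]
    rintro _ ⟨X, hX, rfl⟩ ⟨h1, h2⟩
    exact h.infeasible hδ hX h1 fun i j => congrFun (congrFun h2 i) j
  obtain ⟨f, u, v, hfu, huv, hfv⟩ := geometric_hahn_banach_compact_closed
    ((convex_unitPSD _).linear_image Λ) ((isCompact_unitPSD _).image hΛc)
    ((convex_Iic 0).prod (convex_singleton 0)) (isClosed_Iic.prod isClosed_singleton) hdisj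
  have hv : v < 0 := by
    have h1 := hfv 0 ⟨Set.mem_Iic.2 le_rfl, rfl⟩
    rwa [map_zero] at h1
  have hrank : ∀ z : Option (Fin n) → ℝ, z ≠ 0 → f (Λ (Matrix.vecMulVec z z)) < 0 := by
    intro z hz
    have hpos : 0 < z ⬝ᵥ z := by
      have := Matrix.dotProduct_star_self_pos_iff (v := z) |>.2 hz
      simpa using this
    have hmem : (z ⬝ᵥ z)⁻¹ • Matrix.vecMulVec z z ∈ unitPSD (Option (Fin n)) := by
      constructor
      · have := Matrix.posSemidef_vecMulVec_self_star z
        rw [star_trivial] at this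
        exact this.smul (inv_nonneg.2 hpos.le)
      · rw [Matrix.trace_smul, Matrix.trace_vecMulVec, smul_eq_mul, inv_mul_cancel₀ hpos.ne']
    have h1 := hfu _ ⟨_, hmem, rfl⟩
    rw [map_smul, map_smul, smul_eq_mul] at h1
    have h2 : (z ⬝ᵥ z)⁻¹ * f (Λ (Matrix.vecMulVec z z)) < 0 := by linarith
    exact (pos_iff_neg_of_mul_neg h2).1 (inv_pos.2 hpos)
  let φ : ℝ := f (1, 0)
  let R : Fin n → Fin n → ℝ := fun i j => f (0, Pi.single i (Pi.single j 1))
  have hf : ∀ p q, f (p, q) = p * φ + ∑ i, ∑ j, q i j * R i j := by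
    intro p q
    have h1 : ((p, q) : ℝ × (Fin n → Fin n → ℝ)) = p • ((1, 0) : ℝ × (Fin n → Fin n → ℝ))
        + ∑ i, ∑ j, q i j • ((0, Pi.single i (Pi.single j 1)) : ℝ × (Fin n → Fin n → ℝ)) := by
      refine Prod.ext ?_ (funext fun i => funext fun j => ?_)
      · simp [Prod.fst_sum]
      · simp [Prod.snd_sum, Finset.sum_apply, Pi.single_apply, apply_ite, ite_apply]
    rw [h1]
    simp only [map_add, map_sum, map_smul, smul_eq_mul]
    rfl
  -- the value of the separating functional at the rank-one matrix of `(ε, w)`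
  have hval : ∀ (ε : Fin n → ℝ) (w : ℝ), (ε ≠ 0 ∨ w ≠ 0) →
      (δ * w ^ 2 - w * ∑ j, ℓ j * ε j) * φ
        + ∑ i, ∑ j, (ε i * ((∑ m, A j m * ε m) + b j * w)
          + ε j * ((∑ m, A i m * ε m) + b i * w)) * R i j < 0 := by
    intro ε w hne
    have h1 := hrank (fun o => o.elim w ε) (by
      intro h0
      rcases hne with h2 | h2
      · exact h2 (funext fun i => congrFun h0 (some i))
      · exact h2 (congrFun h0 none))
    have h2 : Λ (Matrix.vecMulVec (fun o => o.elim w ε) (fun o => o.elim w ε))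
        = (δ * w ^ 2 - w * ∑ j, ℓ j * ε j, fun i j => ε i * ((∑ m, A j m * ε m) + b j * w)
          + ε j * ((∑ m, A i m * ε m) + b i * w)) := by
      refine Prod.ext ?_ (funext fun i => funext fun j => ?_)
      · simp only [Λ, LinearMap.coe_mk, AddHom.coe_mk, Matrix.vecMulVec_apply, Option.elim,
          mul_sum]
        rw [sq]
        congr 1
        exact sum_congr rfl fun m _ => by ring
      · simp only [Λ, LinearMap.coe_mk, AddHom.coe_mk, Matrix.vecMulVec_apply, Option.elim,
          mul_add, mul_sum]
        refine congrArg₂ _ (congrArg₂ _ (sum_congr rfl fun m _ => ?_) ?_)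
          (congrArg₂ _ (sum_congr rfl fun m _ => ?_) ?_) <;> ring
    rwa [h2, hf] at h1
  have hφ : φ < 0 := by
    have h1 := hval 0 1 (.inr one_ne_zero)
    simp only [Pi.zero_apply, zero_mul, mul_zero, sum_const_zero, add_zero, one_pow, mul_one,
      sub_zero] at h1
    exact (pos_iff_neg_of_mul_neg h1).1 hδ
  refine ⟨fun i j => -(R i j + R j i) / φ, fun i j => by simp only [add_comm], ?_⟩
  intro ε w hne
  have h1 := hval ε w hne
  set F : Fin n → ℝ := fun j => (∑ m, A j m * ε m) + b j * w with hF
  have h2 : ∑ i, ∑ j, -(R i j + R j i) / φ * ε i * F j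
      = -(∑ i, ∑ j, (ε i * F j + ε j * F i) * R i j) / φ := by
    have h3 : ∑ i, ∑ j, (ε i * F j + ε j * F i) * R i j
        = ∑ i, ∑ j, (R i j + R j i) * ε i * F j := by
      have h4 : ∑ i, ∑ j, ε j * F i * R i j = ∑ i, ∑ j, ε i * F j * R j i := sum_comm
      simp only [add_mul, sum_add_distrib, h4]
      congr 1 <;> exact sum_congr rfl fun i _ => sum_congr rfl fun j _ => by ring
    rw [h3, neg_div, sum_div, ← sum_neg_distrib]
    refine sum_congr rfl fun i _ => ?_
    rw [sum_div, ← sum_neg_distrib]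
    exact sum_congr rfl fun j _ => by ring
  change 0 < δ * w ^ 2 - w * ∑ j, ℓ j * ε j - ∑ i, ∑ j, -(R i j + R j i) / φ * ε i * F j
  change (δ * w ^ 2 - w * ∑ j, ℓ j * ε j) * φ
    + ∑ i, ∑ j, (ε i * F j + ε j * F i) * R i j < 0 at h1
  rw [h2]
  have h5 := div_pos_of_neg_of_neg h1 hφ
  rw [add_div, mul_div_cancel_right₀ _ hφ.ne] at h5
  rw [neg_div]
  linarith

end ObserverISS

namespace ObserverISS

open Finset Complex
open scoped ComplexConjugate

/-! ### The storage function of the chain -/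

/-- The gain condition on the matrix `Sb` is the matrix inequality `ChainLMI` for the gain
ratios: the vector `(W n - W (n-1), …, W 1 - W 0, w)` is substituted in the quadratic form. -/
lemma chainLMI_of_posDef {n : ℕ} (hn : 1 ≤ n) {k : ℕ → ℝ} {δ : ℝ} {c : ℕ → ℝ}
    (hc : ∀ j, 1 ≤ j → j ≤ n → c j = k (j + 1) / k j) (hcn : c (n + 1) = 0)
    {S : Matrix (Fin (n + 1)) (Fin (n + 1)) ℝ}
    (hS : ∀ p q : Fin (n + 1), S p q =
      if (p : ℕ) = 0 then k (n + 1) / k n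
      else if 1 ≤ (p : ℕ) ∧ (p : ℕ) ≤ (q : ℕ) ∧ (q : ℕ) < n then
        k (n + 1 - (p : ℕ)) / k (n - (p : ℕ)) - k (n + 1 - (p : ℕ) + 1) / k (n + 1 - (p : ℕ))
      else if (p : ℕ) = (q : ℕ) + 1 then -(k (n + 1 - (q : ℕ)) / k (n - (q : ℕ)))
      else if (p : ℕ) = n ∧ (q : ℕ) = n then δ
      else 0)
    (hpos : (S + Sᵀ).PosDef) : ChainLMI n c δ := by
  intro w W hW0 hne
  let v : ℕ → ℝ := fun p => if p < n then W (n - p) - W (n - 1 - p) else w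
  have hvlt : ∀ p, p < n → v p = W (n - p) - W (n - 1 - p) := fun p hp => if_pos hp
  have hvn : v n = w := if_neg (lt_irrefl n)
  -- the partial sums of `v`
  have htel : ∀ p ≤ n, ∑ q ∈ range p, v q = W n - W (n - p) := by
    intro p
    induction p with
    | zero => simp
    | succ p ih =>
      intro hp
      rw [sum_range_succ, ih (by omega), hvlt p (by omega), show n - 1 - p = n - (p + 1) by omega]
      ring
  let T : ℕ → ℕ → ℝ := fun p q => if p = 0 then c n else
    (if p ≤ q ∧ q < n then c (n - p) - c (n + 1 - p) else 0)
      + (if q = p - 1 then -c (n + 1 - p) else 0) + (if p = n ∧ q = n then δ else 0)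
  have hST : ∀ p q : Fin (n + 1), S p q = T p q := by
    rintro ⟨p, hp⟩ ⟨q, hq⟩
    simp only [hS, T]
    rcases Nat.eq_zero_or_pos p with rfl | hp0
    · simp [hc n hn le_rfl]
    · rw [if_neg hp0.ne', if_neg hp0.ne']
      by_cases h1 : p ≤ q ∧ q < n
      · rw [if_pos ⟨hp0, h1⟩, if_pos h1, if_neg (by omega), if_neg (by omega),
          hc (n - p) (by omega) (by omega), hc (n + 1 - p) (by omega) (by omega),
          show n - p + 1 = n + 1 - p by omega]
        ring
      · rw [if_neg (by tauto), if_neg h1]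
        by_cases h2 : p = q + 1
        · rw [if_pos h2, if_pos (by omega), if_neg (by omega),
            hc (n + 1 - p) (by omega) (by omega), show n + 1 - p = n - q by omega,
            show n - q + 1 = n + 1 - q by omega]
          ring
        · rw [if_neg h2, if_neg (by omega : ¬ q = p - 1)]
          ring
  have hrow0 : ∑ q ∈ range (n + 1), T 0 q * v q = c n * (W n + w) := by
    simp only [T, if_true]
    rw [← mul_sum, sum_range_succ, htel n le_rfl, hvn, Nat.sub_self, hW0, sub_zero]
  have hrow : ∀ p, 1 ≤ p → p ≤ n → ∑ q ∈ range (n + 1), T p q * v q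
      = c (n - p) * W (n - p) - c (n - p + 1) * W (n - p + 1) + if p = n then δ * w else 0 := by
    intro p hp1 hpn
    simp only [T, if_neg (by omega : ¬ p = 0), add_mul, sum_add_distrib, ite_mul, zero_mul]
    have h1 : ∑ q ∈ range (n + 1), (if p ≤ q ∧ q < n then (c (n - p) - c (n + 1 - p)) * v q else 0)
        = (c (n - p) - c (n + 1 - p)) * W (n - p) := by
      rw [← sum_filter]
      have h2 : (range (n + 1)).filter (fun q => p ≤ q ∧ q < n) = Ico p n := by
        ext q
        simp only [mem_filter, mem_range, mem_Ico]
        omega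
      rw [h2, ← mul_sum, sum_Ico_eq_sub _ hpn, htel n le_rfl, htel p hpn, Nat.sub_self, hW0]
      ring
    have h3 : ∑ q ∈ range (n + 1), (if q = p - 1 then -c (n + 1 - p) * v q else 0)
        = -c (n + 1 - p) * (W (n - p + 1) - W (n - p)) := by
      rw [sum_ite_eq' (range (n + 1)) (p - 1), if_pos (mem_range.2 (by omega)),
        hvlt (p - 1) (by omega), show n - (p - 1) = n - p + 1 by omega,
        show n - 1 - (p - 1) = n - p by omega]
    have h4 : ∑ q ∈ range (n + 1), (if p = n ∧ q = n then δ * v q else 0)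
        = if p = n then δ * w else 0 := by
      by_cases hp : p = n
      · simp [hp, hvn]
      · simp [hp]
    rw [h1, h3, h4, show n + 1 - p = n - p + 1 by omega]
    ring
  have hvne : (fun p : Fin (n + 1) => v p) ≠ 0 := by
    intro h0
    have h0' : ∀ p ≤ n, v p = 0 := fun p hp => congrFun h0 ⟨p, by omega⟩
    rcases hne with hw | ⟨j, hj1, hj2, hj⟩
    · exact hw (hvn ▸ h0' n le_rfl)
    · have h1 := htel n le_rfl
      have h2 := htel (n - j) (by omega)
      rw [sum_eq_zero fun q hq => h0' q (by have := mem_range.1 hq; omega)] at h1 h2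
      rw [Nat.sub_self, hW0] at h1
      rw [show n - (n - j) = j by omega] at h2
      exact hj (by linarith)
  have hquad := hpos.dotProduct_mulVec_pos hvne
  have hval : (fun p : Fin (n + 1) => v p) ⬝ᵥ (S *ᵥ fun p : Fin (n + 1) => v p)
      = ∑ p ∈ range (n + 1), v p * ∑ q ∈ range (n + 1), T p q * v q := by
    simp only [dotProduct, Matrix.mulVec, hST]
    rw [← Fin.sum_univ_eq_sum_range (fun p => v p * ∑ q ∈ range (n + 1), T p q * v q)]
    refine sum_congr rfl fun p _ => ?_
    rw [← Fin.sum_univ_eq_sum_range (fun q => T p q * v q)]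
  have hquad2 : 0 < (fun p : Fin (n + 1) => v p) ⬝ᵥ (S *ᵥ fun p : Fin (n + 1) => v p) := by
    rw [star_trivial, Matrix.add_mulVec, dotProduct_add, Matrix.mulVec_transpose,
      dotProduct_comm _ (_ ᵥ* _), ← Matrix.dotProduct_mulVec] at hquad
    linarith
  rw [hval, sum_range_succ, hvn, hrow n hn le_rfl, Nat.sub_self, if_pos rfl, hW0] at hquad2
  have hsum : ∑ p ∈ range n, v p * ∑ q ∈ range (n + 1), T p q * v q
      = chainForm n c W + c n * w * (W n - W (n - 1)) := by
    rw [chainForm, ← sum_range_reflect (fun j => (W (j + 1) - W j)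
      * (c (j + 1) * W (j + 1) - c (j + 2) * W (j + 2)))]
    have h1 : c n * w * (W n - W (n - 1))
        = ∑ p ∈ range n, if p = 0 then c n * w * (W n - W (n - 1)) else 0 := by
      rw [sum_ite_eq' (range n) 0, if_pos (mem_range.2 hn)]
    rw [h1, ← sum_add_distrib]
    refine sum_congr rfl fun p hp => ?_
    rw [mem_range] at hp
    rw [hvlt p hp]
    rcases Nat.eq_zero_or_pos p with rfl | hp0
    · rw [hrow0, if_pos rfl, show n - 1 - 0 + 1 = n by omega, show n - 1 - 0 + 2 = n + 1 by omega,
        hcn, Nat.sub_zero, Nat.sub_zero]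
      ring
    · rw [hrow p hp0 hp.le, if_neg hp.ne, if_neg hp0.ne', show n - 1 - p + 1 = n - p by omega,
        show n - 1 - p + 2 = n - p + 1 by omega]
      ring
  rw [hsum] at hquad2
  simp only [zero_add, mul_zero, zero_sub] at hquad2
  linarith

/-- Sum of the entries of `ε` with index below `j`. -/
def partialSum {R : Type*} [AddCommMonoid R] {n : ℕ} (ε : Fin n → R) (j : ℕ) : R :=
  ∑ m : Fin n, if (m : ℕ) < j then ε m else 0

lemma partialSum_zero {R : Type*} [AddCommMonoid R] {n : ℕ} (ε : Fin n → R) :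
    partialSum ε 0 = 0 := by
  simp [partialSum]

lemma partialSum_succ {R : Type*} [AddCommMonoid R] {n : ℕ} (ε : Fin n → R) (j : Fin n) :
    partialSum ε (j + 1) = partialSum ε j + ε j := by
  have h1 : ε j = ∑ m : Fin n, if m = j then ε m else 0 := by simp
  conv_rhs => rw [h1]
  rw [partialSum, partialSum, ← sum_add_distrib]
  refine sum_congr rfl fun m _ => ?_
  rcases lt_trichotomy (m : ℕ) j with h | h | h
  · simp [h, h.trans (Nat.lt_succ_self _), Fin.ext_iff, h.ne]
  · simp [h, Fin.ext_iff]
  · simp [h.le, Fin.ext_iff, h.ne', Nat.not_lt.2 h.le, Nat.not_lt.2 (Nat.succ_le_of_lt h)]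

lemma exists_partialSum_ne {R : Type*} [AddCommGroup R] {n : ℕ} {ε : Fin n → R} (hε : ε ≠ 0) :
    ∃ j, 1 ≤ j ∧ j ≤ n ∧ partialSum ε j ≠ 0 := by
  by_contra hcon
  push Not at hcon
  have h1 : ∀ j ≤ n, partialSum ε j = 0 := by
    intro j hj
    rcases Nat.eq_zero_or_pos j with rfl | hj0
    · exact partialSum_zero ε
    · exact hcon j hj0 hj
  refine hε (funext fun j => ?_)
  have h2 := partialSum_succ ε j
  rw [h1 _ j.2, h1 _ j.2.le, zero_add] at h2
  exact h2.symm

/-- Right-hand side of the equation of the `j`-th difference in the chain, driven by `w`. -/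
def drift {n : ℕ} (c : ℕ → ℝ) (ε : Fin n → ℝ) (w : ℝ) (j : Fin n) : ℝ :=
  c (j + 2) * (partialSum ε (j + 2) + w) - c (j + 1) * (partialSum ε (j + 1) + w)

/-- The chain as a control system: state matrix. -/
def chainMat (n : ℕ) (c : ℕ → ℝ) : Matrix (Fin n) (Fin n) ℝ := fun j m =>
  c (j + 2) * (if (m : ℕ) < j + 2 then 1 else 0) - c (j + 1) * (if (m : ℕ) < j + 1 then 1 else 0)

lemma chainMat_sum {n : ℕ} (c : ℕ → ℝ) (ε : Fin n → ℝ) (w : ℝ) (j : Fin n) :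
    (∑ m, chainMat n c j m * ε m) + (c (j + 2) - c (j + 1)) * w = drift c ε w j := by
  simp only [chainMat, sub_mul, sum_sub_distrib, drift, partialSum, mul_assoc, ← mul_sum, ite_mul,
    one_mul, zero_mul]
  ring

lemma chainMat_sum_complex {n : ℕ} (c : ℕ → ℝ) (ε : Fin n → ℂ) (w : ℂ) (j : Fin n) :
    (∑ m, (chainMat n c j m : ℂ) * ε m) + ((c (j + 2) - c (j + 1) : ℝ) : ℂ) * w
      = c (j + 2) * (partialSum ε (j + 2) + w) - c (j + 1) * (partialSum ε (j + 1) + w) := by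
  simp only [chainMat, ofReal_sub, ofReal_mul, apply_ite ofReal, ofReal_one, ofReal_zero, sub_mul,
    sum_sub_distrib, partialSum, mul_assoc, ← mul_sum, ite_mul, one_mul, zero_mul]
  ring

lemma freqPos_chain {n : ℕ} {c : ℕ → ℝ} {δ : ℝ} (h : ChainLMI n c δ) (hn : 2 ≤ n) (hδ : 0 < δ)
    (hc : ∀ j, 1 ≤ j → j ≤ n → 0 < c j) (hcn : c (n + 1) = 0) :
    FreqPos (chainMat n c) (fun j => c (j + 2) - c (j + 1))
      (fun m => if (m : ℕ) < 1 then c 1 else 0) δ := by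
  intro ω ε w hdyn hne
  have h1 := freq_ineq (ω := ω) (U := fun j => partialSum ε j + w) h hn hδ hc hcn
    (by
      intro j hj
      have h2 := hdyn ⟨j, hj⟩
      rw [chainMat_sum_complex] at h2
      have h3 := partialSum_succ ε ⟨j, hj⟩
      simp only at h2 h3
      rw [← h2, h3]
      ring)
    (by
      by_cases hw : w = 0
      · obtain ⟨j, -, hj2, hj⟩ := exists_partialSum_ne (hne.resolve_right (not_not.2 hw))
        exact ⟨j, hj2, by simpa [hw] using hj⟩
      · exact ⟨0, Nat.zero_le _, by simpa [partialSum_zero] using hw⟩)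
  have h4 : ∑ j : Fin n, ((if (j : ℕ) < 1 then c 1 else 0 : ℝ) : ℂ) * ε j
      = c 1 * partialSum ε 1 := by
    simp only [partialSum, mul_sum, apply_ite ofReal, ofReal_zero, ite_mul, zero_mul, mul_ite,
      mul_zero]
  rw [h4]
  simp only [partialSum_zero, zero_add, mul_add, normSq_apply, add_re, mul_re, conj_re, conj_im,
    ofReal_re, ofReal_im, mul_im] at h1 ⊢
  linarith

/-- A storage matrix for the chain of `n` differences with gain ratios `c` and supply rate
`δ w² - c₁ w ε₁`. -/
def IsStorage {n : ℕ} (c : ℕ → ℝ) (δ : ℝ) (P : Matrix (Fin n) (Fin n) ℝ) : Prop :=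
  (∀ i j, P i j = P j i) ∧ (∀ ε : Fin n → ℝ, ε ≠ 0 → 0 < ∑ i, ∑ j, P i j * ε i * ε j) ∧
    ∀ (ε : Fin n → ℝ) (w : ℝ), (ε ≠ 0 ∨ w ≠ 0) →
      0 < δ * w ^ 2 - c 1 * w * partialSum ε 1 - ∑ i, ∑ j, P i j * ε i * drift c ε w j

lemma exists_isStorage {n : ℕ} {c : ℕ → ℝ} {δ : ℝ} (h : 2 ≤ n → ChainLMI n c δ) (hδ : 0 < δ)
    (hc : ∀ j, 1 ≤ j → j ≤ n → 0 < c j) (hcn : c (n + 1) = 0) :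
    ∃ P : Matrix (Fin n) (Fin n) ℝ, IsStorage c δ P := by
  rcases (by omega : n = 0 ∨ n = 1 ∨ 2 ≤ n) with rfl | rfl | hn
  · refine ⟨0, fun i => i.elim0, fun ε hε => absurd (Subsingleton.elim ε 0) hε, ?_⟩
    intro ε w hne
    have hw : w ≠ 0 := hne.resolve_left (not_not.2 (Subsingleton.elim ε 0))
    simpa [partialSum] using mul_pos hδ (pow_pos (abs_pos.2 hw) 2)
  · refine ⟨1, fun i j => by rw [Subsingleton.elim i j], ?_, ?_⟩
    · intro ε hε
      have h0 : ε 0 ≠ 0 := fun h0 => hε (funext fun i => by rw [Subsingleton.elim i 0, h0]; rfl)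
      simpa using mul_self_pos.2 h0
    · intro ε w hne
      have hc1 := hc 1 le_rfl le_rfl
      have h1 : δ * w ^ 2 - c 1 * w * partialSum ε 1
          - ∑ i, ∑ j, (1 : Matrix (Fin 1) (Fin 1) ℝ) i j * ε i * drift c ε w j
          = δ * w ^ 2 + c 1 * ε 0 ^ 2 := by
        have hc2 : c 2 = 0 := hcn
        simp [partialSum, drift, hc2]
        ring
      rw [h1]
      rcases hne with hε | hw
      · have h0 : ε 0 ≠ 0 := fun h0 => hε (funext fun i => by rw [Subsingleton.elim i 0, h0]; rfl)
        have := mul_pos hc1 (pow_pos (abs_pos.2 h0) 2)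
        rw [sq_abs] at this
        have := mul_nonneg hδ.le (sq_nonneg w)
        linarith
      · have := mul_pos hδ (pow_pos (abs_pos.2 hw) 2)
        rw [sq_abs] at this
        have := mul_nonneg hc1.le (sq_nonneg (ε 0))
        linarith
  · have hLMI := h hn
    obtain ⟨P, hsymm, hP⟩ := (freqPos_chain hLMI hn hδ hc hcn).exists_storage hδ
    have hdiss : ∀ (ε : Fin n → ℝ) (w : ℝ), (ε ≠ 0 ∨ w ≠ 0) →
        0 < δ * w ^ 2 - c 1 * w * partialSum ε 1 - ∑ i, ∑ j, P i j * ε i * drift c ε w j := by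
      intro ε w hne
      have h1 := hP ε w hne
      simp only [chainMat_sum] at h1
      have h2 : ∑ j : Fin n, (if (j : ℕ) < 1 then c 1 else 0) * ε j = c 1 * partialSum ε 1 := by
        simp only [partialSum, mul_sum, ite_mul, zero_mul, mul_ite, mul_zero]
      rw [h2] at h1
      linarith
    have hherm : P.IsHermitian := by
      ext i j
      rw [Matrix.conjTranspose_apply, star_trivial, hsymm]
    have hPD : P.PosDef := by
      rw [hherm.posDef_iff_eigenvalues_pos]
      intro i
      let z : Fin n → ℝ := hherm.eigenvectorBasis i
      have hz : z ≠ 0 := by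
        intro h0
        refine hherm.eigenvectorBasis.orthonormal.ne_zero i ?_
        ext m
        exact congrFun h0 m
      have heig : ∀ m, ∑ l, P m l * z l = hherm.eigenvalues i * z m := by
        intro m
        exact congrFun (hherm.mulVec_eigenvectorBasis i) m
      -- the chain form is positive, so the dissipation inequality fixes the sign
      have h1 := hdiss z 0 (.inl hz)
      have h2 : ∑ m, ∑ l, P m l * z m * drift c z 0 l
          = -(hherm.eigenvalues i * chainForm n c (partialSum z)) := by
        have h3 : chainForm n c (partialSum z) = -∑ l, z l * drift c z 0 l := by
          rw [chainForm, ← Fin.sum_univ_eq_sum_range (fun j => (partialSum z (j + 1) - partialSum z j)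
            * (c (j + 1) * partialSum z (j + 1) - c (j + 2) * partialSum z (j + 2))),
            ← sum_neg_distrib]
          refine sum_congr rfl fun l _ => ?_
          rw [partialSum_succ, drift]
          rw [partialSum_succ]
          ring
        rw [sum_comm, h3, mul_neg, neg_neg, mul_sum]
        refine sum_congr rfl fun l _ => ?_
        rw [← sum_mul, ← mul_assoc, ← heig l]
        congr 1
        exact sum_congr rfl fun m _ => by rw [hsymm]
      have h4 : 0 < chainForm n c (partialSum z) := by
        simpa using hLMI 0 (partialSum z) (partialSum_zero z) (.inr (exists_partialSum_ne hz))
      rw [h2] at h1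
      have h5 : 0 < hherm.eigenvalues i * chainForm n c (partialSum z) := by
        simpa using h1
      exact pos_of_mul_pos_left h5 h4.le
    refine ⟨P, hsymm, ?_, hdiss⟩
    intro ε hε
    have h1 := hPD.dotProduct_mulVec_pos hε
    simp only [star_trivial, dotProduct, Matrix.mulVec, mul_sum] at h1
    refine h1.trans_eq (sum_congr rfl fun i _ => sum_congr rfl fun j _ => by ring)

end ObserverISS

namespace ObserverISS

open Finset

/-! ### Coercivity of the output injection -/

lemma dotProduct_mulVec_le_specNorm {ι : Type*} [Fintype ι] [DecidableEq ι] (A : Matrix ι ι ℝ)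
    (z : ι → ℝ) : z ⬝ᵥ (A *ᵥ z) ≤ specNorm A * ∑ i, z i ^ 2 := by
  let Z : EuclideanSpace ℝ ι := WithLp.toLp 2 z
  have h1 : inner ℝ Z (Matrix.toEuclideanCLM (𝕜 := ℝ) A Z) = z ⬝ᵥ (A *ᵥ z) := by
    rw [dotProduct_comm]
    simp [Z, PiLp.inner_apply, dotProduct]
  have h2 : ‖Z‖ ^ 2 = ∑ i, z i ^ 2 := by
    simp [Z, EuclideanSpace.norm_sq_eq]
  rw [← h1, ← h2]
  calc _ ≤ ‖Z‖ * ‖Matrix.toEuclideanCLM (𝕜 := ℝ) A Z‖ := real_inner_le_norm _ _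
    _ ≤ ‖Z‖ * (specNorm A * ‖Z‖) := by
      gcongr
      exact (Matrix.toEuclideanCLM (𝕜 := ℝ) A).le_opNorm Z
    _ = specNorm A * ‖Z‖ ^ 2 := by ring

/-- Coercivity of a symmetric Laplacian on the part of a vector orthogonal to the constants. -/
lemma laplacian_lower {N : ℕ} {L : Matrix (Fin N) (Fin N) ℝ} (hL : L.IsHermitian)
    (hL1 : L *ᵥ (fun _ => (1 : ℝ)) = 0) {lam2 : ℝ}
    (hfiedler : ∀ v : Fin N → ℝ, (∑ i, v i) = 0 → lam2 * (∑ i, v i ^ 2) ≤ v ⬝ᵥ (L *ᵥ v))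
    (m : ℝ) (z : Fin N → ℝ) (hz : ∑ i, z i = 0) :
    lam2 * (∑ i, z i ^ 2) ≤ (fun i => m + z i) ⬝ᵥ (L *ᵥ fun i => m + z i) := by
  have hdec : (fun i => m + z i) = m • (fun _ => (1 : ℝ)) + z := by
    funext i
    simp
  have hsymm : (fun _ => (1 : ℝ)) ⬝ᵥ (L *ᵥ z) = 0 := by
    have ht : Lᵀ = L := by
      have := hL.eq
      rwa [Matrix.conjTranspose_eq_transpose_of_trivial] at this
    rw [Matrix.dotProduct_mulVec, ← Matrix.mulVec_transpose, ht, hL1, zero_dotProduct]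
  rw [hdec, Matrix.mulVec_add, Matrix.mulVec_smul, hL1, smul_zero, zero_add, add_dotProduct,
    smul_dotProduct, hsymm, smul_zero, zero_add]
  exact hfiedler z hz

/-- The matrix `Ψ + α L ⊗ I` is bounded below by `μ`: the mean over the agents is controlled by
the excitation, the disagreement by the Laplacian. -/
lemma coercive {N K : ℕ} (hN : 0 < N) {L : Matrix (Fin N) (Fin N) ℝ} (hL : L.IsHermitian)
    (hL1 : L *ᵥ (fun _ => (1 : ℝ)) = 0) {lam2 : ℝ} (hlam2 : 0 < lam2)
    (hfiedler : ∀ v : Fin N → ℝ, (∑ i, v i) = 0 → lam2 * (∑ i, v i ^ 2) ≤ v ⬝ᵥ (L *ᵥ v))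
    {Ψ : Fin N → Matrix (Fin K) (Fin K) ℝ} (hΨ : ∀ i, (Ψ i).IsHermitian) {μ γ ψ α : ℝ}
    (hγ : 0 < γ)
    (hexc : (((N : ℝ))⁻¹ • (∑ i, Ψ i) - (μ + γ) • (1 : Matrix (Fin K) (Fin K) ℝ)).PosDef)
    {B : Matrix (Fin N × Fin K) (Fin N × Fin K) ℝ}
    (hB : ∀ p q : Fin N × Fin K, B p q = if p.1 = q.1 then Ψ p.1 p.2 q.2 else 0)
    (hψ : specNorm ((1 / γ) • (B * B) - B) ≤ ψ) (hα0 : 0 < α) (hα : (μ + ψ) / lam2 < α)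
    (v : Fin N × Fin K → ℝ) :
    μ * ∑ p, v p ^ 2
      ≤ v ⬝ᵥ (B *ᵥ v) + α * ∑ l, (fun i => v (i, l)) ⬝ᵥ (L *ᵥ fun i => v (i, l)) := by
  have hN' : (0 : ℝ) < N := by exact_mod_cast hN
  let m : Fin K → ℝ := fun l => (N : ℝ)⁻¹ * ∑ i, v (i, l)
  let e : Fin N × Fin K → ℝ := fun p => m p.2
  let z : Fin N × Fin K → ℝ := fun p => v p - m p.2
  have hz0 : ∀ l, ∑ i, z (i, l) = 0 := by
    intro l
    simp only [z, m, sum_sub_distrib, sum_const, card_univ, Fintype.card_fin, nsmul_eq_mul]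
    field_simp
    ring
  have hv : v = e + z := by
    funext p
    simp [e, z]
  have hBt : Bᵀ = B := by
    ext p q
    rw [Matrix.transpose_apply, hB, hB]
    by_cases h : p.1 = q.1
    · rw [if_pos h, if_pos h.symm, h]
      have := (hΨ q.1).apply p.2 q.2
      simpa using this
    · rw [if_neg h, if_neg (Ne.symm h)]
  -- splitting of the two quadratic forms
  have hvB : v ⬝ᵥ (B *ᵥ v) = e ⬝ᵥ (B *ᵥ e) + 2 * (e ⬝ᵥ (B *ᵥ z)) + z ⬝ᵥ (B *ᵥ z) := by
    have h1 : z ⬝ᵥ (B *ᵥ e) = e ⬝ᵥ (B *ᵥ z) := by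
      rw [Matrix.dotProduct_mulVec, ← Matrix.mulVec_transpose, hBt, dotProduct_comm]
    rw [hv, Matrix.mulVec_add, add_dotProduct, dotProduct_add, dotProduct_add, h1]
    ring
  have hyoung : -(γ * (e ⬝ᵥ e)) - (1 / γ) * ((B *ᵥ z) ⬝ᵥ (B *ᵥ z)) ≤ 2 * (e ⬝ᵥ (B *ᵥ z)) := by
    simp only [dotProduct, mul_sum]
    rw [← sum_neg_distrib, ← sum_sub_distrib]
    refine sum_le_sum fun p _ => ?_
    have h1 : 0 ≤ (1 / γ) * (γ * e p + (B *ᵥ z) p) ^ 2 := by positivity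
    have h2 : (1 / γ) * (γ * e p + (B *ᵥ z) p) ^ 2 = γ * (e p * e p)
        + 2 * (e p * (B *ᵥ z) p) + 1 / γ * ((B *ᵥ z) p * (B *ᵥ z) p) := by
      field_simp
      ring
    linarith
  have hspec : (1 / γ) * ((B *ᵥ z) ⬝ᵥ (B *ᵥ z)) - z ⬝ᵥ (B *ᵥ z) ≤ ψ * ∑ p, z p ^ 2 := by
    have h1 := dotProduct_mulVec_le_specNorm ((1 / γ) • (B * B) - B) z
    have h2 : z ⬝ᵥ ((B * B) *ᵥ z) = (B *ᵥ z) ⬝ᵥ (B *ᵥ z) := by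
      rw [← Matrix.mulVec_mulVec, Matrix.dotProduct_mulVec, ← Matrix.mulVec_transpose, hBt]
    rw [Matrix.sub_mulVec, Matrix.smul_mulVec, dotProduct_sub, dotProduct_smul, smul_eq_mul,
      h2] at h1
    exact h1.trans (mul_le_mul_of_nonneg_right hψ (sum_nonneg fun _ _ => sq_nonneg _))
  have hee : e ⬝ᵥ e = N * ∑ l, m l ^ 2 := by
    simp [dotProduct, e, Fintype.sum_prod_type, sq]
  have hexc' : N * ((μ + γ) * ∑ l, m l ^ 2) ≤ e ⬝ᵥ (B *ᵥ e) := by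
    have h1 := hexc.posSemidef.dotProduct_mulVec_nonneg m
    rw [star_trivial, Matrix.sub_mulVec, Matrix.smul_mulVec, Matrix.smul_mulVec,
      Matrix.one_mulVec, dotProduct_sub, dotProduct_smul, dotProduct_smul, smul_eq_mul,
      smul_eq_mul, Matrix.sum_mulVec, dotProduct_sum] at h1
    have h2 : e ⬝ᵥ (B *ᵥ e) = ∑ i, m ⬝ᵥ (Ψ i *ᵥ m) := by
      simp only [dotProduct, Matrix.mulVec, Fintype.sum_prod_type, hB, e, ite_mul, zero_mul]
      refine sum_congr rfl fun i _ => sum_congr rfl fun l _ => ?_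
      congr 1
      rw [sum_comm]
      simp
    have h3 : m ⬝ᵥ m = ∑ l, m l ^ 2 := by simp [dotProduct, sq]
    rw [← h2, h3] at h1
    have h4 := mul_nonneg hN'.le h1
    rw [mul_sub, ← mul_assoc, mul_inv_cancel₀ hN'.ne', one_mul] at h4
    linarith
  have hlap : lam2 * ∑ p, z p ^ 2 ≤ ∑ l, (fun i => v (i, l)) ⬝ᵥ (L *ᵥ fun i => v (i, l)) := by
    rw [Fintype.sum_prod_type_right, mul_sum]
    refine sum_le_sum fun l _ => ?_
    have h1 := laplacian_lower hL hL1 hfiedler (m l) (fun i => z (i, l)) (hz0 l)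
    simpa [z] using h1
  have hsq : ∑ p, v p ^ 2 = N * ∑ l, m l ^ 2 + ∑ p, z p ^ 2 := by
    have h1 : ∀ p, v p ^ 2 = m p.2 ^ 2 + 2 * (m p.2 * z p) + z p ^ 2 := fun p => by
      simp only [z]
      ring
    simp only [h1, sum_add_distrib]
    have h2 : ∑ p : Fin N × Fin K, 2 * (m p.2 * z p) = 0 := by
      rw [Fintype.sum_prod_type_right]
      refine sum_eq_zero fun l _ => ?_
      simp only
      rw [← mul_sum, ← mul_sum, hz0, mul_zero, mul_zero]
    rw [h2, add_zero]
    simp [Fintype.sum_prod_type]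
  have hz2 : 0 ≤ ∑ p, z p ^ 2 := sum_nonneg fun _ _ => sq_nonneg _
  have hgain : μ + ψ ≤ α * lam2 := ((div_lt_iff₀ hlam2).1 hα).le
  have h5 := mul_le_mul_of_nonneg_left hlap hα0.le
  have h6 := mul_le_mul_of_nonneg_right hgain hz2
  rw [hvB, hsq]
  rw [hee] at hyoung
  linarith

end ObserverISS

namespace ObserverISS

open Finset

/-! ### The differential inequality -/

/-- Comparison of quadratic forms, by compactness of the unit sphere. -/
lemma exists_form_le {E : Type*} [NormedAddCommGroup E] [NormedSpace ℝ E] [FiniteDimensional ℝ E]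
    {f g : E → ℝ} (hf : Continuous f) (hg : Continuous g) (hf2 : ∀ (r : ℝ) x, f (r • x) = r ^ 2 * f x)
    (hg2 : ∀ (r : ℝ) x, g (r • x) = r ^ 2 * g x) (hpos : ∀ x, x ≠ 0 → 0 < g x) :
    ∃ C > 0, ∀ x, f x ≤ C * g x := by
  have hne : ∀ x ∈ Metric.sphere (0 : E) 1, g x ≠ 0 := fun x hx =>
    (hpos x fun h0 => by simp [h0] at hx).ne'
  obtain ⟨B, hB⟩ := (isCompact_sphere (0 : E) 1).bddAbove_image
    (hf.continuousOn.div hg.continuousOn hne)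
  refine ⟨max B 1, lt_max_of_lt_right one_pos, fun x => ?_⟩
  by_cases hx : x = 0
  · have h1 := hf2 0 x
    have h2 := hg2 0 x
    rw [hx] at h1 h2 ⊢
    simp only [smul_zero, ne_eq, OfNat.ofNat_ne_zero, not_false_eq_true, zero_pow,
      zero_mul] at h1 h2
    rw [h1, h2, mul_zero]
  · have hn : ‖x‖ ≠ 0 := norm_ne_zero_iff.2 hx
    have hmem : ‖x‖⁻¹ • x ∈ Metric.sphere (0 : E) 1 := by
      rw [mem_sphere_zero_iff_norm, norm_smul, norm_inv, norm_norm, inv_mul_cancel₀ hn]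
    have h1 : f (‖x‖⁻¹ • x) / g (‖x‖⁻¹ • x) ≤ B := hB ⟨_, hmem, rfl⟩
    rw [hf2, hg2, mul_div_mul_left _ _ (pow_ne_zero 2 (inv_ne_zero hn)),
      div_le_iff₀ (hpos x hx)] at h1
    exact h1.trans (mul_le_mul_of_nonneg_right (le_max_left _ _) (hpos x hx).le)

lemma partialSum_smul {n : ℕ} (r : ℝ) (ε : Fin n → ℝ) (j : ℕ) :
    partialSum (r • ε) j = r * partialSum ε j := by
  simp [partialSum, mul_sum]

lemma drift_smul {n : ℕ} (c : ℕ → ℝ) (r : ℝ) (ε : Fin n → ℝ) (w : ℝ) (j : Fin n) :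
    drift c (r • ε) (r * w) j = r * drift c ε w j := by
  simp only [drift, partialSum_smul]
  ring

lemma continuous_partialSum {n : ℕ} (j : ℕ) :
    Continuous fun y : (Fin n → ℝ) × ℝ => partialSum y.1 j := by
  refine continuous_finsetSum _ fun m _ => ?_
  split_ifs <;> fun_prop

/-- The storage function of one coordinate of the observer error. -/
noncomputable def storage {n : ℕ} (P : Matrix (Fin n) (Fin n) ℝ) (y : (Fin n → ℝ) × ℝ) : ℝ :=
  (y.2 ^ 2 + ∑ i, ∑ j, P i j * y.1 i * y.1 j) / 2

/-- The dissipation rate of one coordinate of the observer error. -/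
def dissipation {n : ℕ} (c : ℕ → ℝ) (δ : ℝ) (P : Matrix (Fin n) (Fin n) ℝ)
    (y : (Fin n → ℝ) × ℝ) : ℝ :=
  δ * y.2 ^ 2 - c 1 * y.2 * partialSum y.1 1 - ∑ i, ∑ j, P i j * y.1 i * drift c y.1 y.2 j

/-- Coefficient of the input in the derivative of the storage function. -/
def inputGain {n : ℕ} (P : Matrix (Fin n) (Fin n) ℝ) (y : (Fin n → ℝ) × ℝ) : ℝ :=
  (if n = 0 then y.2 else 0) + ∑ i, ∑ j : Fin n, P i j * y.1 i * (if (j : ℕ) + 1 = n then 1 else 0)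

/-- The squared norm of one coordinate of the observer error, in the transformed variables. -/
def errorForm {n : ℕ} (k : ℕ → ℝ) (y : (Fin n → ℝ) × ℝ) : ℝ :=
  ∑ m : Fin (n + 1), (k (m + 1) * (partialSum y.1 m + y.2)) ^ 2

section forms

variable {n : ℕ} (c k : ℕ → ℝ) (δ : ℝ) (P : Matrix (Fin n) (Fin n) ℝ)

lemma continuous_storage : Continuous (storage P) := by
  unfold storage
  fun_prop

lemma continuous_dissipation : Continuous (dissipation c δ P) := by
  have := fun j => continuous_partialSum (n := n) j
  unfold dissipation drift
  fun_prop

lemma continuous_inputGain : Continuous (inputGain P) := by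
  unfold inputGain
  split_ifs <;> fun_prop

lemma continuous_errorForm : Continuous (errorForm (n := n) k) := by
  have := fun j => continuous_partialSum (n := n) j
  unfold errorForm
  fun_prop

lemma storage_smul (r : ℝ) (y : (Fin n → ℝ) × ℝ) : storage P (r • y) = r ^ 2 * storage P y := by
  have h1 : ∑ i, ∑ j, P i j * (r • y).1 i * (r • y).1 j
      = r ^ 2 * ∑ i, ∑ j, P i j * y.1 i * y.1 j := by
    simp only [mul_sum]
    refine sum_congr rfl fun i _ => sum_congr rfl fun j _ => ?_
    simp only [Prod.smul_fst, Pi.smul_apply, smul_eq_mul]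
    ring
  rw [storage, storage, h1, Prod.smul_snd, smul_eq_mul]
  ring

lemma dissipation_smul (r : ℝ) (y : (Fin n → ℝ) × ℝ) :
    dissipation c δ P (r • y) = r ^ 2 * dissipation c δ P y := by
  have h1 : ∑ i, ∑ j, P i j * (r • y).1 i * drift c (r • y).1 (r • y).2 j
      = r ^ 2 * ∑ i, ∑ j, P i j * y.1 i * drift c y.1 y.2 j := by
    simp only [mul_sum]
    refine sum_congr rfl fun i _ => sum_congr rfl fun j _ => ?_
    simp only [Prod.smul_fst, Prod.smul_snd, Pi.smul_apply, smul_eq_mul, drift_smul]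
    ring
  rw [dissipation, dissipation, h1, Prod.smul_snd, Prod.smul_fst, smul_eq_mul, partialSum_smul]
  ring

lemma inputGain_smul (r : ℝ) (y : (Fin n → ℝ) × ℝ) :
    inputGain P (r • y) = r * inputGain P y := by
  simp only [inputGain, mul_add, mul_sum, Prod.smul_fst, Prod.smul_snd, Pi.smul_apply, smul_eq_mul]
  congr 1
  · split_ifs <;> simp
  · exact sum_congr rfl fun i _ => sum_congr rfl fun j _ => by ring

lemma errorForm_smul (r : ℝ) (y : (Fin n → ℝ) × ℝ) :
    errorForm k (r • y) = r ^ 2 * errorForm k y := by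
  simp only [errorForm, mul_sum, Prod.smul_fst, Prod.smul_snd, smul_eq_mul, partialSum_smul]
  exact sum_congr rfl fun i _ => by ring

variable {c k δ P}

lemma IsStorage.storage_pos (h : IsStorage c δ P) {y : (Fin n → ℝ) × ℝ} (hy : y ≠ 0) :
    0 < storage P y := by
  obtain ⟨ε, w⟩ := y
  unfold storage
  by_cases hε : ε = 0
  · have hw : w ≠ 0 := fun hw => hy (by rw [hε, hw]; rfl)
    have := pow_pos (abs_pos.2 hw) 2
    rw [sq_abs] at this
    simpa [hε] using this
  · have h1 := h.2.1 ε hε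
    have h2 := sq_nonneg w
    dsimp only
    linarith

lemma IsStorage.dissipation_pos (h : IsStorage c δ P) {y : (Fin n → ℝ) × ℝ} (hy : y ≠ 0) :
    0 < dissipation c δ P y := by
  obtain ⟨ε, w⟩ := y
  refine h.2.2 ε w ?_
  by_contra hcon
  push Not at hcon
  exact hy (Prod.ext hcon.1 hcon.2)

lemma errorForm_pos (hk : ∀ m ≤ n, 0 < k (m + 1)) {y : (Fin n → ℝ) × ℝ} (hy : y ≠ 0) :
    0 < errorForm k y := by
  refine lt_of_le_of_ne (sum_nonneg fun _ _ => sq_nonneg _) fun h0 => hy ?_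
  rw [errorForm, eq_comm, sum_eq_zero_iff_of_nonneg fun _ _ => sq_nonneg _] at h0
  have h1 : ∀ m ≤ n, partialSum y.1 m + y.2 = 0 := by
    intro m hm
    have h2 := pow_eq_zero_iff two_ne_zero |>.1 (h0 ⟨m, by omega⟩ (mem_univ _))
    exact (mul_eq_zero.1 h2).resolve_left (hk m hm).ne'
  have hw : y.2 = 0 := by simpa [partialSum_zero] using h1 0 (Nat.zero_le _)
  refine Prod.ext ?_ hw
  by_contra hε
  obtain ⟨j, -, hj, hne⟩ := exists_partialSum_ne hε
  exact hne (by simpa [hw] using h1 j hj)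

end forms

/-- Along the error dynamics the total storage decays up to the size of the input. -/
lemma storage_deriv_le {ι : Type*} [Fintype ι] {n : ℕ} {c : ℕ → ℝ} {δ : ℝ}
    {P : Matrix (Fin n) (Fin n) ℝ} (hP : IsStorage c δ P) :
    ∃ lam > 0, ∃ C > 0, ∀ (w : ℝ → ι → ℝ) (ε : ℝ → ι → Fin n → ℝ)
      (d : ι → ℝ) (Aw : ι → ℝ) (t : ℝ),
      (∀ p, HasDerivAt (fun s => w s p) (c 1 * (partialSum (ε t p) 1 + w t p) - Aw p
        + (if n = 0 then d p else 0)) t) →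
      (∀ p j, HasDerivAt (fun s => ε s p j) (drift c (ε t p) (w t p) j
        + (if (j : ℕ) + 1 = n then d p else 0)) t) →
      (c 1 + δ) * ∑ p, w t p ^ 2 ≤ ∑ p, w t p * Aw p →
      ∃ V', HasDerivAt (fun s => ∑ p, storage P (ε s p, w s p)) V' t ∧
        V' ≤ -(2 * lam) * ∑ p, storage P (ε t p, w t p) + C * ∑ p, d p ^ 2 := by
  obtain ⟨C₁, hC₁, h1⟩ := exists_form_le (continuous_storage P) (continuous_dissipation c δ P)
    (storage_smul P) (dissipation_smul c δ P) fun y hy => hP.dissipation_pos hy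
  obtain ⟨C₂, hC₂, h2⟩ := exists_form_le (f := fun y => inputGain P y ^ 2)
    ((continuous_inputGain P).pow 2)
    (continuous_dissipation c δ P)
    (fun r x => by rw [inputGain_smul, mul_pow]) (dissipation_smul c δ P)
    fun y hy => hP.dissipation_pos hy
  refine ⟨1 / (4 * C₁), by positivity, C₂ / 2, by positivity, ?_⟩
  intro w ε d Aw t hw hε hA
  -- derivative of the storage of one coordinate
  have hder : ∀ p, HasDerivAt (fun s => storage P (ε s p, w s p))
      (c 1 * w t p ^ 2 + δ * w t p ^ 2 - w t p * Aw p
        - dissipation c δ P (ε t p, w t p) + inputGain P (ε t p, w t p) * d p) t := by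
    intro p
    set w' := c 1 * (partialSum (ε t p) 1 + w t p) - Aw p + (if n = 0 then d p else 0) with hw'
    set ε' : Fin n → ℝ := fun j => drift c (ε t p) (w t p) j
        + (if (j : ℕ) + 1 = n then d p else 0) with hε'
    have h3 : HasDerivAt (fun s => storage P (ε s p, w s p))
        ((2 * w t p ^ (2 - 1) * w' + ∑ i, ∑ j, (P i j * ε' i * ε t p j
          + P i j * ε t p i * ε' j)) / 2) t := by
      refine HasDerivAt.div_const (HasDerivAt.add ((hw p).pow 2) ?_) 2
      refine HasDerivAt.fun_sum fun i _ => HasDerivAt.fun_sum fun j _ => ?_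
      exact ((hε p i).const_mul (P i j)).mul (hε p j)
    have h4 : ∑ i, ∑ j, (P i j * ε' i * ε t p j + P i j * ε t p i * ε' j)
        = 2 * ∑ i, ∑ j, P i j * ε t p i * ε' j := by
      have h5 : ∑ i, ∑ j, P i j * ε' i * ε t p j = ∑ i, ∑ j, P i j * ε t p i * ε' j := by
        rw [sum_comm]
        exact sum_congr rfl fun i _ => sum_congr rfl fun j _ => by rw [hP.1 j i]; ring
      simp only [sum_add_distrib, h5]
      ring
    have h6 : ∑ i, ∑ j, P i j * ε t p i * ε' j
        = ∑ i, ∑ j, P i j * ε t p i * drift c (ε t p) (w t p) j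
          + (∑ i, ∑ j : Fin n, P i j * ε t p i * (if (j : ℕ) + 1 = n then 1 else 0)) * d p := by
      rw [sum_mul, ← sum_add_distrib]
      refine sum_congr rfl fun i _ => ?_
      rw [sum_mul, ← sum_add_distrib]
      refine sum_congr rfl fun j _ => ?_
      simp only [hε']
      split_ifs <;> ring
    convert h3 using 1
    rw [h4, h6, hw', dissipation, inputGain]
    dsimp only
    split_ifs <;> ring
  refine ⟨_, HasDerivAt.fun_sum fun p _ => hder p, ?_⟩
  have h7 : ∀ p, -dissipation c δ P (ε t p, w t p) + inputGain P (ε t p, w t p) * d p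
      ≤ -(2 * (1 / (4 * C₁))) * storage P (ε t p, w t p) + C₂ / 2 * d p ^ 2 := by
    intro p
    have h8 := h1 (ε t p, w t p)
    have h9 := h2 (ε t p, w t p)
    set D := dissipation c δ P (ε t p, w t p)
    set G := inputGain P (ε t p, w t p)
    set v := storage P (ε t p, w t p)
    have h10 : G * d p ≤ D / 2 + C₂ / 2 * d p ^ 2 := by
      have h11 : 0 ≤ (G - C₂ * d p) ^ 2 := sq_nonneg _
      have h12 : C₂ * (2 * (G * d p)) ≤ C₂ * (D + C₂ * d p ^ 2) := by nlinarith
      have := le_of_mul_le_mul_left h12 hC₂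
      linarith
    have h13 : 2 * (1 / (4 * C₁)) * v ≤ D / 2 := by
      have : 2 * (1 / (4 * C₁)) * v = v / C₁ / 2 := by
        field_simp
        ring
      rw [this]
      have : v / C₁ ≤ D := by
        rw [div_le_iff₀ hC₁]
        linarith
      linarith
    linarith
  have h14 := sum_le_sum fun p (_ : p ∈ univ) => h7 p
  rw [sum_add_distrib, sum_add_distrib, ← mul_sum, ← mul_sum] at h14
  have h15 : ∑ p, (c 1 * w t p ^ 2 + δ * w t p ^ 2 - w t p * Aw p
      - dissipation c δ P (ε t p, w t p) + inputGain P (ε t p, w t p) * d p)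
      = ((c 1 + δ) * ∑ p, w t p ^ 2 - ∑ p, w t p * Aw p)
        + (∑ p, -dissipation c δ P (ε t p, w t p)
          + ∑ p, inputGain P (ε t p, w t p) * d p) := by
    rw [mul_sum, ← sum_sub_distrib, ← sum_add_distrib, ← sum_add_distrib]
    exact sum_congr rfl fun p _ => by ring
  rw [h15]
  linarith

/-- Comparison principle for `V' ≤ -2 λ V + b` with a bound `b ≤ 2 λ B` up to time `t`. -/
lemma comparison {V V' : ℝ → ℝ} {lam B t₀ t : ℝ} (ht : t₀ ≤ t) (hB : 0 ≤ B)
    (hV : ∀ s, t₀ ≤ s → HasDerivAt V (V' s) s)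
    (hle : ∀ s ∈ Set.Icc t₀ t, V' s ≤ -(2 * lam) * V s + 2 * lam * B) :
    V t ≤ V t₀ * Real.exp (-lam * (t - t₀)) ^ 2 + B := by
  let f : ℝ → ℝ := fun s => (V s - B) * Real.exp (2 * lam * (s - t₀))
  have hf : ∀ s, t₀ ≤ s → HasDerivAt f (V' s * Real.exp (2 * lam * (s - t₀))
      + (V s - B) * (Real.exp (2 * lam * (s - t₀)) * (2 * lam))) s := by
    intro s hs
    have h1 : HasDerivAt (fun s => 2 * lam * (s - t₀)) (2 * lam) s := by
      simpa using ((hasDerivAt_id s).sub_const t₀).const_mul (2 * lam)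
    exact ((hV s hs).sub_const B).mul h1.exp
  have hanti : AntitoneOn f (Set.Icc t₀ t) := by
    refine antitoneOn_of_deriv_nonpos (convex_Icc _ _)
      (fun s hs => (hf s hs.1).continuousAt.continuousWithinAt)
      (fun s hs => (hf s (interior_subset hs).1).differentiableAt.differentiableWithinAt) ?_
    intro s hs
    have hs' := interior_subset hs
    rw [(hf s hs'.1).deriv]
    have h1 := hle s hs'
    have h2 := Real.exp_pos (2 * lam * (s - t₀))
    have h3 : (V' s + (V s - B) * (2 * lam)) * Real.exp (2 * lam * (s - t₀)) ≤ 0 :=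
      mul_nonpos_of_nonpos_of_nonneg (by linarith) h2.le
    linarith
  have h1 := hanti (Set.left_mem_Icc.2 ht) (Set.right_mem_Icc.2 ht) ht
  simp only [f, sub_self, mul_zero, Real.exp_zero, mul_one] at h1
  have h2 : Real.exp (2 * lam * (t - t₀)) * Real.exp (-lam * (t - t₀)) ^ 2 = 1 := by
    rw [← Real.exp_nat_mul, ← Real.exp_add]
    simp only [Nat.cast_ofNat]
    rw [show 2 * lam * (t - t₀) + 2 * (-lam * (t - t₀)) = 0 by ring, Real.exp_zero]
  have h3 := mul_le_mul_of_nonneg_right h1 (sq_nonneg (Real.exp (-lam * (t - t₀))))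
  rw [mul_assoc, h2, mul_one, sub_mul] at h3
  have h4 := mul_nonneg hB (sq_nonneg (Real.exp (-lam * (t - t₀))))
  linarith

end ObserverISS

namespace ObserverISS

open Finset

/-! ### The error dynamics -/

lemma partialSum_diff {n : ℕ} (g : ℕ → ℝ) {m : ℕ} (hm : m ≤ n) :
    partialSum (fun j : Fin n => g (j + 1) - g j) m = g m - g 0 := by
  induction m with
  | zero => simp [partialSum_zero]
  | succ m ih =>
    have h1 := partialSum_succ (fun j : Fin n => g (j + 1) - g j) ⟨m, hm⟩
    simp only at h1
    rw [h1, ih (by omega)]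
    ring

/-- Input-to-state estimate for the error coordinates `ee t p m` of the observer, where `Ae` is
the output injection. The errors are rescaled by the gains and replaced by their successive
differences; the last equation carries the input. -/
lemma iss_of_error_dynamics {N K n : ℕ} (hN : 0 < N) {k : ℕ → ℝ} (hk : ∀ m ≤ n, 0 < k (m + 1))
    {δ : ℝ} {c : ℕ → ℝ} {P : Matrix (Fin n) (Fin n) ℝ} (hP : IsStorage c δ P)
    (hc : ∀ m, 1 ≤ m → m ≤ n → c m = k (m + 1) / k m) (hcn : c (n + 1) = 0)
    {ee : ℝ → Fin N × Fin K → ℕ → ℝ} (hee : ∀ s p, ee s p (n + 1) = 0) {u : ℝ → Fin K → ℝ}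
    (hu : ∃ Umax : ℝ, ∀ s : ℝ, euclNorm (u s) ≤ Umax) {Ae : ℝ → Fin N × Fin K → ℝ} {t₀ : ℝ}
    (hed : ∀ t, t₀ ≤ t → ∀ p, ∀ m ≤ n, HasDerivAt (fun s => ee s p m)
      (ee t p (m + 1) + (if m = n then u t p.2 else 0) - k (m + 1) * Ae t p) t)
    (hA : ∀ t, t₀ ≤ t → (c 1 + δ) / k 1 * ∑ p, ee t p 0 ^ 2 ≤ ∑ p, ee t p 0 * Ae t p) :
    ∃ C > (0 : ℝ), ∃ lam > (0 : ℝ), ∃ ρ > (0 : ℝ), ∀ t, t₀ ≤ t →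
      Real.sqrt (∑ p, ∑ m : Fin (n + 1), ee t p m ^ 2)
        ≤ C * Real.sqrt (∑ p, ∑ m : Fin (n + 1), ee t₀ p m ^ 2) * Real.exp (-lam * (t - t₀))
          + ρ * sSup ((fun s => euclNorm (u s)) '' Set.Icc t₀ t) := by
  obtain ⟨lam, hlam, C, hC, hV⟩ := storage_deriv_le (ι := Fin N × Fin K) hP
  obtain ⟨C₃, hC₃, h3⟩ := exists_form_le (continuous_errorForm (n := n) k) (continuous_storage P)
    (errorForm_smul k) (storage_smul P) fun y hy => hP.storage_pos hy
  obtain ⟨C₄, hC₄, h4⟩ := exists_form_le (continuous_storage P) (continuous_errorForm (n := n) k)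
    (storage_smul P) (errorForm_smul k) fun y hy => errorForm_pos hk hy
  have hk1 : 0 < k 1 := hk 0 (Nat.zero_le n)
  have hkn : 0 < k (n + 1) := hk n le_rfl
  have hN' : (0 : ℝ) < N := by exact_mod_cast hN
  let w : ℝ → Fin N × Fin K → ℝ := fun s p => ee s p 0 / k 1
  let ε : ℝ → Fin N × Fin K → Fin n → ℝ := fun s p j =>
    ee s p (j + 1) / k (j + 1 + 1) - ee s p j / k (j + 1)
  let d : ℝ → Fin N × Fin K → ℝ := fun s p => u s p.2 / k (n + 1)
  have hps : ∀ s p m, m ≤ n → partialSum (ε s p) m + w s p = ee s p m / k (m + 1) := by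
    intro s p m hm
    have h5 := partialSum_diff (fun j => ee s p j / k (j + 1)) hm
    simp only [ε, w, h5, zero_add]
    ring
  have hcps : ∀ s p m, m ≤ n → c (m + 1) * (partialSum (ε s p) (m + 1) + w s p)
      = ee s p (m + 1) / k (m + 1) := by
    intro s p m hm
    have hkm := (hk m hm).ne'
    rcases hm.lt_or_eq with hlt | rfl
    · rw [hps s p (m + 1) hlt, hc (m + 1) (by omega) hlt]
      have := (hk (m + 1) hlt).ne'
      field_simp
    · rw [hcn, hee, zero_mul, zero_div]
  have herr : ∀ s, ∑ p, ∑ m : Fin (n + 1), ee s p m ^ 2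
      = ∑ p, errorForm k (ε s p, w s p) := by
    intro s
    refine sum_congr rfl fun p _ => sum_congr rfl fun m _ => ?_
    dsimp only
    rw [hps s p m (by omega), mul_div_cancel₀]
    exact (hk m (by omega)).ne'
  have hVd : ∀ t, t₀ ≤ t → ∃ V', HasDerivAt (fun s => ∑ p, storage P (ε s p, w s p)) V' t ∧
      V' ≤ -(2 * lam) * ∑ p, storage P (ε t p, w t p) + C * ∑ p, d t p ^ 2 := by
    intro t ht
    refine hV w ε (d t) (Ae t) t (fun p => ?_) (fun p j => ?_) ?_
    · refine ((hed t ht p 0 (Nat.zero_le n)).div_const (k 1)).congr_deriv ?_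
      have h5 := hcps t p 0 (Nat.zero_le n)
      rw [zero_add] at h5
      rw [h5, zero_add]
      by_cases h0 : n = 0
      · subst h0
        simp only [if_true, d]
        field_simp
        ring
      · rw [if_neg h0, if_neg (Ne.symm h0)]
        field_simp
        ring
    · have hj := j.2
      have hk2 := (hk (j + 1) hj).ne'
      have hk3 := (hk j hj.le).ne'
      refine (((hed t ht p (j + 1) hj).div_const (k (j + 1 + 1))).sub
        ((hed t ht p j hj.le).div_const (k (j + 1)))).congr_deriv ?_
      rw [drift, hcps t p j hj.le, show (j : ℕ) + 2 = j + 1 + 1 from rfl, hcps t p (j + 1) hj,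
        if_neg hj.ne]
      by_cases h0 : (j : ℕ) + 1 = n
      · rw [if_pos h0, if_pos h0]
        simp only [d, ← h0]
        field_simp
        ring
      · rw [if_neg h0, if_neg h0]
        field_simp
        ring
    · have h5 := hA t ht
      have h6 : ∑ p, w t p ^ 2 = (∑ p, ee t p 0 ^ 2) / k 1 ^ 2 := by
        rw [sum_div]
        exact sum_congr rfl fun p _ => div_pow _ _ _
      have h7 : ∑ p, w t p * Ae t p = (∑ p, ee t p 0 * Ae t p) / k 1 := by
        rw [sum_div]
        exact sum_congr rfl fun p _ => by simp only [w]; ring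
      rw [h6, h7, le_div_iff₀ hk1]
      refine le_trans (le_of_eq ?_) h5
      field_simp
  choose! V' hV1 hV2 using hVd
  have hdsum : ∀ s, ∑ p, d s p ^ 2 = N / k (n + 1) ^ 2 * euclNorm (u s) ^ 2 := by
    intro s
    rw [euclNorm, Real.sq_sqrt (sum_nonneg fun _ _ => sq_nonneg _), Fintype.sum_prod_type]
    simp only [d, div_pow, ← sum_div, sum_const, card_univ, Fintype.card_fin, nsmul_eq_mul]
    ring
  let r : ℝ := C₃ * (C * (N / k (n + 1) ^ 2) / (2 * lam))
  have hr : 0 < r := by positivity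
  refine ⟨Real.sqrt (C₃ * C₄), Real.sqrt_pos.2 (by positivity), lam, hlam, Real.sqrt r,
    Real.sqrt_pos.2 hr, ?_⟩
  intro t ht
  set S := sSup ((fun s => euclNorm (u s)) '' Set.Icc t₀ t) with hS
  have hSle : ∀ s ∈ Set.Icc t₀ t, euclNorm (u s) ≤ S := by
    intro s hs
    obtain ⟨Umax, hUmax⟩ := hu
    refine le_csSup ⟨Umax, ?_⟩ ⟨s, hs, rfl⟩
    rintro _ ⟨s', -, rfl⟩
    exact hUmax s'
  have hS0 : 0 ≤ S := (Real.sqrt_nonneg _).trans (hSle t (Set.right_mem_Icc.2 ht))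
  have hcomp := comparison (B := C * (N / k (n + 1) ^ 2) / (2 * lam) * S ^ 2) ht (by positivity)
    hV1 (by
      intro s hs
      refine (hV2 s hs.1).trans ?_
      rw [hdsum]
      have h5 : euclNorm (u s) ^ 2 ≤ S ^ 2 :=
        pow_le_pow_left₀ (Real.sqrt_nonneg _) (hSle s hs) 2
      have h6 : 2 * lam * (C * (N / k (n + 1) ^ 2) / (2 * lam) * S ^ 2)
          = C * (N / k (n + 1) ^ 2 * S ^ 2) := by
        field_simp
      rw [h6]
      gcongr)
  rw [herr, herr]
  have h5 : ∑ p, errorForm k (ε t p, w t p) ≤ C₃ * ∑ p, storage P (ε t p, w t p) := by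
    rw [mul_sum]
    exact sum_le_sum fun p _ => h3 _
  have h6 : ∑ p, storage P (ε t₀ p, w t₀ p) ≤ C₄ * ∑ p, errorForm k (ε t₀ p, w t₀ p) := by
    rw [mul_sum]
    exact sum_le_sum fun p _ => h4 _
  have hE0 : 0 ≤ ∑ p, errorForm k (ε t₀ p, w t₀ p) :=
    sum_nonneg fun p _ => sum_nonneg fun _ _ => sq_nonneg _
  set E₀ := ∑ p, errorForm k (ε t₀ p, w t₀ p)
  set X := Real.exp (-lam * (t - t₀))
  have hX : 0 < X := Real.exp_pos _
  have h7 : ∑ p, errorForm k (ε t p, w t p) ≤ C₃ * C₄ * E₀ * X ^ 2 + r * S ^ 2 := by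
    refine h5.trans ((mul_le_mul_of_nonneg_left hcomp hC₃.le).trans ?_)
    have h8 := mul_le_mul_of_nonneg_left
      (mul_le_mul_of_nonneg_right h6 (sq_nonneg X)) hC₃.le
    simp only [r]
    linarith
  have ha : 0 ≤ Real.sqrt (C₃ * C₄) * Real.sqrt E₀ * X := by positivity
  have hb : 0 ≤ Real.sqrt r * S := by positivity
  refine Real.sqrt_le_iff.2 ⟨add_nonneg ha hb, h7.trans ?_⟩
  have h9 : (Real.sqrt (C₃ * C₄) * Real.sqrt E₀ * X) ^ 2 = C₃ * C₄ * E₀ * X ^ 2 := by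
    rw [mul_pow, mul_pow, Real.sq_sqrt (by positivity), Real.sq_sqrt hE0]
  have h10 : (Real.sqrt r * S) ^ 2 = r * S ^ 2 := by
    rw [mul_pow, Real.sq_sqrt hr.le]
  rw [← h9, ← h10]
  nlinarith [mul_nonneg ha hb]

end ObserverISS

/-- Lemma 5 of the paper: input-to-state stability of the distributed
consensus-based observer when a bounded piecewise-continuous input `u` enters the last
integrator of the target dynamics.  Setting and hypotheses (i), (ii), (iii) as in
Theorem 2 of the paper; gains indexed 1-based. -/
theorem distributed_observer_iss (N K M : ℕ) (hN : 2 ≤ N) (hK : 1 ≤ K) (hM : 1 ≤ M)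
    (a : Fin N → Fin N → ℝ) (ha_symm : ∀ i j, a i j = a j i)
    (ha_nonneg : ∀ i j, 0 ≤ a i j) (ha_diag : ∀ i, a i i = 0)
    (L : Matrix (Fin N) (Fin N) ℝ)
    (hL : ∀ i j, L i j = if i = j then ∑ l, a i l else -(a i j))
    (hLpsd : L.PosSemidef) (hL1 : L *ᵥ (fun _ => (1 : ℝ)) = 0)
    (lam2 : ℝ) (hlam2 : 0 < lam2)
    (hfiedler : ∀ v : Fin N → ℝ, (∑ i, v i) = 0 →
      lam2 * (∑ i, v i ^ 2) ≤ v ⬝ᵥ (L *ᵥ v))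
    (t₀ : ℝ)
    -- the bounded piecewise-continuous input
    (u : ℝ → Fin K → ℝ)
    (hu_bdd : ∃ Umax : ℝ, ∀ s : ℝ, euclNorm (u s) ≤ Umax)
    (hu_pw : ∃ D : Set ℝ, D.Countable ∧ ∀ s ∉ D, ContinuousAt u s)
    -- the target: a chain of M integrators driven by u in the last block
    (x : ℝ → Fin M → Fin K → ℝ)
    (hx : ∀ (m : Fin M) (t : ℝ), HasDerivAt (fun s => x s m)
      (if h : (m : ℕ) + 1 < M then x t ⟨(m : ℕ) + 1, h⟩ else u t) t)
    -- the measurement models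
    (Ψ : Fin N → ℝ → (Fin M → Fin K → ℝ) → Matrix (Fin K) (Fin K) ℝ)
    (hΨcont : ∀ i, Continuous (fun p : ℝ × (Fin M → Fin K → ℝ) => Ψ i p.1 p.2))
    (hΨsymm : ∀ i t v, (Ψ i t v).IsHermitian)
    (y : Fin N → ℝ → Fin K → ℝ)
    (hy : ∀ i t, y i t = (Ψ i t (x t)) *ᵥ (x t ⟨0, hM⟩))
    -- the distributed observer
    (k : ℕ → ℝ) (hk : ∀ m, 1 ≤ m → m ≤ M → 0 < k m)
    (α : ℝ) (hα0 : 0 < α)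
    (xhat : Fin N → ℝ → Fin M → Fin K → ℝ)
    (dlt : Fin N → ℝ → Fin K → ℝ)
    (hdlt : ∀ i t, dlt i t =
      y i t - (Ψ i t (x t)) *ᵥ (xhat i t ⟨0, hM⟩)
        - α • ∑ j, a i j • (xhat i t ⟨0, hM⟩ - xhat j t ⟨0, hM⟩))
    (hobs : ∀ (i : Fin N) (m : Fin M) (t : ℝ), HasDerivAt (fun s => xhat i s m)
      ((if h : (m : ℕ) + 1 < M then xhat i t ⟨(m : ℕ) + 1, h⟩ else 0)
        + k ((m : ℕ) + 1) • dlt i t) t)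
    -- hypothesis (i): spatial excitation
    (δ γ : ℝ) (hδ : 0 < δ) (hγ : 0 < γ)
    (μ : ℝ) (hμ : μ = if M = 1 then δ else (δ * k 1 + k 2) / (k 1) ^ 2)
    (hexc : ∀ t, t₀ ≤ t →
      (((N : ℝ))⁻¹ • (∑ i, Ψ i t (x t))
        - (μ + γ) • (1 : Matrix (Fin K) (Fin K) ℝ)).PosDef)
    -- hypothesis (ii): bound on the measurement matrices and consensus-gain condition
    (Ψb : ℝ → Matrix (Fin N × Fin K) (Fin N × Fin K) ℝ)
    (hΨb : ∀ t (p q : Fin N × Fin K),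
      Ψb t p q = if p.1 = q.1 then Ψ p.1 t (x t) p.2 q.2 else 0)
    (ψ : ℝ) (hψ0 : 0 ≤ ψ)
    (hψ : ∀ t, t₀ ≤ t → specNorm ((1 / γ) • (Ψb t * Ψb t) - Ψb t) ≤ ψ)
    (hα : (μ + ψ) / lam2 < α)
    -- hypothesis (iii): LMI on the gain ratios, for M ≥ 3
    (Sb : Matrix (Fin M) (Fin M) ℝ)
    (hSb : ∀ p q : Fin M, Sb p q =
      if (p : ℕ) = 0 then k M / k (M - 1)
      else if 1 ≤ (p : ℕ) ∧ (p : ℕ) ≤ (q : ℕ) ∧ (q : ℕ) < M - 1 then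
        k (M - (p : ℕ)) / k (M - 1 - (p : ℕ)) - k (M - (p : ℕ) + 1) / k (M - (p : ℕ))
      else if (p : ℕ) = (q : ℕ) + 1 then -(k (M - (q : ℕ)) / k (M - 1 - (q : ℕ)))
      else if (p : ℕ) = M - 1 ∧ (q : ℕ) = M - 1 then δ
      else 0)
    (hQbar : 3 ≤ M → (Sb + Sbᵀ).PosDef) :
    -- conclusion: ISS bound on the stacked estimation error
    ∃ c > (0 : ℝ), ∃ lam > (0 : ℝ), ∃ ρ > (0 : ℝ), ∀ t, t₀ ≤ t →
      Real.sqrt (∑ i : Fin N, ∑ m : Fin M, ∑ l : Fin K, (x t m l - xhat i t m l) ^ 2)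
        ≤ c * Real.sqrt
            (∑ i : Fin N, ∑ m : Fin M, ∑ l : Fin K, (x t₀ m l - xhat i t₀ m l) ^ 2)
            * Real.exp (-lam * (t - t₀))
          + ρ * sSup ((fun s => euclNorm (u s)) '' Set.Icc t₀ t) := by
  obtain ⟨n, rfl⟩ : ∃ n, M = n + 1 := ⟨M - 1, by omega⟩
  have hk' : ∀ m ≤ n, 0 < k (m + 1) := fun m hm => hk (m + 1) (by omega) (by omega)
  have hk1 : 0 < k 1 := hk' 0 (Nat.zero_le n)
  -- the ratio of the gains past the end of the chain is zero
  let c : ℕ → ℝ := fun j => if j ≤ n then k (j + 1) / k j else 0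
  have hc : ∀ m, 1 ≤ m → m ≤ n → c m = k (m + 1) / k m := fun m _ hm => if_pos hm
  have hcn : c (n + 1) = 0 := if_neg (by omega)
  have hcpos : ∀ m, 1 ≤ m → m ≤ n → 0 < c m := fun m hm1 hm => by
    rw [hc m hm1 hm]
    exact div_pos (hk _ (by omega) (by omega)) (hk _ hm1 (by omega))
  -- for a single integrator the decay rate carries the gain
  let δ' : ℝ := if n = 0 then k 1 * δ else δ
  have hδ' : 0 < δ' := by
    simp only [δ']
    split_ifs <;> positivity
  have hLMI : 2 ≤ n → ObserverISS.ChainLMI n c δ' := by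
    intro hn
    have hδn : δ' = δ := if_neg (by omega)
    rw [hδn]
    refine ObserverISS.chainLMI_of_posDef (S := Sb) (k := k) (by omega) hc hcn ?_
      (hQbar (by omega))
    intro p q
    rw [hSb p q]
    simp only [Nat.add_sub_cancel]
  obtain ⟨P, hP⟩ := ObserverISS.exists_isStorage hLMI hδ' hcpos hcn
  have hrate : (c 1 + δ') / k 1 = μ := by
    rw [hμ]
    by_cases h0 : n = 0
    · subst h0
      rw [show c 1 = 0 from hcn, show δ' = k 1 * δ from if_pos rfl, if_pos rfl]
      field_simp
      ring
    · rw [hc 1 le_rfl (by omega), show δ' = δ from if_neg h0, if_neg (by omega)]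
      field_simp
      ring
  -- the error coordinates, extended by zero past the last integrator
  let ee : ℝ → Fin N × Fin K → ℕ → ℝ := fun s p m =>
    if h : m < n + 1 then x s ⟨m, h⟩ p.2 - xhat p.1 s ⟨m, h⟩ p.2 else 0
  let Ae : ℝ → Fin N × Fin K → ℝ := fun s p =>
    (Ψb s *ᵥ fun q => ee s q 0) p + α * (L *ᵥ fun i => ee s (i, p.2) 0) p.1
  have hee0 : ∀ s p, ee s p 0 = x s ⟨0, hM⟩ p.2 - xhat p.1 s ⟨0, hM⟩ p.2 := fun s p =>
    dif_pos (Nat.succ_pos n)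
  have hinj : ∀ t (p : Fin N × Fin K), dlt p.1 t p.2 = Ae t p := by
    rintro t ⟨i, l⟩
    have h1 : (Ψb t *ᵥ fun q => ee t q 0) (i, l)
        = (Ψ i t (x t) *ᵥ fun l' => ee t (i, l') 0) l := by
      simp only [Matrix.mulVec, dotProduct, Fintype.sum_prod_type, hΨb, ite_mul, zero_mul]
      rw [Finset.sum_comm]
      simp
    have h2 : (L *ᵥ fun j => ee t (j, l) 0) i = ∑ j, a i j * (ee t (i, l) 0 - ee t (j, l) 0) := by
      simp only [Matrix.mulVec, dotProduct, hL]
      have h3 : ∀ j, (if i = j then ∑ l, a i l else -(a i j)) * ee t (j, l) 0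
          = (if i = j then (∑ l, a i l) * ee t (i, l) 0 else 0) - a i j * ee t (j, l) 0 := by
        intro j
        by_cases hij : i = j
        · subst hij
          simp [ha_diag]
        · simp [hij]
      simp only [h3, mul_sub, Finset.sum_sub_distrib, Finset.sum_ite_eq, Finset.mem_univ, if_true,
        Finset.sum_mul]
    have h4 : (fun l' => ee t (i, l') 0) = x t ⟨0, hM⟩ - xhat i t ⟨0, hM⟩ := by
      funext l'
      exact hee0 t (i, l')
    simp only [Ae]
    rw [h1, h2, h4, Matrix.mulVec_sub, hdlt, hy]
    simp only [Pi.sub_apply, Pi.smul_apply, Finset.sum_apply, smul_eq_mul, hee0]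
    have h5 : ∑ j, a i j * (x t ⟨0, hM⟩ l - xhat i t ⟨0, hM⟩ l
        - (x t ⟨0, hM⟩ l - xhat j t ⟨0, hM⟩ l))
        = -∑ j, a i j * (xhat i t ⟨0, hM⟩ l - xhat j t ⟨0, hM⟩ l) := by
      rw [← Finset.sum_neg_distrib]
      exact Finset.sum_congr rfl fun j _ => by ring
    rw [h5]
    ring
  have hed : ∀ t, t₀ ≤ t → ∀ p, ∀ m ≤ n, HasDerivAt (fun s => ee s p m)
      (ee t p (m + 1) + (if m = n then u t p.2 else 0) - k (m + 1) * Ae t p) t := by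
    rintro t - ⟨i, l⟩ m hm
    have hm' : m < n + 1 := by omega
    have h1 := hasDerivAt_pi.1 (hx ⟨m, hm'⟩ t) l
    have h2 := hasDerivAt_pi.1 (hobs i ⟨m, hm'⟩ t) l
    have h3 : (fun s => ee s (i, l) m) = fun s => x s ⟨m, hm'⟩ l - xhat i s ⟨m, hm'⟩ l := by
      funext s
      exact dif_pos hm'
    rw [h3]
    refine (h1.sub h2).congr_deriv ?_
    rw [← hinj t (i, l)]
    by_cases hmn : m = n
    · subst hmn
      simp [ee]
    · have hlt : m < n := by omega
      simp [ee, hlt, hmn]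
      ring
  have hA : ∀ t, t₀ ≤ t →
      (c 1 + δ') / k 1 * ∑ p, ee t p 0 ^ 2 ≤ ∑ p, ee t p 0 * Ae t p := by
    intro t ht
    rw [hrate]
    refine (ObserverISS.coercive (by omega) hLpsd.isHermitian hL1 hlam2 hfiedler
      (fun i => hΨsymm i t (x t)) hγ (hexc t ht) (hΨb t) (hψ t ht) hα0 hα
      (fun p => ee t p 0)).trans (le_of_eq ?_)
    simp only [Ae, mul_add, Finset.sum_add_distrib, dotProduct]
    congr 1
    rw [Fintype.sum_prod_type_right, Finset.mul_sum]
    refine Finset.sum_congr rfl fun l _ => ?_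
    rw [Finset.mul_sum]
    exact Finset.sum_congr rfl fun i _ => by ring
  obtain ⟨C, hC, lam, hlam, ρ, hρ, hest⟩ := ObserverISS.iss_of_error_dynamics (by omega) hk' hP
    hc hcn (fun s p => dif_neg (lt_irrefl (n + 1))) hu_bdd hed hA
  have hsum : ∀ s, ∑ p, ∑ m : Fin (n + 1), ee s p m ^ 2
      = ∑ i : Fin N, ∑ m : Fin (n + 1), ∑ l : Fin K, (x s m l - xhat i s m l) ^ 2 := by
    intro s
    rw [Fintype.sum_prod_type]
    refine Finset.sum_congr rfl fun i _ => ?_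
    rw [Finset.sum_comm]
    refine Finset.sum_congr rfl fun m _ => Finset.sum_congr rfl fun l _ => ?_
    simp only [ee, dif_pos m.2]
  refine ⟨C, hC, lam, hlam, ρ, hρ, fun t ht => ?_⟩
  rw [← hsum t, ← hsum t₀]
  exact hest t ht
end

section
/- Let N ≥ 2, let b₁, …, b_N be unit vectors in ℝ³, and let Π_i = I₃ − b_i·b_iᵀ be the orthogonal projection onto the plane orthogonal to b_i. Let Π = diag(Π₁, …, Π_N) be the 3N×3N block-diagonal matrix. Let L be an N×N real symmetric positive semidefinite matrix with L·𝟙 = 0 and vᵀLv ≥ λ₂‖v‖² for every v ∈ ℝ^N with 𝟙ᵀv = 0, where λ₂ > 0. Let μ > 0 and γ ∈ (0,1) be such that (1/N)·Σ_{i=1}^N Π_i − (μ + γ)·I₃ is positive definite, and let α > (μ + 1/γ − 1)/λ₂. Then Π + α·(L ⊗ I₃) − μ·I_{3N} is positive definite. -/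
/-! Write a stacked vector `x` as consensus part plus disagreement, `xᵢ = u + wᵢ` with `u` the
mean of the `xᵢ` and `Σᵢ wᵢ = 0`. A weighted Young inequality applied to the cross term
`2 uᵀ Πᵢ wᵢ` gives, for every agent,
`xᵢᵀ Πᵢ xᵢ ≥ uᵀ Πᵢ u - γ ‖u‖² - (1/γ - 1) ‖wᵢ‖²` (`young_projection`).
As `L` kills constants, the Kronecker term sees only `w` and is at least `α λ₂ ‖w‖²`
(`laplacian_form_lower_bound`). Since `‖x‖² = N ‖u‖² + ‖w‖²`, the quadratic form at `x` is at least
`(uᵀ (Σᵢ Πᵢ) u - N (μ + γ) ‖u‖²) + (α λ₂ - μ - 1/γ + 1) ‖w‖²`.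
Spatial excitation makes the first bracket positive when `u ≠ 0`, and the bound on `α` makes the
second coefficient positive, so the sum is positive unless `u = 0` and `w = 0`. -/

open Matrix
open scoped Kronecker

/-- Young's inequality for the projection orthogonal to a unit vector `b`, whose quadratic form is
`‖y‖² - (b ⬝ᵥ y)²`. -/
lemma young_projection (b u w : Fin 3 → ℝ) (hb : ∑ l, (b l) ^ 2 = 1) {γ : ℝ}
    (hγ0 : 0 < γ) (hγ1 : γ < 1) :
    (∑ l, u l ^ 2 - (∑ l, b l * u l) ^ 2) - γ * ∑ l, u l ^ 2 - (1 / γ - 1) * ∑ l, w l ^ 2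
      ≤ ∑ l, (u l + w l) ^ 2 - (∑ l, b l * (u l + w l)) ^ 2 := by
  simp only [Fin.sum_univ_three] at *
  set s := b 0 * w 0 + b 1 * w 1 + b 2 * w 2 with hs
  -- The gap is `γ ‖u + γ⁻¹ Π w‖² + (1/γ - 1) s²`, where `Π w = w - s b`.
  have key : 0 ≤ γ * ((u 0 + (w 0 - s * b 0) / γ) ^ 2 + (u 1 + (w 1 - s * b 1) / γ) ^ 2
      + (u 2 + (w 2 - s * b 2) / γ) ^ 2) + (1 / γ - 1) * s ^ 2 := by
    have h1 : 0 ≤ 1 / γ - 1 := by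
      rw [sub_nonneg, le_div_iff₀ hγ0]; linarith
    positivity
  have expand : γ * ((u 0 + (w 0 - s * b 0) / γ) ^ 2 + (u 1 + (w 1 - s * b 1) / γ) ^ 2
      + (u 2 + (w 2 - s * b 2) / γ) ^ 2) + (1 / γ - 1) * s ^ 2
      = γ * (u 0 ^ 2 + u 1 ^ 2 + u 2 ^ 2) + 2 * (u 0 * w 0 + u 1 * w 1 + u 2 * w 2)
        - 2 * s * (b 0 * u 0 + b 1 * u 1 + b 2 * u 2)
        + (w 0 ^ 2 + w 1 ^ 2 + w 2 ^ 2 - 2 * s * (b 0 * w 0 + b 1 * w 1 + b 2 * w 2)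
          + s ^ 2 * (b 0 ^ 2 + b 1 ^ 2 + b 2 ^ 2)) / γ + (1 / γ - 1) * s ^ 2 := by
    field_simp
    ring
  rw [expand, hb, ← hs] at key
  have hw : b 0 * (u 0 + w 0) + b 1 * (u 1 + w 1) + b 2 * (u 2 + w 2)
      = (b 0 * u 0 + b 1 * u 1 + b 2 * u 2) + s := by rw [hs]; ring
  rw [hw]
  clear_value s
  ring_nf at key ⊢
  linarith

/-- Adding a multiple of the all-ones vector does not change the quadratic form of `L`, so the
spectral gap bounds it below by the disagreement alone. -/
lemma laplacian_form_lower_bound {N : ℕ} (L : Matrix (Fin N) (Fin N) ℝ) (hLsymm : L.IsHermitian)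
    (hL1 : L *ᵥ (fun _ => (1 : ℝ)) = 0) (lam2 : ℝ)
    (hfiedler : ∀ v : Fin N → ℝ, (∑ i, v i) = 0 →
      lam2 * (∑ i, v i ^ 2) ≤ v ⬝ᵥ (L *ᵥ v))
    (c : ℝ) (w : Fin N → ℝ) (hw : ∑ i, w i = 0) :
    lam2 * (∑ i, w i ^ 2) ≤ (fun i => c + w i) ⬝ᵥ (L *ᵥ (fun i => c + w i)) := by
  have hsplit : (fun i => c + w i) = c • (fun _ => (1 : ℝ)) + w := by
    ext i; simp
  have hT : Lᵀ = L := by simpa [Matrix.IsHermitian] using hLsymm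
  have hone : (fun _ => (1 : ℝ)) ⬝ᵥ (L *ᵥ w) = 0 := by
    rw [Matrix.dotProduct_mulVec, ← Matrix.mulVec_transpose, hT, hL1, zero_dotProduct]
  rw [hsplit, Matrix.mulVec_add, Matrix.mulVec_smul, hL1, smul_zero, zero_add, add_dotProduct,
    smul_dotProduct, hone, smul_zero, zero_add]
  exact hfiedler w hw

lemma projection_form (b y : Fin 3 → ℝ) :
    y ⬝ᵥ ((1 - Matrix.vecMulVec b b) *ᵥ y) = ∑ l, y l ^ 2 - (∑ l, b l * y l) ^ 2 := by
  simp [Matrix.sub_mulVec, Matrix.vecMulVec_mulVec, dotProduct,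
    Fin.sum_univ_three]
  ring

lemma blockDiagonal_form {N : ℕ} (Pr : Fin N → Matrix (Fin 3) (Fin 3) ℝ)
    (Prb : Matrix (Fin N × Fin 3) (Fin N × Fin 3) ℝ)
    (hPrb : ∀ p q : Fin N × Fin 3, Prb p q = if p.1 = q.1 then Pr p.1 p.2 q.2 else 0)
    (x : Fin N × Fin 3 → ℝ) :
    x ⬝ᵥ (Prb *ᵥ x) = ∑ i, (fun l => x (i, l)) ⬝ᵥ (Pr i *ᵥ (fun l => x (i, l))) := by
  simp only [dotProduct, Matrix.mulVec, Fintype.sum_prod_type, hPrb]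
  refine Finset.sum_congr rfl fun i _ => Finset.sum_congr rfl fun l _ => ?_
  congr 1
  rw [Finset.sum_eq_single i]
  · simp
  · intro j _ hj
    simp [hj.symm]
  · simp

lemma kronecker_one_form {N : ℕ} (L : Matrix (Fin N) (Fin N) ℝ) (x : Fin N × Fin 3 → ℝ) :
    x ⬝ᵥ ((L ⊗ₖ (1 : Matrix (Fin 3) (Fin 3) ℝ)) *ᵥ x)
      = ∑ l, (fun i => x (i, l)) ⬝ᵥ (L *ᵥ (fun i => x (i, l))) := by
  simp only [dotProduct, Matrix.mulVec, Fintype.sum_prod_type, Matrix.kroneckerMap_apply]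
  rw [Finset.sum_comm]
  refine Finset.sum_congr rfl fun l _ => Finset.sum_congr rfl fun i _ => ?_
  congr 1
  refine Finset.sum_congr rfl fun j _ => ?_
  simp [Matrix.one_apply]

/-- specialization of the key matrix inequality of Theorem 2 of the
paper to bearing measurements, Section 5: with orthogonal projection matrices
`Πᵢ = I₃ − bᵢbᵢᵀ`, `Πb = diag(Π₁,…,Π_N)`, a Laplacian-like matrix `L` with smallest
positive eigenvalue at least `λ₂`, the spatial excitation condition
`(1/N) Σᵢ Πᵢ ≻ (μ+γ) I₃`, and `α > (μ + 1/γ − 1)/λ₂`, one has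
`Π + α (L ⊗ I₃) − μ I_{3N} ≻ 0`. -/
theorem bearing_consensus_posdef (N : ℕ) (hN : 2 ≤ N)
    (b : Fin N → Fin 3 → ℝ) (hb : ∀ i, ∑ l, (b i l) ^ 2 = 1)
    (Pr : Fin N → Matrix (Fin 3) (Fin 3) ℝ)
    (hPr : ∀ i, Pr i = 1 - Matrix.vecMulVec (b i) (b i))
    (Prb : Matrix (Fin N × Fin 3) (Fin N × Fin 3) ℝ)
    (hPrb : ∀ p q : Fin N × Fin 3, Prb p q = if p.1 = q.1 then Pr p.1 p.2 q.2 else 0)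
    (L : Matrix (Fin N) (Fin N) ℝ) (hLsymm : L.IsHermitian) (hLpsd : L.PosSemidef)
    (hL1 : L *ᵥ (fun _ => (1 : ℝ)) = 0)
    (lam2 : ℝ) (hlam2 : 0 < lam2)
    (hfiedler : ∀ v : Fin N → ℝ, (∑ i, v i) = 0 →
      lam2 * (∑ i, v i ^ 2) ≤ v ⬝ᵥ (L *ᵥ v))
    (μ γ : ℝ) (hμ : 0 < μ) (hγ0 : 0 < γ) (hγ1 : γ < 1)
    (hexc : (((N : ℝ))⁻¹ • (∑ i, Pr i) - (μ + γ) • (1 : Matrix (Fin 3) (Fin 3) ℝ)).PosDef)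
    (α : ℝ) (hα : (μ + 1 / γ - 1) / lam2 < α) :
    (Prb + α • (L ⊗ₖ (1 : Matrix (Fin 3) (Fin 3) ℝ))
      - μ • (1 : Matrix (Fin N × Fin 3) (Fin N × Fin 3) ℝ)).PosDef := by
  have hNpos : (0 : ℝ) < N := by
    have : 0 < N := by omega
    exact_mod_cast this
  have hPrT : ∀ i k l, Pr i k l = Pr i l k := by
    intro i k l
    simp [hPr, Matrix.vecMulVec_apply, Matrix.one_apply, eq_comm, mul_comm]
  have hPrbH : Prb.IsHermitian := by
    ext p q
    simp only [Matrix.conjTranspose_apply, star_trivial, hPrb]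
    by_cases h : p.1 = q.1
    · simp [h, hPrT q.1 q.2 p.2]
    · simp [h, Ne.symm h]
  have hKH : (L ⊗ₖ (1 : Matrix (Fin 3) (Fin 3) ℝ)).IsHermitian := by
    rw [Matrix.IsHermitian, Matrix.conjTranspose_kronecker, hLsymm.eq, Matrix.conjTranspose_one]
  refine Matrix.PosDef.of_dotProduct_mulVec_pos ?_ ?_
  · refine (hPrbH.add ?_).sub ?_
    · rw [Matrix.IsHermitian, Matrix.conjTranspose_smul, hKH.eq, star_trivial]
    · rw [Matrix.IsHermitian, Matrix.conjTranspose_smul, Matrix.conjTranspose_one, star_trivial]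
  intro x hx
  -- Consensus part `u` and disagreement `w`.
  obtain ⟨u, w, hxuw, hw⟩ : ∃ (u : Fin 3 → ℝ) (w : Fin N → Fin 3 → ℝ),
      (∀ i l, x (i, l) = u l + w i l) ∧ ∀ l, ∑ i, w i l = 0 := by
    refine ⟨fun l => (N : ℝ)⁻¹ * ∑ i, x (i, l),
      fun i l => x (i, l) - (N : ℝ)⁻¹ * ∑ i, x (i, l), fun i l => by ring, fun l => ?_⟩
    rw [Finset.sum_sub_distrib]
    simp only [Finset.sum_const, Finset.card_univ, Fintype.card_fin, nsmul_eq_mul]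
    field_simp
    simp
  set U := ∑ l, u l ^ 2 with hU
  set W := ∑ i, ∑ l, w i l ^ 2 with hW
  set Q := ∑ i, (∑ l, u l ^ 2 - (∑ l, b i l * u l) ^ 2) with hQ
  have hproj : Q - N * γ * U - (1 / γ - 1) * W ≤ x ⬝ᵥ (Prb *ᵥ x) := by
    rw [blockDiagonal_form Pr Prb hPrb]
    have h := Finset.sum_le_sum fun i (_ : i ∈ Finset.univ) =>
      young_projection (b i) u (w i) (hb i) hγ0 hγ1
    rw [Finset.sum_sub_distrib, Finset.sum_sub_distrib, ← Finset.mul_sum,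
      ← Finset.mul_sum, ← hQ, ← hW] at h
    simp only [Finset.sum_const, Finset.card_univ, Fintype.card_fin, nsmul_eq_mul, ← hU] at h
    simp only [hPr, projection_form, hxuw]
    linarith
  have hlap : lam2 * W ≤ x ⬝ᵥ ((L ⊗ₖ (1 : Matrix (Fin 3) (Fin 3) ℝ)) *ᵥ x) := by
    rw [kronecker_one_form, hW, Finset.sum_comm, Finset.mul_sum]
    simp only [hxuw]
    exact Finset.sum_le_sum fun l _ =>
      laplacian_form_lower_bound L hLsymm hL1 lam2 hfiedler (u l) (fun i => w i l) (hw l)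
  have hnorm : x ⬝ᵥ x = N * U + W := by
    simp only [dotProduct, Fintype.sum_prod_type, hxuw]
    -- The cross terms vanish because each coordinate of `w` sums to zero over the agents.
    have hl : ∀ l, ∑ i, (u l + w i l) * (u l + w i l) = N * u l ^ 2 + ∑ i, w i l ^ 2 := by
      intro l
      have : ∀ i, (u l + w i l) * (u l + w i l) = u l ^ 2 + 2 * u l * w i l + w i l ^ 2 :=
        fun i => by ring
      simp only [this, Finset.sum_add_distrib, ← Finset.mul_sum, hw l]
      simp
    rw [Finset.sum_comm, hW, Finset.sum_comm (f := fun i l => w i l ^ 2)]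
    simp only [hl, Finset.sum_add_distrib, ← Finset.mul_sum, hU]
  have hexcu : u ≠ 0 → N * (μ + γ) * U < Q := by
    intro hu
    have h := hexc.dotProduct_mulVec_pos hu
    have hsum : u ⬝ᵥ ((∑ i, Pr i) *ᵥ u) = Q := by
      rw [Matrix.sum_mulVec, dotProduct_sum]
      simp only [hPr, projection_form, hQ]
    have huu : u ⬝ᵥ u = U := by
      simp only [dotProduct, hU, sq]
    rw [star_trivial, Matrix.sub_mulVec, Matrix.smul_mulVec, Matrix.smul_mulVec, Matrix.one_mulVec,
      dotProduct_sub, dotProduct_smul, dotProduct_smul, hsum, huu, smul_eq_mul, smul_eq_mul,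
      sub_pos, inv_mul_eq_div, lt_div_iff₀ hNpos] at h
    linarith
  have hγinv : 1 < 1 / γ := by
    rw [lt_div_iff₀ hγ0]; linarith
  have hα0 : 0 < α := lt_trans (div_pos (by linarith) hlam2) hα
  have hgap : 0 < α * lam2 - (μ + 1 / γ - 1) := by
    rw [div_lt_iff₀ hlam2] at hα; linarith
  have hW0 : 0 ≤ W := by positivity
  have hαlap := mul_le_mul_of_nonneg_left hlap hα0.le
  have hmain : 0 < (Q - N * (μ + γ) * U) + (α * lam2 - (μ + 1 / γ - 1)) * W := by
    by_cases hu : u = 0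
    · have hU0 : U = 0 := by simp [hU, hu]
      have hQ0 : Q = 0 := by simp [hQ, hu]
      have hxx : 0 < x ⬝ᵥ x := by
        simpa using dotProduct_star_self_pos_iff.mpr hx
      rw [hnorm, hU0, mul_zero, zero_add] at hxx
      rw [hU0, hQ0, mul_zero, sub_zero, zero_add]
      exact mul_pos hgap hxx
    · have := hexcu hu
      have := mul_nonneg hgap.le hW0
      linarith
  rw [star_trivial, Matrix.sub_mulVec, Matrix.add_mulVec, Matrix.smul_mulVec, Matrix.smul_mulVec,
    Matrix.one_mulVec, dotProduct_sub, dotProduct_add, dotProduct_smul, dotProduct_smul, hnorm,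
    smul_eq_mul, smul_eq_mul]
  linarith
end
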